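/- arXiv:2106.14953 — 4 statements merged into one kernel-verified Lean document; each statement's English description precedes it below -/
import Mathlib

section
/- As x → ∞, the number of integers n with 1 ≤ n ≤ x for which gcd(n, σ(n)) has a prime divisor exceeding log log x is o(x). (That is, almost always the greatest common divisor of n and σ(n) has no prime divisor exceeding log log x.) -/
open scoped Classical
open Filter Finset

/-- `sigma1 n` is `σ(n)`, the sum of all positive divisors of `n`. -/
def sigma1 (n : ℕ) : ℕ := ArithmeticFunction.sigma 1 n

/-- `s n` is the sum of the proper divisors of `n`, i.e. `σ(n) − n`. -/
def s (n : ℕ) : ℕ := sigma1 n - n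

/-!
If a prime `p` divides `σ(n)`, it divides `σ(q ^ a)` for some prime power `q ^ a` exactly dividing
`n`. When `a ≥ 2`, the inequality `p ≤ σ(q ^ a) < 2 q ^ a` gives `n` a square divisor that is large
with `p`, and few `n` have one. When `a = 1`, `q ≡ -1 (mod p)`, and `p ∣ n` gives `p q ∣ n`, so it
remains to bound `∑ 1 / (p q)` over primes `p > ε log log x` and primes `q ≤ x` with
`q ≡ -1 (mod p)`.

The sum over `q` needs an upper bound of Brun–Titchmarsh type, which is obtained as Chebyshev
obtained his: `K!` divides `M ^ K ∏_{k < K} (a + k M)`, so the primes `q ≡ a (mod M)` between `K`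
and `K M` have product at most `M ^ (2 K)`. This costs a factor `log M`. With `M = W p` and the
`φ(W)` residue classes mod `M` that lie above `-1 (mod p)` and are coprime to `W`, the sum of
`1 / q` is `O((φ(W) / W) (log p / p) log log x)`, up to the `q < W p`. Summing over
`p > ε log log x`, with `∑_{p > y} log p / p ^ 2 = O(1 / y)`, gives `O(φ(W) / (ε W))`, and
`φ(W) / W` can be made arbitrarily small because `∑ 1 / p` diverges.
-/

open scoped Nat
open scoped Topology
open Real (log)
open ArithmeticFunction (sigma)

/-! ### Primes in an arithmetic progression -/

theorem dvd_prod_add_mul_of_coprime {M d K : ℕ} (a : ℕ) (hMd : M.Coprime d) (hd : d ∣ K !) :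
    d ∣ ∏ k ∈ range K, (a + k * M) := by
  have : NeZero d := ⟨ne_zero_of_dvd_ne_zero K.factorial_ne_zero hd⟩
  set c : ZMod d := a * (M : ZMod d)⁻¹
  have hM : (M : ZMod d) * (M : ZMod d)⁻¹ = 1 := ZMod.coe_mul_inv_eq_one M hMd
  have hterm (k : ℕ) : (a + k * M : ZMod d) = M * ((c.val + k : ℕ) : ZMod d) := by
    rw [Nat.cast_add, ZMod.natCast_zmod_val]
    linear_combination -(a : ZMod d) * hM
  -- Modulo `d`, the product is `M ^ K` times a product of `K` consecutive integers.
  rw [← ZMod.natCast_eq_zero_iff]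
  calc ((∏ k ∈ range K, (a + k * M) : ℕ) : ZMod d)
      = M ^ K * (c.val.ascFactorial K : ℕ) := by
        simp only [Nat.ascFactorial_eq_prod_range, Nat.cast_prod, Nat.cast_add (R := ZMod d) a,
          Nat.cast_mul, hterm, prod_mul_distrib, prod_const, card_range]
    _ = 0 := by
        rw [(ZMod.natCast_eq_zero_iff _ _).2 (hd.trans (Nat.factorial_dvd_ascFactorial _ _)),
          mul_zero]

theorem factorial_dvd_pow_mul_prod_add_mul (a M K : ℕ) :
    K ! ∣ M ^ K * ∏ k ∈ range K, (a + k * M) := by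
  rw [Nat.dvd_iff_prime_pow_dvd_dvd]
  intro r v hr hv
  by_cases hrM : r ∣ M
  · have hvK : v ≤ K :=
      ((hr.pow_dvd_iff_le_factorization K.factorial_ne_zero).1 hv).trans
        ((Nat.factorization_factorial_le_div_pred hr K).trans (Nat.div_le_self _ _))
    exact ((pow_dvd_pow r hvK).trans (pow_dvd_pow_of_dvd hrM K)).mul_right _
  · have hMr : M.Coprime (r ^ v) := ((hr.coprime_iff_not_dvd.2 hrM).symm).pow_right v
    exact (dvd_prod_add_mul_of_coprime a hMr hv).mul_left _

theorem prod_add_mul_le_pow_mul_factorial {a M : ℕ} (haM : a ≤ M) (K : ℕ) :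
    ∏ k ∈ range K, (a + k * M) ≤ M ^ K * K ! :=
  calc ∏ k ∈ range K, (a + k * M) ≤ ∏ k ∈ range K, M * (k + 1) :=
        prod_le_prod' fun k _ ↦ by linarith
    _ = M ^ K * K ! := by
        rw [prod_mul_distrib, prod_const, card_range, prod_range_add_one_eq_factorial]

theorem prod_primes_of_mod_eq_dvd {M K a : ℕ} {Q : Finset ℕ}
    (hQ : ∀ q ∈ Q, q.Prime ∧ q % M = a ∧ q < K * M) :
    ∏ q ∈ Q, q ∣ ∏ k ∈ range K, (a + k * M) := by
  refine prod_primes_dvd _ (fun q hq ↦ (hQ q hq).1.prime) fun q hq ↦ ?_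
  obtain ⟨-, rfl, hqK⟩ := hQ q hq
  have hk : q / M ∈ range K := mem_range.2 (Nat.div_lt_of_lt_mul (mul_comm K M ▸ hqK))
  simpa only [Nat.mod_add_div'] using dvd_prod_of_mem (fun k ↦ q % M + k * M) hk

theorem prod_primes_of_mod_eq_le {M K a : ℕ} (ha : a ≠ 0) (haM : a < M) {Q : Finset ℕ}
    (hQ : ∀ q ∈ Q, q.Prime ∧ q % M = a ∧ K < q ∧ q < K * M) :
    ∏ q ∈ Q, q ≤ M ^ (2 * K) := by
  have hcop : (∏ q ∈ Q, q).Coprime K ! := Nat.Coprime.prod_left fun q hq ↦ by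
    obtain ⟨hq, -, hKq, -⟩ := hQ q hq
    rwa [hq.coprime_iff_not_dvd, hq.dvd_factorial, not_le]
  have hdvd : (∏ q ∈ Q, q) * K ! ∣ M ^ K * ∏ k ∈ range K, (a + k * M) :=
    hcop.mul_dvd_of_dvd_of_dvd
      ((prod_primes_of_mod_eq_dvd fun q hq ↦
        ⟨(hQ q hq).1, (hQ q hq).2.1, (hQ q hq).2.2.2⟩).mul_left _)
      (factorial_dvd_pow_mul_prod_add_mul a M K)
  have hpos : 0 < M ^ K * ∏ k ∈ range K, (a + k * M) :=
    Nat.mul_pos (pow_pos (by lia) _) (prod_pos fun k _ ↦ by lia)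
  refine Nat.le_of_mul_le_mul_right ?_ K.factorial_pos
  calc (∏ q ∈ Q, q) * K ! ≤ M ^ K * ∏ k ∈ range K, (a + k * M) := Nat.le_of_dvd hpos hdvd
    _ ≤ M ^ K * (M ^ K * K !) := by gcongr; exact prod_add_mul_le_pow_mul_factorial haM.le K
    _ = M ^ (2 * K) * K ! := by ring

theorem sum_log_primes_of_mod_eq_le {M K a : ℕ} (ha : a ≠ 0) (haM : a < M) {Q : Finset ℕ}
    (hQ : ∀ q ∈ Q, q.Prime ∧ q % M = a ∧ K < q ∧ q < K * M) :
    ∑ q ∈ Q, log q ≤ 2 * K * log M := by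
  have hpos (q : ℕ) (hq : q ∈ Q) : 0 < q := (hQ q hq).1.pos
  calc ∑ q ∈ Q, log q = log (∏ q ∈ Q, q : ℕ) := by
        rw [Nat.cast_prod, Real.log_prod fun q hq ↦ Nat.cast_ne_zero.2 (hpos q hq).ne']
    _ ≤ log (M ^ (2 * K) : ℕ) :=
        Real.log_le_log (Nat.cast_pos.2 (prod_pos hpos))
          (Nat.cast_le.2 (prod_primes_of_mod_eq_le ha haM hQ))
    _ = 2 * K * log M := by push_cast [Real.log_pow]; rfl

theorem sum_log_primes_modEq_le {W m K b : ℕ} (hW : 1 < W) (hWm : W.Coprime m) {Q : Finset ℕ}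
    (hQ : ∀ q ∈ Q, q.Prime ∧ q.Coprime W ∧ q ≡ b [MOD m] ∧ K < q ∧ q < K * (W * m)) :
    ∑ q ∈ Q, log q ≤ φ W * (2 * K * log (W * m)) := by
  have hm : m ≠ 0 := by rintro rfl; exact hW.ne' (Nat.coprime_zero_right W |>.1 hWm)
  have hmaps : ∀ q ∈ Q, q % W ∈ {c ∈ range W | W.Coprime c} := fun q hq ↦ by
    rw [mem_filter, mem_range, Nat.coprime_comm, Nat.Coprime, ← Nat.gcd_rec, Nat.gcd_comm]
    exact ⟨Nat.mod_lt _ hW.pos, (hQ q hq).2.1⟩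
  rw [← sum_fiberwise_of_maps_to hmaps, Nat.totient_eq_card_coprime, ← nsmul_eq_mul]
  refine sum_le_card_nsmul _ _ _ fun c hc ↦ ?_
  obtain ⟨-, hWc⟩ := mem_filter.1 hc
  set a := Nat.chineseRemainder hWm c b
  have ha : (a : ℕ) ≠ 0 := fun h0 ↦ by
    have hc0 : c ≡ 0 [MOD W] := h0 ▸ a.2.1.symm
    exact hW.ne' (hWc.eq_one_of_dvd ((Nat.modEq_zero_iff_dvd).1 hc0))
  have haM : (a : ℕ) < W * m := Nat.chineseRemainder_lt_mul hWm c b (by lia) hm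
  rw [← Nat.cast_mul]
  refine sum_log_primes_of_mod_eq_le ha haM fun q hq ↦ ?_
  obtain ⟨hqQ, hqc⟩ := mem_filter.1 hq
  obtain ⟨hq, -, hqb, hKq, hqK⟩ := hQ q hqQ
  have hqW : q ≡ c [MOD W] := by rw [← hqc]; exact (Nat.mod_modEq q W).symm
  have hqa : q ≡ a [MOD W * m] := (Nat.modEq_and_modEq_iff_modEq_mul hWm).1
    ⟨hqW.trans a.2.1.symm, hqb.trans a.2.2.symm⟩
  exact ⟨hq, Nat.mod_eq_of_modEq hqa haM, hKq, hqK⟩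

theorem sum_log_primes_modEq_dyadic_le {W m b T : ℕ} (hW : 1 < W) (hm : 1 < m)
    (hWm : W.Coprime m) {Q : Finset ℕ}
    (hQ : ∀ q ∈ Q, q.Prime ∧ q ≡ b [MOD m] ∧ W * m ≤ q ∧ T ≤ q ∧ q < 2 * T) :
    ∑ q ∈ Q, log q ≤ 8 * T * (φ W / W) * (log (W * m) / m) := by
  have hlogM : 0 ≤ log (W * m) := by exact_mod_cast Real.log_natCast_nonneg (W * m)
  rcases Q.eq_empty_or_nonempty with rfl | ⟨q₀, hq₀⟩
  · rw [sum_empty]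
    positivity
  obtain ⟨hMT, hT⟩ : W * m ≤ 2 * T ∧ 0 < T := by
    obtain ⟨-, -, hMq, -, hqT⟩ := hQ q₀ hq₀
    lia
  have hM : 4 < W * m := by
    have hne : W ≠ m := by rintro rfl; exact hW.ne' ((Nat.coprime_self W).1 hWm)
    rcases hne.lt_or_gt with h | h <;> nlinarith
  have hM4 : (4 : ℝ) < W * m := by exact_mod_cast hM
  -- The least `K` with `2 * T < K * (W * m)`.
  set K := 2 * T / (W * m) + 1
  have hK : (K : ℝ) ≤ 4 * T / (W * m) := by
    have hfloor : ((2 * T / (W * m) : ℕ) : ℝ) ≤ 2 * T / (W * m) := by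
      exact_mod_cast Nat.cast_div_le (α := ℝ) (m := 2 * T) (n := W * m)
    have hone : (1 : ℝ) ≤ 2 * T / (W * m) := by
      rw [one_le_div (by linarith)]; exact_mod_cast hMT
    push_cast [K]
    linarith [show (4 * T / (W * m) : ℝ) = 2 * T / (W * m) + 2 * T / (W * m) by ring]
  have hKT : K < T := Nat.cast_lt.1 <| hK.trans_lt <| by
    rw [div_lt_iff₀ (by linarith), mul_comm]
    exact mul_lt_mul_of_pos_left hM4 (Nat.cast_pos.2 hT)
  calc ∑ q ∈ Q, log q ≤ φ W * (2 * K * log (W * m)) :=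
        sum_log_primes_modEq_le hW hWm fun q hq ↦ by
          obtain ⟨hq, hqb, hMq, hTq, hqT⟩ := hQ q hq
          exact ⟨hq, Nat.coprime_of_lt_prime hW.ne_bot (by nlinarith) hq, hqb, hKT.trans_le hTq,
            hqT.trans (mul_comm K _ ▸ Nat.lt_mul_div_succ _ hM.pos)⟩
    _ ≤ φ W * (2 * (4 * T / (W * m)) * log (W * m)) := by gcongr
    _ = 8 * T * (φ W / W) * (log (W * m) / m) := by ring

theorem sum_inv_le_sum_log_div {T : ℕ} (hT : 1 < T) {Q : Finset ℕ} (hQ : ∀ q ∈ Q, T ≤ q) :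
    ∑ q ∈ Q, (q : ℝ)⁻¹ ≤ (∑ q ∈ Q, log q) / (T * log T) := by
  have hT0 : (0 : ℝ) < T := Nat.cast_pos.2 hT.pos
  have hlogT : 0 < log T := Real.log_pos (Nat.one_lt_cast.2 hT)
  rw [sum_div]
  refine sum_le_sum fun q hq ↦ ?_
  have hTq : (T : ℝ) ≤ q := Nat.cast_le.2 (hQ q hq)
  rw [inv_eq_one_div, div_le_div_iff₀ (hT0.trans_le hTq) (by positivity), one_mul, mul_comm]
  gcongr

theorem sum_inv_pred_multiples_le {m : ℕ} (hm : m ≠ 0) (W : ℕ) :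
    ∑ q ∈ Ico 1 (W * m) with m ∣ q + 1, (q : ℝ)⁻¹ ≤ 2 * W / m := by
  have hm0 : (0 : ℝ) < m := by positivity
  have hcard : #{q ∈ Ico 1 (W * m) | m ∣ q + 1} ≤ W := by
    calc #{q ∈ Ico 1 (W * m) | m ∣ q + 1} ≤ #{n ∈ Ioc 0 (W * m) | m ∣ n} :=
          card_le_card_of_injOn (· + 1) (fun q hq ↦ by grind) (add_left_injective 1).injOn
      _ = W := by rw [Nat.Ioc_filter_dvd_card_eq_div, Nat.mul_div_cancel _ hm.pos]
  have hinv : ∀ q ∈ {q ∈ Ico 1 (W * m) | m ∣ q + 1}, (q : ℝ)⁻¹ ≤ 2 / m := fun q hq ↦ by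
    obtain ⟨hq, hmq⟩ := mem_filter.1 hq
    have hq1 : 1 ≤ q := (mem_Ico.1 hq).1
    have hmq : (m : ℝ) ≤ 2 * q := by exact_mod_cast (Nat.le_of_dvd q.succ_pos hmq).trans (by lia)
    rw [inv_eq_one_div, div_le_div_iff₀ (by positivity) hm0]
    linarith
  calc _ ≤ #{q ∈ Ico 1 (W * m) | m ∣ q + 1} • (2 / m : ℝ) := sum_le_card_nsmul _ _ _ hinv
    _ ≤ W * (2 / m) := by rw [nsmul_eq_mul]; gcongr
    _ = 2 * W / m := by ring

theorem sum_inv_primes_dvd_add_one_of_le {W m : ℕ} (hW : 1 < W) (hm : 1 < m)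
    (hWm : W.Coprime m) (N : ℕ) :
    ∑ q ∈ Icc (W * m) N with q.Prime ∧ m ∣ q + 1, (q : ℝ)⁻¹ ≤
      8 / log 2 * (φ W / W) * (log (W * m) / m) * harmonic (Nat.log 2 N) := by
  have hmaps : ∀ q ∈ {q ∈ Icc (W * m) N | q.Prime ∧ m ∣ q + 1},
      Nat.log 2 q ∈ Icc 1 (Nat.log 2 N) := fun q hq ↦ by
    obtain ⟨hqN, hq, -⟩ := mem_filter.1 hq
    exact mem_Icc.2 ⟨Nat.log_pos one_lt_two hq.two_le, Nat.log_mono_right (mem_Icc.1 hqN).2⟩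
  rw [← sum_fiberwise_of_maps_to hmaps, harmonic_eq_sum_Icc, Rat.cast_sum, mul_sum]
  refine sum_le_sum fun j hj ↦ ?_
  have hj : 1 ≤ j := (mem_Icc.1 hj).1
  set Q := {q ∈ {q ∈ Icc (W * m) N | q.Prime ∧ m ∣ q + 1} | Nat.log 2 q = j}
  have hQ : ∀ q ∈ Q, q.Prime ∧ q ≡ m - 1 [MOD m] ∧ W * m ≤ q ∧ 2 ^ j ≤ q ∧ q < 2 * 2 ^ j := by
    intro q hq
    simp only [Q, mem_filter, mem_Icc] at hq
    obtain ⟨⟨⟨hMq, -⟩, hq, hmq⟩, rfl⟩ := hq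
    have hqm : q ≡ m - 1 [MOD m] := Nat.ModEq.add_right_cancel' 1 <| by
      rw [Nat.sub_add_cancel hm.le]
      exact (Nat.modEq_zero_iff_dvd.2 hmq).trans (Nat.modEq_zero_iff_dvd.2 dvd_rfl).symm
    exact ⟨hq, hqm, hMq, Nat.pow_log_le_self 2 hq.ne_zero,
      (Nat.lt_pow_succ_log_self one_lt_two q).trans_eq (pow_succ' 2 _)⟩
  calc ∑ q ∈ Q, (q : ℝ)⁻¹ ≤ (∑ q ∈ Q, log q) / ((2 ^ j : ℕ) * log (2 ^ j : ℕ)) :=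
        sum_inv_le_sum_log_div (Nat.one_lt_two_pow (Nat.one_le_iff_ne_zero.1 hj)) fun q hq ↦
          (hQ q hq).2.2.2.1
    _ ≤ 8 * (2 ^ j : ℕ) * (φ W / W) * (log (W * m) / m) / ((2 ^ j : ℕ) * log (2 ^ j : ℕ)) := by
        gcongr
        exact sum_log_primes_modEq_dyadic_le hW hm hWm hQ
    _ = 8 / log 2 * (φ W / W) * (log (W * m) / m) * ((j : ℚ)⁻¹ : ℚ) := by
        push_cast [Real.log_pow]
        field_simp

theorem sum_inv_primes_dvd_add_one_le {W m : ℕ} (hW : 1 < W) (hm : 1 < m) (hWm : W.Coprime m)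
    (N : ℕ) :
    ∑ q ∈ Icc 1 N with q.Prime ∧ m ∣ q + 1, (q : ℝ)⁻¹ ≤
      2 * W / m + 8 / log 2 * (φ W / W) * (log (W * m) / m) * harmonic (Nat.log 2 N) := by
  have hsub : {q ∈ Icc 1 N | q.Prime ∧ m ∣ q + 1} ⊆ {q ∈ Ico 1 (W * m) | m ∣ q + 1} ∪
      {q ∈ Icc (W * m) N | q.Prime ∧ m ∣ q + 1} := fun q hq ↦ by
    simp only [mem_union, mem_filter, mem_Icc, mem_Ico] at hq ⊢
    grind
  calc _ ≤ ∑ q ∈ {q ∈ Ico 1 (W * m) | m ∣ q + 1} ∪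
        {q ∈ Icc (W * m) N | q.Prime ∧ m ∣ q + 1}, (q : ℝ)⁻¹ :=
        sum_le_sum_of_subset_of_nonneg hsub fun _ _ _ ↦ by positivity
    _ ≤ ∑ q ∈ Ico 1 (W * m) with m ∣ q + 1, (q : ℝ)⁻¹ +
        ∑ q ∈ Icc (W * m) N with q.Prime ∧ m ∣ q + 1, (q : ℝ)⁻¹ := by
        rw [← sum_union_inter]
        exact le_add_of_nonneg_right (sum_nonneg fun _ _ ↦ by positivity)
    _ ≤ _ := add_le_add (sum_inv_pred_multiples_le hm.ne_bot W)
        (sum_inv_primes_dvd_add_one_of_le hW hm hWm N)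

/-! ### Mertens and Chebyshev estimates -/

theorem totient_div_le_exp_neg_sum_inv (n : ℕ) :
    (φ n / n : ℝ) ≤ Real.exp (-∑ p ∈ n.primeFactors, (p : ℝ)⁻¹) := by
  rcases eq_or_ne n 0 with rfl | hn
  · simp
  have hφ : (φ n : ℝ) = n * ∏ p ∈ n.primeFactors, (1 - (p : ℝ)⁻¹) := by
    have := congrArg (Rat.cast (K := ℝ)) n.totient_eq_mul_prod_factors
    push_cast at this
    exact this
  rw [hφ, mul_div_cancel_left₀ _ (Nat.cast_ne_zero.2 hn), ← sum_neg_distrib, Real.exp_sum]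
  exact prod_le_prod (fun p _ ↦ sub_nonneg.2 (Nat.cast_inv_le_one p))
    fun p _ ↦ Real.one_sub_le_exp_neg _

theorem tendsto_sum_inv_primesLE :
    Tendsto (fun n ↦ ∑ p ∈ Nat.primesLE n, (p : ℝ)⁻¹) atTop atTop := by
  have hnonneg (n : ℕ) : 0 ≤ Set.indicator {p | p.Prime} (fun n : ℕ ↦ (1 : ℝ) / n) n :=
    Set.indicator_nonneg (fun _ _ ↦ by positivity) n
  have h := (not_summable_iff_tendsto_nat_atTop_of_nonneg hnonneg).1 not_summable_one_div_on_primes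
  refine (h.comp (tendsto_add_atTop_nat 1)).congr fun n ↦ ?_
  rw [Nat.primesLE_eq_filter_range, sum_filter]
  simp [Set.indicator_apply]

theorem tendsto_totient_primorial_div :
    Tendsto (fun n ↦ (φ (primorial n) / primorial n : ℝ)) atTop (𝓝 0) := by
  refine squeeze_zero (fun n ↦ by positivity) (fun n ↦ totient_div_le_exp_neg_sum_inv _) ?_
  simpa only [primeFactors_primorial, Function.comp_def] using
    Real.tendsto_exp_neg_atTop_nhds_zero.comp tendsto_sum_inv_primesLE

theorem exists_totient_div_le {δ : ℝ} (hδ : 0 < δ) (B : ℕ) : ∃ W > B, (φ W / W : ℝ) ≤ δ := by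
  obtain ⟨n, hn, hBn⟩ := ((tendsto_totient_primorial_div.eventually_le_const hδ).and
    (eventually_gt_atTop B)).exists
  exact ⟨primorial n, hBn.trans_le le_primorial_self, hn⟩

theorem theta_natCast_succ_sub (n : ℕ) :
    Chebyshev.theta (n + 1 : ℕ) - Chebyshev.theta n =
      if (n + 1).Prime then log (n + 1 : ℕ) else 0 := by
  simp only [Chebyshev.theta, Nat.floor_natCast, sum_filter]
  rw [sum_Ioc_succ_top n.zero_le, add_sub_cancel_left]

theorem sum_log_div_sq_primes_le_theta {y z : ℕ} (hy : 0 < y) (hyz : y ≤ z) :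
    ∑ p ∈ Ioc y z with p.Prime, log p / p ^ 2 ≤
      Chebyshev.theta z / z ^ 2 + 2 * log 4 * ((y : ℝ)⁻¹ - (z : ℝ)⁻¹) := by
  -- Abel summation against the Chebyshev bound `θ z ≤ z log 4`.
  induction z, hyz using Nat.le_induction with
  | base => simpa using div_nonneg (Chebyshev.theta_nonneg y) (by positivity)
  | succ z hyz ih =>
    have hz : (0 : ℝ) < z := Nat.cast_pos.2 (hy.trans_le hyz)
    have hθ : Chebyshev.theta z ≤ log 4 * z := Chebyshev.theta_le_log4_mul_x hz.le
    have hstep : ∑ p ∈ Ioc y (z + 1) with p.Prime, log p / p ^ 2 =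
        ∑ p ∈ Ioc y z with p.Prime, log p / p ^ 2 +
          (Chebyshev.theta (z + 1 : ℕ) - Chebyshev.theta z) / (z + 1) ^ 2 := by
      rw [sum_filter, sum_filter, sum_Ioc_succ_top (by lia), theta_natCast_succ_sub, ite_div,
        zero_div, Nat.cast_succ]
    have hdiff : Chebyshev.theta z * (1 / z ^ 2 - 1 / (z + 1) ^ 2) ≤
        2 * log 4 * ((z : ℝ)⁻¹ - (z + 1 : ℝ)⁻¹) := by
      have hinv : (z + 1 : ℝ)⁻¹ ≤ (z : ℝ)⁻¹ := by gcongr; linarith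
      calc Chebyshev.theta z * (1 / z ^ 2 - 1 / (z + 1) ^ 2)
          = Chebyshev.theta z * (((z : ℝ)⁻¹ + (z + 1 : ℝ)⁻¹) * ((z : ℝ)⁻¹ - (z + 1 : ℝ)⁻¹)) := by
            rw [one_div, one_div, ← inv_pow, ← inv_pow]
            ring
        _ ≤ log 4 * z * (((z : ℝ)⁻¹ + (z : ℝ)⁻¹) * ((z : ℝ)⁻¹ - (z + 1 : ℝ)⁻¹)) := by
            have := sub_nonneg.2 hinv
            gcongr
        _ = 2 * log 4 * ((z : ℝ)⁻¹ - (z + 1 : ℝ)⁻¹) := by field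
    rw [hstep, Nat.cast_succ, sub_div]
    rw [mul_sub, mul_one_div, mul_one_div] at hdiff
    linarith

theorem sum_log_div_sq_primes_le {y : ℕ} (hy : 0 < y) (z : ℕ) :
    ∑ p ∈ Ioc y z with p.Prime, log p / p ^ 2 ≤ 2 * log 4 / y := by
  have hlog : 0 < log 4 := Real.log_pos (by norm_num)
  rcases lt_or_ge z y with hzy | hyz
  · rw [Ioc_eq_empty_of_le hzy.le, filter_empty, sum_empty]
    positivity
  have hz : (0 : ℝ) < z := Nat.cast_pos.2 (hy.trans_le hyz)
  have hθ : Chebyshev.theta z / z ^ 2 ≤ 2 * log 4 * (z : ℝ)⁻¹ := by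
    calc Chebyshev.theta z / z ^ 2 ≤ log 4 * z / z ^ 2 := by
          gcongr; exact Chebyshev.theta_le_log4_mul_x hz.le
      _ ≤ 2 * log 4 * (z : ℝ)⁻¹ := by
          rw [sq, mul_div_mul_right _ _ hz.ne', div_eq_mul_inv]
          gcongr
          linarith
  rw [div_eq_mul_inv]
  linarith [sum_log_div_sq_primes_le_theta hy hyz]

/-! ### Counting multiples -/

theorem card_filter_exists_dvd_le {ι : Type*} (N : ℕ) (I : Finset ι) (f : ι → ℕ) :
    (#{n ∈ Icc 1 N | ∃ i ∈ I, f i ∣ n} : ℝ) ≤ N * ∑ i ∈ I, (f i : ℝ)⁻¹ := by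
  have hcover : {n ∈ Icc 1 N | ∃ i ∈ I, f i ∣ n} ⊆ I.biUnion fun i ↦ {n ∈ Ioc 0 N | f i ∣ n} := by
    intro n hn
    simp only [mem_filter, mem_biUnion, mem_Icc, mem_Ioc] at hn ⊢
    grind
  calc (#{n ∈ Icc 1 N | ∃ i ∈ I, f i ∣ n} : ℝ) ≤ ∑ i ∈ I, #{n ∈ Ioc 0 N | f i ∣ n} := by
        exact_mod_cast (card_le_card hcover).trans card_biUnion_le
    _ ≤ N * ∑ i ∈ I, (f i : ℝ)⁻¹ := by
        rw [mul_sum]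
        push_cast
        gcongr with i
        rw [Nat.Ioc_filter_dvd_card_eq_div, ← div_eq_mul_inv]
        exact Nat.cast_div_le

theorem sum_Ioc_inv_sq_le_inv {k : ℕ} (hk : k ≠ 0) (n : ℕ) :
    ∑ i ∈ Ioc k n, ((i : ℝ) ^ 2)⁻¹ ≤ (k : ℝ)⁻¹ := by
  rcases le_total k n with hkn | hnk
  · exact (sum_Ioc_inv_sq_le_sub hk hkn).trans (sub_le_self _ (by positivity))
  · rw [Ioc_eq_empty_of_le hnk, sum_empty]
    positivity

theorem card_filter_exists_sq_dvd_le {D : ℕ} (hD : D ≠ 0) (N : ℕ) :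
    (#{n ∈ Icc 1 N | ∃ d > D, d ^ 2 ∣ n} : ℝ) ≤ N * (D : ℝ)⁻¹ := by
  have hsub : {n ∈ Icc 1 N | ∃ d > D, d ^ 2 ∣ n} ⊆ {n ∈ Icc 1 N | ∃ d ∈ Ioc D N, d ^ 2 ∣ n} := by
    intro n hn
    obtain ⟨hnN, d, hDd, hdn⟩ := mem_filter.1 hn
    obtain ⟨hn1, hnN'⟩ := mem_Icc.1 hnN
    have hdN : d ≤ N := (Nat.le_self_pow two_ne_zero d).trans ((Nat.le_of_dvd hn1 hdn).trans hnN')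
    exact mem_filter.2 ⟨hnN, d, mem_Ioc.2 ⟨hDd, hdN⟩, hdn⟩
  calc (#{n ∈ Icc 1 N | ∃ d > D, d ^ 2 ∣ n} : ℝ)
      ≤ #{n ∈ Icc 1 N | ∃ d ∈ Ioc D N, d ^ 2 ∣ n} := Nat.cast_le.2 (card_le_card hsub)
    _ ≤ N * ∑ d ∈ Ioc D N, ((d ^ 2 : ℕ) : ℝ)⁻¹ := card_filter_exists_dvd_le N _ _
    _ ≤ N * (D : ℝ)⁻¹ := by
        push_cast
        gcongr
        exact sum_Ioc_inv_sq_le_inv hD N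

theorem harmonic_nonneg (n : ℕ) : 0 ≤ harmonic n :=
  sum_nonneg fun _ _ ↦ by positivity

theorem sum_inv_mul_primes_dvd_add_one_le {W p : ℕ} (hW : 1 < W) (hWp : W < p) (hp : p.Prime)
    (N : ℕ) :
    ∑ q ∈ Icc 1 N with q.Prime ∧ p ∣ q + 1, ((p * q : ℕ) : ℝ)⁻¹ ≤
      2 * W * ((p : ℝ) ^ 2)⁻¹ +
        16 / log 2 * (φ W / W) * harmonic (Nat.log 2 N) * (log p / p ^ 2) := by
  have hp0 : (0 : ℝ) < p := Nat.cast_pos.2 hp.pos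
  have hWpR : (W : ℝ) ≤ p := Nat.cast_le.2 hWp.le
  have hW0 : (0 : ℝ) < W := Nat.cast_pos.2 hW.pos
  have hH : (0 : ℝ) ≤ harmonic (Nat.log 2 N) := Rat.cast_nonneg.2 (harmonic_nonneg _)
  have hlog : log (W * p) ≤ 2 * log p := by
    rw [Real.log_mul hW0.ne' hp0.ne', two_mul]
    gcongr
  have hcop : W.Coprime p := (Nat.coprime_of_lt_prime hW.ne_bot hWp hp).symm
  calc ∑ q ∈ Icc 1 N with q.Prime ∧ p ∣ q + 1, ((p * q : ℕ) : ℝ)⁻¹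
      = (p : ℝ)⁻¹ * ∑ q ∈ Icc 1 N with q.Prime ∧ p ∣ q + 1, (q : ℝ)⁻¹ := by
        simp only [Nat.cast_mul, mul_inv, mul_sum]
    _ ≤ (p : ℝ)⁻¹ * (2 * W / p +
          8 / log 2 * (φ W / W) * (2 * log p / p) * harmonic (Nat.log 2 N)) := by
        grw [sum_inv_primes_dvd_add_one_le hW hp.one_lt hcop N, hlog]
    _ = _ := by ring

theorem card_filter_exists_mul_dvd_le {W Y : ℕ} (hW : 1 < W) (hWY : W ≤ Y) (N : ℕ) :
    (#{n ∈ Icc 1 N | ∃ p > Y, p.Prime ∧ ∃ q, q.Prime ∧ p ∣ q + 1 ∧ p * q ∣ n} : ℝ) ≤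
      N * (2 * W / Y + 64 * (φ W / W) * (harmonic (Nat.log 2 N) / Y)) := by
  set H := harmonic (Nat.log 2 N)
  have hH : (0 : ℝ) ≤ H := Rat.cast_nonneg.2 (harmonic_nonneg _)
  have hY : 0 < Y := by lia
  set P := {p ∈ Ioc Y N | p.Prime}
  set I := P.sigma fun p ↦ {q ∈ Icc 1 N | q.Prime ∧ p ∣ q + 1}
  have hsub : {n ∈ Icc 1 N | ∃ p > Y, p.Prime ∧ ∃ q, q.Prime ∧ p ∣ q + 1 ∧ p * q ∣ n} ⊆
      {n ∈ Icc 1 N | ∃ i ∈ I, i.1 * i.2 ∣ n} := by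
    intro n hn
    obtain ⟨hnN, p, hYp, hp, q, hq, hpq, hpqn⟩ := mem_filter.1 hn
    obtain ⟨hn1, hnN'⟩ := mem_Icc.1 hnN
    have hpN : p ≤ N := (Nat.le_of_dvd hn1 (dvd_of_mul_right_dvd hpqn)).trans hnN'
    have hqN : q ≤ N := (Nat.le_of_dvd hn1 (dvd_of_mul_left_dvd hpqn)).trans hnN'
    exact mem_filter.2 ⟨hnN, ⟨p, q⟩, by simp [I, P, *, hq.one_le], hpqn⟩
  calc (#{n ∈ Icc 1 N | ∃ p > Y, p.Prime ∧ ∃ q, q.Prime ∧ p ∣ q + 1 ∧ p * q ∣ n} : ℝ)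
      ≤ #{n ∈ Icc 1 N | ∃ i ∈ I, i.1 * i.2 ∣ n} := Nat.cast_le.2 (card_le_card hsub)
    _ ≤ N * ∑ p ∈ P, ∑ q ∈ Icc 1 N with q.Prime ∧ p ∣ q + 1, ((p * q : ℕ) : ℝ)⁻¹ := by
        rw [← sum_sigma P _ fun i : (_ : ℕ) × ℕ ↦ ((i.1 * i.2 : ℕ) : ℝ)⁻¹]
        exact card_filter_exists_dvd_le N I _
    _ ≤ N * ∑ p ∈ P, (2 * W * ((p : ℝ) ^ 2)⁻¹ +
          16 / log 2 * (φ W / W) * H * (log p / p ^ 2)) := by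
        gcongr with p hp
        obtain ⟨hpY, hp⟩ := mem_filter.1 hp
        exact sum_inv_mul_primes_dvd_add_one_le hW (hWY.trans_lt (mem_Ioc.1 hpY).1) hp N
    _ ≤ N * (2 * W * (Y : ℝ)⁻¹ + 16 / log 2 * (φ W / W) * H * (2 * log 4 / Y)) := by
        rw [sum_add_distrib, ← mul_sum, ← mul_sum]
        gcongr
        · exact (sum_le_sum_of_subset_of_nonneg (filter_subset _ _) fun _ _ _ ↦
            by positivity).trans (sum_Ioc_inv_sq_le_inv hY.ne' N)
        · exact sum_log_div_sq_primes_le hY N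
    _ = _ := by
        rw [show (4 : ℝ) = 2 ^ 2 by norm_num, Real.log_pow]
        field

/-! ### Prime divisors of `gcd(n, σ(n))` -/

theorem sigma_one_prime_pow_lt {q : ℕ} (hq : q.Prime) (a : ℕ) : sigma 1 (q ^ a) < 2 * q ^ a := by
  rw [ArithmeticFunction.sigma_one_apply_prime_pow hq, sum_range_succ, two_mul]
  gcongr
  exact Nat.geomSum_lt hq.two_le fun k hk ↦ mem_range.1 hk

theorem exists_prime_dvd_sigma_one_ordProj {p n : ℕ} (hp : p.Prime) (hn : n ≠ 0)
    (hpn : p ∣ sigma 1 n) :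
    ∃ q, q.Prime ∧ q ∣ n ∧ p ∣ sigma 1 (ordProj[q] n) := by
  rw [ArithmeticFunction.isMultiplicative_sigma.multiplicative_factorization _ hn,
    hp.prime.dvd_finsuppProd_iff] at hpn
  obtain ⟨q, hq, hpq⟩ := hpn
  exact ⟨q, Nat.prime_of_mem_primeFactors hq, Nat.dvd_of_mem_primeFactors hq, hpq⟩

theorem exists_sq_dvd_or_exists_mul_dvd {p n : ℕ} (hp : p.Prime) (hn : n ≠ 0) (hpn : p ∣ n)
    (hpσ : p ∣ sigma 1 n) :
    (∃ d, d ^ 2 ∣ n ∧ p < 2 * d ^ 3) ∨ ∃ q, q.Prime ∧ p ∣ q + 1 ∧ p * q ∣ n := by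
  obtain ⟨q, hq, hqn, hpq⟩ := exists_prime_dvd_sigma_one_ordProj hp hn hpσ
  have hproj : ordProj[q] n ∣ n := Nat.ordProj_dvd n q
  have ha : 0 < n.factorization q := hq.factorization_pos_of_dvd hn hqn
  set a := n.factorization q
  rcases Nat.lt_or_ge a 2 with ha2 | ha2
  · right
    have hpq1 : p ∣ q + 1 := by
      rw [show a = 1 by lia, ArithmeticFunction.sigma_one_apply_prime_pow hq] at hpq
      simpa [sum_range_succ, add_comm] using hpq
    have hne : p ≠ q := by
      rintro rfl
      exact hp.one_lt.ne' (Nat.dvd_one.1 ((Nat.dvd_add_right dvd_rfl).1 hpq1))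
    exact ⟨q, hq, hpq1, ((Nat.coprime_primes hp hq).2 hne).mul_dvd_of_dvd_of_dvd hpn hqn⟩
  · left
    refine ⟨q ^ (a / 2), ?_, ?_⟩
    · rw [← pow_mul]
      exact (pow_dvd_pow q (Nat.div_mul_le_self a 2)).trans hproj
    · have hσ : 0 < sigma 1 (q ^ a) := ArithmeticFunction.sigma_pos _ _ (pow_ne_zero _ hq.ne_zero)
      calc p ≤ sigma 1 (q ^ a) := Nat.le_of_dvd hσ hpq
        _ < 2 * q ^ a := sigma_one_prime_pow_lt hq a
        _ ≤ 2 * q ^ (a / 2 * 3) := by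
            gcongr
            · exact hq.one_le
            · lia
        _ = 2 * (q ^ (a / 2)) ^ 3 := by rw [pow_mul]

theorem card_filter_exists_prime_dvd_gcd_sigma1_le {D W Y : ℕ} (hD : D ≠ 0) (hDY : 2 * D ^ 3 ≤ Y)
    (hW : 1 < W) (hWY : W ≤ Y) (N : ℕ) :
    (#{n ∈ Icc 1 N | ∃ p, p.Prime ∧ p ∣ n.gcd (sigma1 n) ∧ Y < p} : ℝ) ≤
      N * ((D : ℝ)⁻¹ + 2 * W / Y + 64 * (φ W / W) * (harmonic (Nat.log 2 N) / Y)) := by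
  have hsub : {n ∈ Icc 1 N | ∃ p, p.Prime ∧ p ∣ n.gcd (sigma1 n) ∧ Y < p} ⊆
      {n ∈ Icc 1 N | ∃ d > D, d ^ 2 ∣ n} ∪
        {n ∈ Icc 1 N | ∃ p > Y, p.Prime ∧ ∃ q, q.Prime ∧ p ∣ q + 1 ∧ p * q ∣ n} := by
    rw [← filter_or]
    intro n hn
    obtain ⟨hnN, p, hp, hpgcd, hYp⟩ := mem_filter.1 hn
    obtain ⟨hpn, hpσ⟩ := Nat.dvd_gcd_iff.1 hpgcd
    have hn0 : n ≠ 0 := Nat.one_le_iff_ne_zero.1 (mem_Icc.1 hnN).1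
    refine mem_filter.2 ⟨hnN, ?_⟩
    refine (exists_sq_dvd_or_exists_mul_dvd hp hn0 hpn hpσ).imp ?_ ?_
    · rintro ⟨d, hdn, hpd⟩
      exact ⟨d, lt_of_pow_lt_pow_left₀ 3 d.zero_le (by lia), hdn⟩
    · exact fun hq ↦ ⟨p, hYp, hp, hq⟩
  calc (#{n ∈ Icc 1 N | ∃ p, p.Prime ∧ p ∣ n.gcd (sigma1 n) ∧ Y < p} : ℝ)
      ≤ #{n ∈ Icc 1 N | ∃ d > D, d ^ 2 ∣ n} +
        #{n ∈ Icc 1 N | ∃ p > Y, p.Prime ∧ ∃ q, q.Prime ∧ p ∣ q + 1 ∧ p * q ∣ n} := by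
        exact_mod_cast (card_le_card hsub).trans (card_union_le _ _)
    _ ≤ N * (D : ℝ)⁻¹ + N * (2 * W / Y + 64 * (φ W / W) * (harmonic (Nat.log 2 N) / Y)) :=
        add_le_add (card_filter_exists_sq_dvd_le hD N) (card_filter_exists_mul_dvd_le hW hWY N)
    _ = _ := by ring

theorem harmonic_natLog_floor_le {x : ℝ} (hx : 2 ≤ x) :
    (harmonic (Nat.log 2 ⌊x⌋₊) : ℝ) ≤ 2 + log (log x) := by
  have hfloor : 2 ≤ ⌊x⌋₊ := Nat.le_floor hx
  have hj : (0 : ℝ) < Nat.log 2 ⌊x⌋₊ := Nat.cast_pos.2 (Nat.log_pos one_lt_two hfloor)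
  have hlog2 : (1 / 2 : ℝ) ≤ log 2 := by linarith [Real.log_two_gt_d9]
  have hlogx : 0 < log x := Real.log_pos (by linarith)
  have hloglog2 : -1 ≤ log (log 2) := by
    grw [← Real.one_sub_inv_le_log_of_pos (by linarith), ← hlog2]
    norm_num
  have hjx : (Nat.log 2 ⌊x⌋₊ : ℝ) ≤ log x / log 2 := by
    grw [Real.natLog_le_logb, Nat.cast_ofNat, Real.logb, Nat.floor_le (by linarith)]
  calc (harmonic (Nat.log 2 ⌊x⌋₊) : ℝ) ≤ 1 + log (Nat.log 2 ⌊x⌋₊) := harmonic_le_one_add_log _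
    _ ≤ 1 + log (log x / log 2) := by gcongr
    _ = 1 + (log (log x) - log (log 2)) := by rw [Real.log_div hlogx.ne' (by linarith)]
    _ ≤ 2 + log (log x) := by linarith

theorem tendsto_log_log_atTop : Tendsto (fun x ↦ log (log x)) atTop atTop :=
  Real.tendsto_log_atTop.comp Real.tendsto_log_atTop

theorem harmonic_natLog_floor_isBigO :
    (fun x : ℝ ↦ (harmonic (Nat.log 2 ⌊x⌋₊) : ℝ)) =O[atTop] fun x ↦ log (log x) := by
  have hbound : (fun x : ℝ ↦ (harmonic (Nat.log 2 ⌊x⌋₊) : ℝ)) =O[atTop]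
      fun x ↦ 2 + log (log x) := by
    refine .of_norm_eventuallyLE ?_
    filter_upwards [eventually_ge_atTop 2] with x hx
    rw [Real.norm_of_nonneg (Rat.cast_nonneg.2 (harmonic_nonneg _))]
    exact harmonic_natLog_floor_le hx
  exact hbound.trans <| ((Real.isLittleO_const_log_atTop.comp_tendsto
    Real.tendsto_log_atTop).isBigO).add (Asymptotics.isBigO_refl _ _)

theorem exists_eventually_harmonic_natLog_floor_div_le {ε : ℝ} (hε : 0 < ε) :
    ∃ C > 0, ∀ᶠ x : ℝ in atTop, (harmonic (Nat.log 2 ⌊x⌋₊) / ⌊ε * log (log x)⌋₊ : ℝ) ≤ C := by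
  have hfloor : (fun x : ℝ ↦ ε * log (log x)) =O[atTop] fun x ↦ (⌊ε * log (log x)⌋₊ : ℝ) :=
    (Asymptotics.isEquivalent_nat_floor.symm.isBigO :
      (fun t : ℝ ↦ t) =O[atTop] fun t : ℝ ↦ (⌊t⌋₊ : ℝ)).comp_tendsto
      (tendsto_log_log_atTop.const_mul_atTop hε)
  obtain ⟨C, hC, hbound⟩ := (harmonic_natLog_floor_isBigO.trans
    ((Asymptotics.isBigO_self_const_mul hε.ne' _ _).trans hfloor)).exists_pos
  refine ⟨C, hC, hbound.bound.mono fun x hx ↦ div_le_of_le_mul₀ (by positivity) hC.le ?_⟩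
  rw [Real.norm_natCast] at hx
  exact (Real.le_norm_self _).trans hx

theorem exists_eventually_card_filter_exists_prime_dvd_gcd_sigma1_le {ε : ℝ} (hε : 0 < ε) :
    ∃ C > 0, ∀ {D W : ℕ}, D ≠ 0 → 1 < W → ∀ᶠ x : ℝ in atTop,
      (#{n ∈ Icc 1 ⌊x⌋₊ | ∃ p : ℕ, p.Prime ∧ p ∣ n.gcd (sigma1 n) ∧
        ε * log (log x) < p} : ℝ) ≤
        x * ((D : ℝ)⁻¹ + 2 * W / ⌊ε * log (log x)⌋₊ + C * (φ W / W)) := by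
  obtain ⟨C, hC, hH⟩ := exists_eventually_harmonic_natLog_floor_div_le hε
  refine ⟨64 * C, by positivity, fun {D W} hD hW ↦ ?_⟩
  have hfloor : Tendsto (fun x ↦ ⌊ε * log (log x)⌋₊) atTop atTop :=
    tendsto_nat_floor_atTop.comp (tendsto_log_log_atTop.const_mul_atTop hε)
  filter_upwards [hH, hfloor.eventually_ge_atTop W, hfloor.eventually_ge_atTop (2 * D ^ 3),
    eventually_ge_atTop 0] with x hHx hWx hDx hx
  have hcount := card_filter_exists_prime_dvd_gcd_sigma1_le hD hDx hW hWx ⌊x⌋₊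
  calc (#{n ∈ Icc 1 ⌊x⌋₊ | ∃ p : ℕ, p.Prime ∧ p ∣ n.gcd (sigma1 n) ∧
          ε * log (log x) < p} : ℝ)
      ≤ ⌊x⌋₊ * ((D : ℝ)⁻¹ + 2 * W / ⌊ε * log (log x)⌋₊ +
          64 * (φ W / W) * (harmonic (Nat.log 2 ⌊x⌋₊) / ⌊ε * log (log x)⌋₊)) := by
        refine hcount.trans' (Nat.cast_le.2 (card_le_card fun n hn ↦ ?_))
        obtain ⟨hn, p, hp, hpn, hεp⟩ := mem_filter.1 hn
        exact mem_filter.2 ⟨hn, p, hp, hpn, (Nat.floor_lt' hp.ne_zero).2 hεp⟩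
    _ ≤ x * ((D : ℝ)⁻¹ + 2 * W / ⌊ε * log (log x)⌋₊ + 64 * (φ W / W) * C) := by
        grw [hHx, Nat.floor_le hx]
    _ = x * ((D : ℝ)⁻¹ + 2 * W / ⌊ε * log (log x)⌋₊ + 64 * C * (φ W / W)) := by ring

theorem gcd_n_sigma_n_smooth_general {ε : ℝ} (hε : 0 < ε) :
    (fun x : ℝ => (((Finset.Icc 1 ⌊x⌋₊).filter
        (fun n => ∃ p : ℕ, p.Prime ∧ p ∣ Nat.gcd n (sigma1 n) ∧
          ε * Real.log (Real.log x) < (p : ℝ))).card : ℝ))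
      =o[atTop] (fun x : ℝ => x) := by
  obtain ⟨C, hC, hcount⟩ := exists_eventually_card_filter_exists_prime_dvd_gcd_sigma1_le hε
  refine Asymptotics.isLittleO_iff.2 fun c hc ↦ ?_
  obtain ⟨D, hDc⟩ := exists_nat_one_div_lt (show 0 < c / 3 by positivity)
  obtain ⟨W, hW, hWc⟩ := exists_totient_div_le (show 0 < c / (3 * C) by positivity) 1
  have hfloor : Tendsto (fun x ↦ (⌊ε * log (log x)⌋₊ : ℝ)) atTop atTop :=
    tendsto_natCast_atTop_atTop.comp
      (tendsto_nat_floor_atTop.comp (tendsto_log_log_atTop.const_mul_atTop hε))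
  filter_upwards [hcount D.succ_ne_zero hW, eventually_ge_atTop 0,
    (hfloor.const_div_atTop (2 * W)).eventually_le_const (show 0 < c / 3 by positivity)]
    with x hcountx hx hWx
  rw [Real.norm_natCast, Real.norm_of_nonneg hx]
  calc _ ≤ x * (c / 3 + c / 3 + C * (c / (3 * C))) := by
        refine hcountx.trans ?_
        gcongr
        simpa using hDc.le
    _ = c * x := by field

theorem gcd_n_sigma_n_smooth :
    (fun x : ℝ => (((Finset.Icc 1 ⌊x⌋₊).filter
        (fun n => ∃ p : ℕ, p.Prime ∧ p ∣ Nat.gcd n (sigma1 n) ∧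
          Real.log (Real.log x) < (p : ℝ))).card : ℝ))
      =o[atTop] (fun x : ℝ => x) := by
  simpa only [one_mul] using gcd_n_sigma_n_smooth_general one_pos
end

section
/- Let a and k be integers with gcd(a, k) = 1 and k > 0. There is a constant C (depending on a and k) such that for all real x ≥ 3, the number of integers n with 1 ≤ n ≤ x for which there does not exist a prime p ≡ a (mod k) with p ∥ n is at most C·x·(log x)^{−1/φ(k)}. -/
open scoped Classical
open Filter Finset

/-!
Let `P` be the set of primes `p ≡ a (mod k)` and `c = 1 / φ(k)`. If no prime of `P` divides `n`
exactly, then collecting the powers of primes of `P` writes `n = u ^ 2 * v ^ 3 * m` with `m` free of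
primes of `P`. Since `∑ (u ^ 2 * v ^ 3) ^ (-σ)` converges for some `σ < 1`, it is enough to show
that there are `O(x * (log x) ^ (-c))` such `m ≤ x`. Their divisors are again of this kind, so
writing `log` as the Dirichlet convolution `Λ * 1` and applying Chebyshev's bound for `ψ` shows that
their number is `O((x / log x) * ∑ 1 / m)`. By Rankin's trick, `∑ 1 / m` is at most a constant times
the Dirichlet series `∑ m ^ (-s)` at `s = 1 + 1 / log x`. By the Euler product, that series is at
most `ζ(s) * exp (-∑ p ^ (-s))` with `p` running over `P`, and `∑ p ^ (-s)` is bounded below by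
`c * log (1 / (s - 1)) - O(1)`: this is the integral over `[s, 2]` of Dirichlet's lower bound for
`∑ Λ(n) * n ^ (-s)` over `n ≡ a (mod k)`, in which the proper prime powers contribute `O(1)`.
-/

/-- The Dirichlet series `∑ n ∈ S, n ^ (-s)` of a set `S` of natural numbers. The number `0`
contributes nothing for `s ≠ 0`, since then `0 ^ (-s) = 0` in Mathlib. -/
noncomputable def zetaOn (S : Set ℕ) (s : ℝ) : ℝ :=
  ∑' n, S.indicator (fun n : ℕ ↦ (n : ℝ) ^ (-s)) n

/-- The positive integers all of whose prime factors lie in `P`; the version of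
`Nat.factoredNumbers` for a possibly infinite set. -/
def factoredBy (P : Set ℕ) : Set ℕ := {n | n ≠ 0 ∧ ∀ p : ℕ, p.Prime → p ∣ n → p ∈ P}

/-- The natural numbers `n` such that `p ∥ n` for no prime `p` in `P`. -/
def withoutExactPrime (P : Set ℕ) : Set ℕ :=
  {n | ¬ ∃ p : ℕ, p.Prime ∧ p ∈ P ∧ p ∣ n ∧ ¬ p ^ 2 ∣ n}

/-- The elements `n` of `S` with `1 ≤ n ≤ x`, used to count `S` up to `x`. -/
noncomputable def upTo (S : Set ℕ) (x : ℝ) : Finset ℕ := {n ∈ Icc 1 ⌊x⌋₊ | n ∈ S}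

/-- The primes in `P` have lower Dirichlet density at least `c`, in the strong sense that
`∑ p ^ (-s) ≥ c * log (1 / (s - 1)) - O(1)` for `1 < s ≤ 2`, the sum being over the primes
in `P`. -/
def HasPrimeDensityAtLeast (P : Set ℕ) (c : ℝ) : Prop :=
  ∃ C : ℝ, ∀ s ∈ Set.Ioc (1 : ℝ) 2, -c * Real.log (s - 1) - C ≤ zetaOn {p ∈ P | p.Prime} s

/-- The set `S` has `O(x * (log x) ^ (-c))` elements in `[1, x]`, uniformly for `x ≥ 3`. -/
def HasLogPowSaving (S : Set ℕ) (c : ℝ) : Prop :=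
  ∃ K : ℝ, ∀ x : ℝ, 3 ≤ x → (#(upTo S x) : ℝ) ≤ K * x * Real.log x ^ (-c)

section DirichletSeries

variable {s : ℝ}

lemma indicator_rpow_nonneg (S : Set ℕ) (s : ℝ) (n : ℕ) :
    0 ≤ S.indicator (fun n : ℕ ↦ (n : ℝ) ^ (-s)) n :=
  Set.indicator_apply_nonneg fun _ ↦ by positivity

lemma summable_indicator_rpow (S : Set ℕ) (hs : 1 < s) :
    Summable (S.indicator fun n : ℕ ↦ (n : ℝ) ^ (-s)) :=
  (Real.summable_nat_rpow.2 (by linarith)).indicator S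

lemma zetaOn_nonneg (S : Set ℕ) (s : ℝ) : 0 ≤ zetaOn S s :=
  tsum_nonneg (indicator_rpow_nonneg S s)

lemma zetaOn_univ_le (hs : 1 < s) : zetaOn Set.univ s ≤ 1 + 1 / (s - 1) := by
  have shift : zetaOn Set.univ s = ∑' n : ℕ, 1 / (n + 1 : ℝ) ^ s := by
    rw [zetaOn, (summable_indicator_rpow _ hs).tsum_eq_zero_add]
    simp [Real.zero_rpow (show s ≠ 0 by linarith), Real.rpow_neg]
  have correction_nonneg : 0 ≤ s * ZetaAsymptotics.termTSum s :=
    mul_nonneg (by linarith) (tsum_nonneg fun n ↦ ZetaAsymptotics.term_nonneg (n + 1) s)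
  linarith [ZetaAsymptotics.zeta_limit_aux1 hs]

lemma LSeries_indicator_one (S : Set ℕ) (hs : s ≠ 0) :
    LSeries (S.indicator 1) s = (zetaOn S s : ℂ) := by
  rw [zetaOn, Complex.ofReal_tsum]
  refine tsum_congr fun n ↦ ?_
  rcases eq_or_ne n 0 with rfl | hn
  · simp [Set.indicator_apply, Real.zero_rpow (neg_ne_zero.2 hs)]
  · by_cases hnS : n ∈ S <;> simp [LSeries.term_of_ne_zero hn, hnS, Real.rpow_neg,
      Complex.ofReal_cpow]

lemma abscissaOfAbsConv_indicator_one_lt (S : Set ℕ) (hs : 1 < s) :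
    LSeries.abscissaOfAbsConv (S.indicator 1) < ((s : ℂ).re : EReal) := by
  refine (LSeries.abscissaOfAbsConv_le_of_le_const ⟨1, fun n _ ↦ ?_⟩).trans_lt
    (by exact_mod_cast hs)
  by_cases hnS : n ∈ S <;> simp [hnS]

lemma term_logMul_indicator_one (S : Set ℕ) (s : ℝ) (n : ℕ) :
    LSeries.term (LSeries.logMul (S.indicator 1)) s n =
      (S.indicator (fun n : ℕ ↦ Real.log n * (n : ℝ) ^ (-s)) n : ℝ) := by
  rcases eq_or_ne n 0 with rfl | hn
  · simp [Set.indicator_apply]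
  · by_cases hnS : n ∈ S <;> simp [LSeries.term_of_ne_zero hn, LSeries.logMul, hnS,
      Real.rpow_neg, Complex.ofReal_cpow, div_eq_mul_inv]

lemma summable_indicator_log_mul_rpow (S : Set ℕ) (hs : 1 < s) :
    Summable (S.indicator fun n : ℕ ↦ Real.log n * (n : ℝ) ^ (-s)) := by
  have h := LSeriesSummable_logMul_of_lt_re (abscissaOfAbsConv_indicator_one_lt S hs)
  rw [LSeriesSummable, funext (term_logMul_indicator_one S s)] at h
  exact Complex.summable_ofReal.1 h

lemma hasDerivAt_zetaOn (S : Set ℕ) (hs : 1 < s) :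
    HasDerivAt (zetaOn S)
      (-∑' n, S.indicator (fun n : ℕ ↦ Real.log n * (n : ℝ) ^ (-s)) n) s := by
  have h := (LSeries_hasDerivAt (abscissaOfAbsConv_indicator_one_lt S hs)).real_of_complex
  rw [LSeries, tsum_congr (term_logMul_indicator_one S s), ← Complex.ofReal_tsum,
    ← Complex.ofReal_neg, Complex.ofReal_re] at h
  refine h.congr_of_eventuallyEq ?_
  filter_upwards [eventually_ne_nhds (zero_lt_one.trans hs).ne'] with t ht
  rw [LSeries_indicator_one S ht, Complex.ofReal_re]

end DirichletSeries

section EulerProduct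

variable {P : Set ℕ} {s : ℝ}

lemma zero_notMem_factoredBy (P : Set ℕ) : 0 ∉ factoredBy P := fun h ↦ h.1 rfl

lemma one_mem_factoredBy (P : Set ℕ) : 1 ∈ factoredBy P :=
  ⟨one_ne_zero, fun _ hp hd ↦ absurd (Nat.dvd_one.1 hd) hp.ne_one⟩

lemma mul_mem_factoredBy {m n : ℕ} :
    m * n ∈ factoredBy P ↔ m ∈ factoredBy P ∧ n ∈ factoredBy P := by
  constructor
  · rintro ⟨h0, h⟩
    exact ⟨⟨left_ne_zero_of_mul h0, fun p hp hd ↦ h p hp (hd.mul_right n)⟩,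
      ⟨right_ne_zero_of_mul h0, fun p hp hd ↦ h p hp (hd.mul_left m)⟩⟩
  · rintro ⟨⟨hm, hPm⟩, hn, hPn⟩
    exact ⟨mul_ne_zero hm hn, fun p hp hd ↦ (hp.dvd_mul.1 hd).elim (hPm p hp) (hPn p hp)⟩

lemma mem_factoredBy_of_dvd {m n : ℕ} (hn : n ∈ factoredBy P) (hmn : m ∣ n) :
    m ∈ factoredBy P := by
  obtain ⟨d, rfl⟩ := hmn
  exact (mul_mem_factoredBy.1 hn).1

lemma prime_mem_factoredBy {p : ℕ} (hp : p.Prime) : p ∈ factoredBy P ↔ p ∈ P := by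
  refine ⟨fun h ↦ h.2 p hp dvd_rfl, fun h ↦ ⟨hp.ne_zero, fun q hq hd ↦ ?_⟩⟩
  rwa [(Nat.prime_dvd_prime_iff_eq hq hp).1 hd]

lemma prime_pow_mem_factoredBy {p : ℕ} (hp : p.Prime) (hpP : p ∈ P) (e : ℕ) :
    p ^ e ∈ factoredBy P :=
  ⟨pow_ne_zero e hp.ne_zero, fun _ hq hd ↦
    (prime_mem_factoredBy hp).2 hpP |>.2 _ hq (hq.dvd_of_dvd_pow hd)⟩

lemma factoredBy_univ : factoredBy Set.univ = {0}ᶜ := by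
  ext n
  simp [factoredBy]

/-- The completely multiplicative function `n ↦ n ^ (-s)` supported on `factoredBy P`, bundled as
required by the Euler product. -/
noncomputable def factoredByRpow (P : Set ℕ) (s : ℝ) : ℕ →*₀ ℝ where
  toFun := (factoredBy P).indicator fun n : ℕ ↦ (n : ℝ) ^ (-s)
  map_zero' := by simp [zero_notMem_factoredBy]
  map_one' := by simp [one_mem_factoredBy]
  map_mul' m n := by
    by_cases hm : m ∈ factoredBy P <;> by_cases hn : n ∈ factoredBy P <;>
      simp [mul_mem_factoredBy, hm, hn, Real.mul_rpow]

lemma factoredByRpow_prime (p : Nat.Primes) :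
    factoredByRpow P s p = P.indicator (fun n : ℕ ↦ (n : ℝ) ^ (-s)) p := by
  change (factoredBy P).indicator (fun n : ℕ ↦ (n : ℝ) ^ (-s)) p = _
  simp only [Set.indicator_apply, prime_mem_factoredBy p.2]

lemma hasProd_zetaOn_factoredBy (P : Set ℕ) (hs : 1 < s) :
    HasProd (fun p : Nat.Primes ↦ (1 - P.indicator (fun n : ℕ ↦ (n : ℝ) ^ (-s)) p)⁻¹)
      (zetaOn (factoredBy P) s) := by
  simp_rw [← factoredByRpow_prime]
  exact EulerProduct.eulerProduct_completely_multiplicative_hasProd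
    (f := factoredByRpow P s) (summable_indicator_rpow (factoredBy P) hs).norm

lemma zetaOn_factoredBy_mul_compl (P : Set ℕ) (hs : 1 < s) :
    zetaOn (factoredBy P) s * zetaOn (factoredBy Pᶜ) s = zetaOn Set.univ s := by
  have univ_eq : zetaOn (factoredBy Set.univ) s = zetaOn Set.univ s := by
    refine tsum_congr fun n ↦ ?_
    rcases eq_or_ne n 0 with rfl | hn
    · simp [factoredBy_univ, Real.zero_rpow (show -s ≠ 0 by linarith)]
    · simp [factoredBy_univ, hn]
  rw [← univ_eq]
  refine ((hasProd_zetaOn_factoredBy P hs).mul (hasProd_zetaOn_factoredBy Pᶜ hs)).unique ?_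
  convert hasProd_zetaOn_factoredBy Set.univ hs using 2 with p
  by_cases hp : (p : ℕ) ∈ P <;> simp [hp]

lemma exp_le_inv_one_sub {t : ℝ} (ht : t < 1) : Real.exp t ≤ (1 - t)⁻¹ := by
  rw [le_inv_comm₀ (Real.exp_pos _) (by linarith), ← Real.exp_neg]
  linarith [Real.add_one_le_exp (-t)]

lemma exp_zetaOn_primes_le (P : Set ℕ) (hs : 1 < s) :
    Real.exp (zetaOn {p ∈ P | p.Prime} s) ≤ zetaOn (factoredBy P) s := by
  set f := P.indicator fun n : ℕ ↦ (n : ℝ) ^ (-s)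
  have sum_primes : HasSum (fun p : Nat.Primes ↦ f p) (zetaOn {p ∈ P | p.Prime} s) := by
    have h := ((summable_indicator_rpow P hs).subtype {p | p.Prime}).hasSum
    have inter_eq : {p ∈ P | p.Prime} = {p | p.Prime} ∩ P := Set.inter_comm _ _
    rw [inter_eq, zetaOn]
    rwa [← Set.indicator_indicator, ← _root_.tsum_subtype]
  refine le_of_tendsto_of_tendsto' sum_primes.rexp (hasProd_zetaOn_factoredBy P hs) fun T ↦ ?_
  refine Finset.prod_le_prod (fun _ _ ↦ (Real.exp_pos _).le) fun p _ ↦ exp_le_inv_one_sub ?_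
  exact (Set.indicator_apply_le' (fun _ ↦ le_rfl) fun _ ↦ by positivity).trans_lt
    (Real.rpow_lt_one_of_one_lt_of_neg (mod_cast p.2.one_lt) (by linarith))

lemma HasPrimeDensityAtLeast.exists_zetaOn_factoredBy_compl_le {c : ℝ}
    (hP : HasPrimeDensityAtLeast P c) :
    ∃ M : ℝ, ∀ s ∈ Set.Ioc (1 : ℝ) 2,
      zetaOn (factoredBy Pᶜ) s ≤ M * (s - 1) ^ (c - 1) := by
  obtain ⟨C, hC⟩ := hP
  refine ⟨2 * Real.exp C, fun s hs ↦ ?_⟩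
  have hs0 : 0 < s - 1 := sub_pos.2 hs.1
  have lower : (s - 1) ^ (-c) * Real.exp (-C) ≤ zetaOn (factoredBy P) s :=
    calc (s - 1) ^ (-c) * Real.exp (-C)
        = Real.exp (-c * Real.log (s - 1) - C) := by
          rw [Real.rpow_def_of_pos hs0, ← Real.exp_add]; ring_nf
      _ ≤ Real.exp (zetaOn {p ∈ P | p.Prime} s) := Real.exp_le_exp.2 (hC s hs)
      _ ≤ zetaOn (factoredBy P) s := exp_zetaOn_primes_le P hs.1
  have upper : zetaOn Set.univ s ≤ 2 * (s - 1)⁻¹ := by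
    have : 1 ≤ (s - 1)⁻¹ := (one_le_inv₀ hs0).2 (by linarith [hs.2])
    linarith [zetaOn_univ_le hs.1, one_div (s - 1)]
  have product : (s - 1) ^ (-c) * Real.exp (-C) * zetaOn (factoredBy Pᶜ) s ≤ 2 * (s - 1)⁻¹ :=
    (mul_le_mul_of_nonneg_right lower (zetaOn_nonneg _ s)).trans
      ((zetaOn_factoredBy_mul_compl P hs.1).trans_le upper)
  calc zetaOn (factoredBy Pᶜ) s
      = (s - 1) ^ c * Real.exp C *
          ((s - 1) ^ (-c) * Real.exp (-C) * zetaOn (factoredBy Pᶜ) s) := by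
        rw [Real.rpow_neg hs0.le, Real.exp_neg]
        field_simp [(Real.rpow_pos_of_pos hs0 c).ne']
    _ ≤ (s - 1) ^ c * Real.exp C * (2 * (s - 1)⁻¹) := by gcongr
    _ = 2 * Real.exp C * (s - 1) ^ (c - 1) := by
        rw [Real.rpow_sub_one hs0.ne']; ring

end EulerProduct

section Counting

variable {S : Set ℕ} {x : ℝ}

lemma mem_upTo {n : ℕ} (hx : 0 ≤ x) : n ∈ upTo S x ↔ 1 ≤ n ∧ (n : ℝ) ≤ x ∧ n ∈ S := by
  simp only [upTo, mem_filter, mem_Icc, Nat.le_floor_iff hx, and_assoc]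

lemma upTo_mono (S : Set ℕ) : Monotone (upTo S) := fun _ _ hxy ↦
  filter_subset_filter _ (Icc_subset_Icc_right (Nat.floor_mono hxy))

lemma sum_vonMangoldt_div_le (S : Set ℕ) (hx : 0 ≤ x) {e : ℕ} (he : 0 < e) :
    ∑ n ∈ upTo S x with e ∣ n, ArithmeticFunction.vonMangoldt (n / e) ≤
      Chebyshev.psi (x / e) := by
  have he' : (0 : ℝ) < e := mod_cast he
  have div_injOn : Set.InjOn (· / e) ({n ∈ upTo S x | e ∣ n} : Finset ℕ) := fun m hm n hn hmn ↦
    (Nat.div_left_inj (mem_filter.1 hm).2 (mem_filter.1 hn).2).1 hmn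
  rw [Chebyshev.psi, ← sum_image (g := (· / e)) div_injOn]
  refine sum_le_sum_of_subset_of_nonneg (image_subset_iff.2 fun n hn ↦ ?_)
    fun _ _ _ ↦ ArithmeticFunction.vonMangoldt_nonneg
  rw [mem_filter, mem_upTo hx] at hn
  obtain ⟨⟨hn1, hnx, -⟩, d, rfl⟩ := hn
  rw [Nat.mul_div_cancel_left d he, mem_Ioc]
  refine ⟨Nat.pos_of_mul_pos_left hn1, Nat.le_floor ((le_div_iff₀ he').2 ?_)⟩
  push_cast at hnx
  linarith

lemma sum_log_upTo_le (hS : ∀ n ∈ S, ∀ d, d ∣ n → d ∈ S) (hx : 0 ≤ x) :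
    ∑ n ∈ upTo S x, Real.log n ≤ (Real.log 4 + 4) * x * ∑ e ∈ upTo S x, (e : ℝ)⁻¹ := by
  have log_eq : ∀ n ∈ upTo S x, Real.log n =
      ∑ e ∈ upTo S x with e ∣ n, ArithmeticFunction.vonMangoldt (n / e) := by
    intro n hn
    obtain ⟨hn1, hnx, hnS⟩ := (mem_upTo hx).1 hn
    rw [← ArithmeticFunction.vonMangoldt_sum, ← Nat.sum_div_divisors]
    refine sum_congr (Finset.ext fun e ↦ ?_) fun _ _ ↦ rfl
    rw [Nat.mem_divisors, mem_filter, mem_upTo hx]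
    refine ⟨fun ⟨hd, _⟩ ↦ ⟨⟨Nat.pos_of_dvd_of_pos hd hn1, ?_, hS n hnS e hd⟩, hd⟩,
      fun ⟨_, hd⟩ ↦ ⟨hd, by lia⟩⟩
    exact le_trans (mod_cast Nat.le_of_dvd hn1 hd) hnx
  calc ∑ n ∈ upTo S x, Real.log n
      = ∑ e ∈ upTo S x, ∑ n ∈ upTo S x with e ∣ n, ArithmeticFunction.vonMangoldt (n / e) := by
        rw [sum_congr rfl log_eq]
        simp only [sum_filter]
        exact sum_comm
    _ ≤ ∑ e ∈ upTo S x, (Real.log 4 + 4) * (x / e) := by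
        refine sum_le_sum fun e he ↦ ?_
        exact (sum_vonMangoldt_div_le S hx ((mem_upTo hx).1 he).1).trans
          (Chebyshev.psi_le_const_mul_self (by positivity))
    _ = (Real.log 4 + 4) * x * ∑ e ∈ upTo S x, (e : ℝ)⁻¹ := by
        rw [mul_sum]
        exact sum_congr rfl fun e _ ↦ by ring

lemma card_upTo_mul_log_le (hS : ∀ n ∈ S, ∀ d, d ∣ n → d ∈ S) (hx : 0 < x) :
    #(upTo S x) * Real.log x ≤ (Real.log 4 + 5) * x * ∑ e ∈ upTo S x, (e : ℝ)⁻¹ := by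
  have log_le : ∀ n ∈ upTo S x, Real.log x ≤ Real.log n + x * (n : ℝ)⁻¹ := by
    intro n hn
    have hn0 : (0 : ℝ) < n := mod_cast ((mem_upTo hx.le).1 hn).1
    have := Real.log_le_sub_one_of_pos (div_pos hx hn0)
    rw [Real.log_div hx.ne' hn0.ne', div_eq_mul_inv] at this
    linarith
  have h := card_nsmul_le_sum _ _ _ log_le
  rw [nsmul_eq_mul, sum_add_distrib, ← mul_sum] at h
  linarith [sum_log_upTo_le hS hx.le]

/-- Rankin's trick: on `[1, x]` the factor `n ^ (-1 / log x)` is at least `exp (-1)`. -/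
lemma sum_inv_upTo_le_zetaOn (S : Set ℕ) (hx : 1 < x) :
    ∑ n ∈ upTo S x, (n : ℝ)⁻¹ ≤ Real.exp 1 * zetaOn S (1 + (Real.log x)⁻¹) := by
  have hL : 0 < Real.log x := Real.log_pos hx
  have hs : 1 < 1 + (Real.log x)⁻¹ := lt_add_of_pos_right 1 (inv_pos.2 hL)
  refine le_trans ?_ (mul_le_mul_of_nonneg_left ((summable_indicator_rpow S hs).sum_le_tsum
    (upTo S x) fun n _ ↦ indicator_rpow_nonneg S _ n) (Real.exp_pos 1).le)
  rw [mul_sum]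
  refine sum_le_sum fun n hn ↦ ?_
  obtain ⟨hn1, hnx, hnS⟩ := (mem_upTo (zero_le_one.trans hx.le)).1 hn
  have hn0 : (0 : ℝ) < n := mod_cast hn1
  have one_le : 1 ≤ Real.exp 1 * (n : ℝ) ^ (-(Real.log x)⁻¹) := by
    rw [Real.rpow_def_of_pos hn0, ← Real.exp_add, mul_neg, ← div_eq_mul_inv]
    refine Real.one_le_exp (sub_nonneg.2 ((div_le_one hL).2 (Real.log_le_log hn0 hnx)))
  rw [Set.indicator_of_mem hnS, neg_add, Real.rpow_add hn0, Real.rpow_neg_one]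
  calc (n : ℝ)⁻¹ ≤ (n : ℝ)⁻¹ * (Real.exp 1 * (n : ℝ) ^ (-(Real.log x)⁻¹)) :=
        le_mul_of_one_le_right (by positivity) one_le
    _ = Real.exp 1 * ((n : ℝ)⁻¹ * (n : ℝ) ^ (-(Real.log x)⁻¹)) := by ring

lemma one_le_log (hx : 3 ≤ x) : 1 ≤ Real.log x := by
  rw [Real.le_log_iff_exp_le (by linarith)]
  linarith [Real.exp_one_lt_d9]

lemma HasPrimeDensityAtLeast.hasLogPowSaving_factoredBy_compl {P : Set ℕ} {c : ℝ}
    (hP : HasPrimeDensityAtLeast P c) : HasLogPowSaving (factoredBy Pᶜ) c := by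
  obtain ⟨M, hzeta⟩ := hP.exists_zetaOn_factoredBy_compl_le
  refine ⟨(Real.log 4 + 5) * Real.exp 1 * M, fun x hx ↦ ?_⟩
  have hL1 : 1 ≤ Real.log x := one_le_log hx
  set L := Real.log x
  have hL0 : 0 < L := by linarith
  have zeta_le : zetaOn (factoredBy Pᶜ) (1 + L⁻¹) ≤ M * (L ^ (-c) * L) := by
    have h := hzeta (1 + L⁻¹) ⟨by linarith [inv_pos.2 hL0], by linarith [inv_le_one_of_one_le₀ hL1]⟩
    rwa [add_sub_cancel_left, Real.inv_rpow hL0.le, ← Real.rpow_neg hL0.le, neg_sub, sub_eq_neg_add,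
      Real.rpow_add_one hL0.ne'] at h
  refine le_of_mul_le_mul_right ?_ hL0
  calc #(upTo (factoredBy Pᶜ) x) * L
      ≤ (Real.log 4 + 5) * x * ∑ e ∈ upTo (factoredBy Pᶜ) x, (e : ℝ)⁻¹ :=
        card_upTo_mul_log_le (fun _ hn _ hd ↦ mem_factoredBy_of_dvd hn hd) (by linarith)
    _ ≤ (Real.log 4 + 5) * x * (Real.exp 1 * (M * (L ^ (-c) * L))) := by
        gcongr
        exact (sum_inv_upTo_le_zetaOn _ (by linarith)).trans (by gcongr)
    _ = (Real.log 4 + 5) * Real.exp 1 * M * x * L ^ (-c) * L := by ring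

end Counting

section Multiples

variable {S T : Set ℕ} {c ε σ : ℝ}

lemma exists_one_add_log_rpow_le (c : ℝ) (hε : 0 < ε) :
    ∃ M : ℝ, 0 ≤ M ∧ ∀ d : ℝ, 1 ≤ d → (1 + Real.log d) ^ c ≤ M * d ^ ε := by
  refine ⟨⌈c⌉₊.factorial / ε ^ ⌈c⌉₊ * Real.exp ε, by positivity, fun d hd ↦ ?_⟩
  have hlog : 0 ≤ Real.log d := Real.log_nonneg hd
  have power_le_exp :=
    Real.pow_div_factorial_le_exp (x := ε * (1 + Real.log d)) (by positivity) ⌈c⌉₊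
  rw [div_le_iff₀ (by positivity), mul_pow] at power_le_exp
  calc (1 + Real.log d) ^ c ≤ (1 + Real.log d) ^ (⌈c⌉₊ : ℝ) :=
        Real.rpow_le_rpow_of_exponent_le (by linarith) (Nat.le_ceil c)
    _ = ε ^ ⌈c⌉₊ * (1 + Real.log d) ^ ⌈c⌉₊ / ε ^ ⌈c⌉₊ := by
        rw [Real.rpow_natCast]; field_simp
    _ ≤ Real.exp (ε * (1 + Real.log d)) * ⌈c⌉₊.factorial / ε ^ ⌈c⌉₊ := by gcongr
    _ = ⌈c⌉₊.factorial / ε ^ ⌈c⌉₊ * Real.exp ε * d ^ ε := by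
        rw [Real.rpow_def_of_pos (by linarith), mul_one_add, Real.exp_add, mul_comm (Real.log d)]
        ring

lemma log_rpow_neg_three_mul_div_le (hc : 0 ≤ c) {x d : ℝ} (hd : 1 ≤ d) (hdx : d ≤ x)
    (hx : 3 ≤ x) :
    Real.log (3 * (x / d)) ^ (-c) ≤ Real.log x ^ (-c) * (1 + Real.log d) ^ c := by
  have hd0 : 0 < d := by linarith
  have hlogd : 0 ≤ Real.log d := Real.log_nonneg hd
  have hlogx : 0 < Real.log x := Real.log_pos (by linarith)
  have hY : 1 ≤ Real.log (3 * (x / d)) := one_le_log (by linarith [(one_le_div hd0).2 hdx])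
  have log_le : Real.log x ≤ Real.log (3 * (x / d)) * (1 + Real.log d) :=
    calc Real.log x ≤ Real.log (3 * (x / d) * d) :=
          Real.log_le_log (by linarith) (by field_simp; linarith)
      _ = Real.log (3 * (x / d)) + Real.log d := Real.log_mul (by positivity) hd0.ne'
      _ ≤ Real.log (3 * (x / d)) * (1 + Real.log d) := by nlinarith
  have rpow_le := Real.rpow_le_rpow hlogx.le log_le hc
  rw [Real.mul_rpow (by linarith) (by linarith)] at rpow_le
  rwa [Real.rpow_neg (by linarith), Real.rpow_neg hlogx.le,
    inv_le_iff_one_le_mul₀ (Real.rpow_pos_of_pos (by linarith) c), mul_assoc,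
    ← div_eq_inv_mul, one_le_div (Real.rpow_pos_of_pos hlogx c), mul_comm]

lemma HasLogPowSaving.exists_card_upTo_div_le (hS : HasLogPowSaving S c) (hc : 0 ≤ c)
    (hσ : σ < 1) :
    ∃ K : ℝ, 0 ≤ K ∧ ∀ x d : ℝ, 3 ≤ x → 1 ≤ d →
      (#(upTo S (x / d)) : ℝ) ≤ K * x * Real.log x ^ (-c) * d ^ (-σ) := by
  obtain ⟨K, hK⟩ := hS
  have hK0 : 0 ≤ K := by
    have h := (Nat.cast_nonneg _).trans (hK 3 le_rfl)
    rw [mul_assoc] at h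
    exact nonneg_of_mul_nonneg_left h
      (mul_pos three_pos (Real.rpow_pos_of_pos (Real.log_pos (by norm_num)) _))
  obtain ⟨M, hM, hlog⟩ := exists_one_add_log_rpow_le c (sub_pos.2 hσ)
  refine ⟨3 * K * M, by positivity, fun x d hx hd ↦ ?_⟩
  have hd0 : 0 < d := by linarith
  have hL0 : 0 ≤ Real.log x := zero_le_one.trans (one_le_log hx)
  rcases lt_or_ge x d with hxd | hdx
  · have : upTo S (x / d) = ∅ := by
      simp [upTo, Nat.floor_eq_zero.2 ((div_lt_one hd0).2 hxd)]
    rw [this, card_empty, Nat.cast_zero]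
    positivity
  have hxd1 : 1 ≤ x / d := (one_le_div hd0).2 hdx
  calc (#(upTo S (x / d)) : ℝ) ≤ #(upTo S (3 * (x / d))) := by
        exact_mod_cast card_le_card (upTo_mono S (by linarith))
    _ ≤ K * (3 * (x / d)) * Real.log (3 * (x / d)) ^ (-c) := hK _ (by linarith)
    _ ≤ K * (3 * (x / d)) * (Real.log x ^ (-c) * (M * d ^ (1 - σ))) := by
        gcongr
        exact (log_rpow_neg_three_mul_div_le hc hd hdx hx).trans (by gcongr; exact hlog d hd)
    _ = 3 * K * M * x * Real.log x ^ (-c) * d ^ (-σ) := by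
        rw [sub_eq_neg_add, Real.rpow_add_one hd0.ne']
        field_simp

lemma exists_card_upTo_le_sum_card_upTo_div {ι : Type*} {x : ℝ} (hx : 0 ≤ x) (d : ι → ℕ)
    (hT : ∀ n ∈ T, n ≠ 0 → ∃ j, ∃ m ∈ S, d j * m = n) :
    ∃ J : Finset ι, (∀ j ∈ J, 0 < d j) ∧ #(upTo T x) ≤ ∑ j ∈ J, #(upTo S (x / d j)) := by
  have cover : ∀ n ∈ upTo T x,
      ∃ j, 0 < d j ∧ n ∈ (upTo S (x / d j)).image (d j * ·) := by
    intro n hn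
    obtain ⟨hn1, hnx, hnT⟩ := (mem_upTo hx).1 hn
    obtain ⟨j, m, hmS, rfl⟩ := hT n hnT (by lia)
    have hd : 0 < d j := Nat.pos_of_mul_pos_right hn1
    refine ⟨j, hd, mem_image_of_mem _ ((mem_upTo (by positivity)).2
      ⟨Nat.pos_of_mul_pos_left hn1, ?_, hmS⟩)⟩
    rw [le_div_iff₀' (mod_cast hd)]
    exact_mod_cast hnx
  choose i hi hmem using cover
  refine ⟨(upTo T x).attach.image fun n : upTo T x ↦ i n n.2, ?_, ?_⟩
  · simp only [mem_image, mem_attach, true_and]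
    rintro _ ⟨n, rfl⟩
    exact hi n n.2
  · have subset_biUnion : upTo T x ⊆ ((upTo T x).attach.image fun n : upTo T x ↦ i n n.2).biUnion
        fun j ↦ (upTo S (x / d j)).image (d j * ·) := fun n hn ↦
      mem_biUnion.2 ⟨i n hn, mem_image.2 ⟨⟨n, hn⟩, mem_attach _ _, rfl⟩, hmem n hn⟩
    exact (card_le_card subset_biUnion).trans
      (card_biUnion_le.trans (sum_le_sum fun j _ ↦ card_image_le))

lemma HasLogPowSaving.of_forall_exists_mul_eq {ι : Type*} (hS : HasLogPowSaving S c)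
    (hc : 0 ≤ c) (hσ : σ < 1) (d : ι → ℕ) (hd : Summable fun j ↦ (d j : ℝ) ^ (-σ))
    (hT : ∀ n ∈ T, n ≠ 0 → ∃ j, ∃ m ∈ S, d j * m = n) : HasLogPowSaving T c := by
  obtain ⟨K, hK0, hK⟩ := hS.exists_card_upTo_div_le hc hσ
  refine ⟨K * ∑' j, (d j : ℝ) ^ (-σ), fun x hx ↦ ?_⟩
  have hL0 : 0 ≤ Real.log x := zero_le_one.trans (one_le_log hx)
  obtain ⟨J, hJ, hcard⟩ := exists_card_upTo_le_sum_card_upTo_div (x := x) (by linarith) d hT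
  calc (#(upTo T x) : ℝ) ≤ ∑ j ∈ J, (#(upTo S (x / d j)) : ℝ) := mod_cast hcard
    _ ≤ ∑ j ∈ J, K * x * Real.log x ^ (-c) * (d j : ℝ) ^ (-σ) :=
        sum_le_sum fun j hj ↦ hK x (d j) hx (mod_cast hJ j hj)
    _ = K * x * Real.log x ^ (-c) * ∑ j ∈ J, (d j : ℝ) ^ (-σ) := (mul_sum _ _ _).symm
    _ ≤ K * x * Real.log x ^ (-c) * ∑' j, (d j : ℝ) ^ (-σ) := by
        gcongr
        exact hd.sum_le_tsum J fun j _ ↦ by positivity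
    _ = K * (∑' j, (d j : ℝ) ^ (-σ)) * x * Real.log x ^ (-c) := by ring

end Multiples

section WithoutExactPrime

variable {P : Set ℕ} {c : ℝ}

lemma mem_withoutExactPrime_of_coprime_mul {m n : ℕ} (hmn : m.Coprime n)
    (h : m * n ∈ withoutExactPrime P) : m ∈ withoutExactPrime P := by
  rintro ⟨p, hp, hpP, hpm, hp2⟩
  have coprime_sq : (p ^ 2).Coprime n := (hmn.coprime_dvd_left hpm).pow_left 2
  exact h ⟨p, hp, hpP, hpm.mul_right n, fun hd ↦ hp2 (coprime_sq.dvd_of_dvd_mul_right hd)⟩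

lemma exists_sq_mul_cube_mul_eq {n : ℕ} (hn : n ≠ 0) (h : n ∈ withoutExactPrime P) :
    ∃ u v, ∃ m ∈ factoredBy Pᶜ, u ^ 2 * v ^ 3 * m = n := by
  induction n using Nat.recOnPosPrimePosCoprime with
  | zero => exact absurd rfl hn
  | one => exact ⟨1, 1, 1, one_mem_factoredBy _, rfl⟩
  | prime_pow p e hp he =>
    by_cases hpP : p ∈ P
    · have two_le : 2 ≤ e := by
        by_contra! he2
        obtain rfl : e = 1 := by lia
        refine h ⟨p, hp, hpP, by simp, fun hd ↦ ?_⟩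
        exact absurd ((Nat.pow_dvd_pow_iff_le_right hp.one_lt).1 hd) (by lia)
      obtain ⟨i, j, rfl⟩ : ∃ i j, e = 2 * i + 3 * j :=
        ⟨e / 2 - e % 2, e % 2, by lia⟩
      exact ⟨p ^ i, p ^ j, 1, one_mem_factoredBy _, by ring⟩
    · exact ⟨1, 1, p ^ e, prime_pow_mem_factoredBy hp hpP e, by ring⟩
  | coprime a b _ _ hab iha ihb =>
    obtain ⟨u, v, m, hm, ha⟩ := iha (left_ne_zero_of_mul hn)
      (mem_withoutExactPrime_of_coprime_mul hab h)
    obtain ⟨u', v', m', hm', hb⟩ := ihb (right_ne_zero_of_mul hn)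
      (mem_withoutExactPrime_of_coprime_mul hab.symm (mul_comm a b ▸ h))
    exact ⟨u * u', v * v', m * m', mul_mem_factoredBy.2 ⟨hm, hm'⟩, by rw [← ha, ← hb]; ring⟩

lemma summable_sq_mul_cube_rpow {σ : ℝ} (hσ : 1 / 2 < σ) :
    Summable fun j : ℕ × ℕ ↦ ((j.1 ^ 2 * j.2 ^ 3 : ℕ) : ℝ) ^ (-σ) := by
  have summable_pow : ∀ k : ℕ, 2 ≤ k → Summable fun n : ℕ ↦ (n : ℝ) ^ ((k : ℝ) * -σ) :=
    fun k hk ↦ Real.summable_nat_rpow.2 (by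
      have : (2 : ℝ) ≤ k := mod_cast hk
      nlinarith)
  refine ((summable_pow 2 le_rfl).mul_of_nonneg (summable_pow 3 (by simp))
    (fun _ ↦ by positivity) (fun _ ↦ by positivity)).congr fun j ↦ ?_
  rw [Nat.cast_mul, Nat.cast_pow, Nat.cast_pow, Real.mul_rpow (by positivity) (by positivity),
    Real.rpow_natCast_mul (by positivity), Real.rpow_natCast_mul (by positivity)]

theorem HasPrimeDensityAtLeast.hasLogPowSaving_withoutExactPrime (hc : 0 ≤ c)
    (hP : HasPrimeDensityAtLeast P c) : HasLogPowSaving (withoutExactPrime P) c := by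
  refine hP.hasLogPowSaving_factoredBy_compl.of_forall_exists_mul_eq hc (σ := 3 / 4) (by norm_num)
    (fun j : ℕ × ℕ ↦ j.1 ^ 2 * j.2 ^ 3) (summable_sq_mul_cube_rpow (by norm_num)) ?_
  intro n hn hn0
  obtain ⟨u, v, m, hm, h⟩ := exists_sq_mul_cube_mul_eq hn0 hn
  exact ⟨(u, v), m, hm, h⟩

end WithoutExactPrime

section ResidueClass

open ArithmeticFunction.vonMangoldt

lemma exists_neg_mul_log_sub_le_of_hasDerivAt_le {f f' : ℝ → ℝ} {c C : ℝ}
    (hf : ∀ s ∈ Set.Ioc (1 : ℝ) 2, HasDerivAt f (f' s) s)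
    (hf' : ∀ s ∈ Set.Ioc (1 : ℝ) 2, f' s ≤ C - c / (s - 1)) :
    ∃ B : ℝ, ∀ s ∈ Set.Ioc (1 : ℝ) 2, -c * Real.log (s - 1) - B ≤ f s := by
  set g : ℝ → ℝ := fun s ↦ f s + c * Real.log (s - 1) - C * s with hg
  have hasDerivAt_g : ∀ s ∈ Set.Ioc (1 : ℝ) 2, HasDerivAt g (f' s + c * (1 / (s - 1)) - C) s := by
    intro s hs
    have hlog : HasDerivAt (fun s : ℝ ↦ Real.log (s - 1)) (1 / (s - 1)) s :=
      ((hasDerivAt_id s).sub_const 1).log (sub_pos.2 hs.1).ne'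
    exact ((hf s hs).add (hlog.const_mul c)).sub (hasDerivAt_const_mul C)
  have antitone_g : AntitoneOn g (Set.Ioc 1 2) := by
    refine antitoneOn_of_hasDerivWithinAt_nonpos (convex_Ioc 1 2)
      (f' := fun s ↦ f' s + c * (1 / (s - 1)) - C)
      (fun s hs ↦ (hasDerivAt_g s hs).continuousAt.continuousWithinAt)
      (fun s hs ↦ (hasDerivAt_g s (interior_subset hs)).hasDerivWithinAt) fun s hs ↦ ?_
    have := hf' s (interior_subset hs)
    rw [div_eq_mul_one_div] at this
    linarith
  refine ⟨|C| - f 2, fun s hs ↦ ?_⟩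
  have g_two_le : f 2 - C * 2 ≤ f s + c * Real.log (s - 1) - C * s := by
    simpa [hg, show (2 : ℝ) - 1 = 1 by norm_num] using
      antitone_g hs ⟨one_lt_two, le_rfl⟩ hs.2
  have drift : C * (2 - s) ≤ |C| :=
    (mul_le_mul_of_nonneg_right (le_abs_self C) (by linarith [hs.2])).trans
      (mul_le_of_le_one_right (abs_nonneg C) (by linarith [hs.1]))
  linarith

lemma residueClass_div_rpow_le {q : ℕ} (a : ZMod q) {s : ℝ} (hs : 1 ≤ s) (n : ℕ) :
    residueClass a n / (n : ℝ) ^ s ≤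
      {p : ℕ | (p : ZMod q) = a ∧ p.Prime}.indicator
          (fun m : ℕ ↦ Real.log m * (m : ℝ) ^ (-s)) n +
        (if n.Prime then 0 else residueClass a n) / n := by
  rcases n.eq_zero_or_pos with rfl | hn
  · simp [Set.indicator_apply, Nat.not_prime_zero]
  by_cases hp : n.Prime
  · by_cases hna : (n : ZMod q) = a
    · simp [residueClass, hp, hna, ArithmeticFunction.vonMangoldt_apply_prime hp, Real.rpow_neg,
        div_eq_mul_inv]
    · simp [residueClass, hp, hna]
  · have le_rpow : (n : ℝ) ≤ (n : ℝ) ^ s :=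
      Real.self_le_rpow_of_one_le (mod_cast hn) hs
    rw [Set.indicator_of_notMem fun h ↦ hp h.2, zero_add, if_neg hp]
    exact div_le_div_of_nonneg_left (residueClass_nonneg a n) (mod_cast hn) le_rpow

variable {q : ℕ} [NeZero q] {a : ZMod q}

lemma exists_le_tsum_log_mul_rpow_residueClass (ha : IsUnit a) :
    ∃ C : ℝ, ∀ s ∈ Set.Ioc (1 : ℝ) 2, (q.totient : ℝ)⁻¹ / (s - 1) - C ≤
      ∑' n, {p : ℕ | (p : ZMod q) = a ∧ p.Prime}.indicator
        (fun m : ℕ ↦ Real.log m * (m : ℝ) ^ (-s)) n := by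
  obtain ⟨C, hC⟩ := LSeries_residueClass_lower_bound ha
  have summable_nonprimes := summable_residueClass_non_primes_div a
  refine ⟨C + ∑' n : ℕ, (if n.Prime then 0 else residueClass a n) / n, fun s hs ↦ ?_⟩
  have summable_bound :=
    (summable_indicator_log_mul_rpow {p : ℕ | (p : ZMod q) = a ∧ p.Prime} hs.1).add
      summable_nonprimes
  have le_bound := residueClass_div_rpow_le a hs.1.le
  have nonneg (n : ℕ) : 0 ≤ residueClass a n / (n : ℝ) ^ s :=
    div_nonneg (residueClass_nonneg a n) (by positivity)
  have h := (summable_bound.of_nonneg_of_le nonneg le_bound).tsum_le_tsum le_bound summable_bound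
  rw [(summable_indicator_log_mul_rpow _ hs.1).tsum_add summable_nonprimes] at h
  linarith [hC hs]

theorem hasPrimeDensityAtLeast_residueClass (ha : IsUnit a) :
    HasPrimeDensityAtLeast {n : ℕ | (n : ZMod q) = a} (q.totient : ℝ)⁻¹ := by
  obtain ⟨C, hC⟩ := exists_le_tsum_log_mul_rpow_residueClass ha
  exact exists_neg_mul_log_sub_le_of_hasDerivAt_le (C := C)
    (fun s hs ↦ hasDerivAt_zetaOn {p : ℕ | (p : ZMod q) = a ∧ p.Prime} hs.1)
    fun s hs ↦ by linarith [hC s hs]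

end ResidueClass

theorem pomerance_no_exact_prime_in_progression (a : ℤ) (k : ℕ) (hk : 0 < k)
    (hak : Int.gcd a (k : ℤ) = 1) :
    ∃ C : ℝ, ∀ x : ℝ, 3 ≤ x →
      (((Finset.Icc 1 ⌊x⌋₊).filter (fun n => ¬ ∃ p : ℕ, p.Prime ∧
          (p : ℤ) ≡ a [ZMOD (k : ℤ)] ∧ p ∣ n ∧ ¬ p ^ 2 ∣ n)).card : ℝ)
        ≤ C * x * (Real.log x) ^ (-(1 / (Nat.totient k : ℝ))) := by
  have : NeZero k := ⟨hk.ne'⟩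
  have ha : IsUnit (a : ZMod k) :=
    (ZMod.coe_int_isUnit_iff_isCoprime a k).2 (Int.isCoprime_iff_gcd_eq_one.2 hak).symm
  have residueClass_eq : {p : ℕ | (p : ZMod k) = a} = {p : ℕ | (p : ℤ) ≡ a [ZMOD (k : ℤ)]} := by
    ext p
    simp [← ZMod.intCast_eq_intCast_iff]
  obtain ⟨K, hK⟩ : HasLogPowSaving (withoutExactPrime {p : ℕ | (p : ℤ) ≡ a [ZMOD (k : ℤ)]})
      (k.totient : ℝ)⁻¹ :=
    (residueClass_eq ▸ hasPrimeDensityAtLeast_residueClass ha).hasLogPowSaving_withoutExactPrime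
      (by positivity)
  refine ⟨K, fun x hx ↦ ?_⟩
  rw [one_div]
  convert hK x hx
  ext n
  simp only [upTo, mem_filter]
  rfl
end

section
/- There exists an absolute constant λ₀ > 0 such that for all real x ≥ 3 and all real numbers α, the number of positive integers m ≤ x with σ(m)/m = α is at most exp(λ₀ · log x / log log x). -/
open scoped Classical
open Filter Finset

/-!
Split `m ≤ x` as `m = a * b`, where the primes of `a` are less than `y ≈ 5 log x / log log x` and
those of `b` are at least `y`. Rankin's trick with exponent `1 / log log x` bounds the number of
possible `a`. Given `a`, the value `σ(b) / b = β` is known. As `b` has few prime factors, all large,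
every divisor `d` of `b` satisfies `σ(d) < 2 * d`, so `d ∣ σ(d)` only for `d = 1`. Hence either `β`
is an integer and `b = 1`, or the least prime `p` of the denominator of `β` divides `b`. In the
second case, once the exact power of `p` dividing `b` is fixed, the rest of `b` solves a problem of
the same kind with fewer prime factors; so there are at most `2 ^ Ω` possible `b`, where `Ω` bounds
the number of prime factors.
-/

section Multiplicative

open ArithmeticFunction
open scoped ArithmeticFunction.Omega

variable {f : ArithmeticFunction ℕ}

theorem map_mul_div_of_coprime (hf : f.IsMultiplicative) {a b : ℕ} (hab : a.Coprime b) :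
    (f (a * b) : ℚ) / (a * b : ℕ) = f a / a * (f b / b) := by
  rw [hf.map_mul_of_coprime hab, Nat.cast_mul, Nat.cast_mul, mul_div_mul_comm]

theorem sum_Icc_two_pow_sub_le (N : ℕ) : ∑ e ∈ Icc 1 N, 2 ^ (N - e) ≤ 2 ^ N := by
  have hinj : Set.InjOn (N - ·) (Icc 1 N : Set ℕ) := fun a ha b hb hab => by
    simp only [coe_Icc, Set.mem_Icc] at ha hb hab
    omega
  rw [← sum_image (f := (2 ^ ·)) (g := (N - ·)) (by simpa using hinj)]
  exact (Nat.geomSum_lt le_rfl (by simp; omega)).le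

theorem natDiv_den_dvd (a b : ℕ) : ((a : ℚ) / b).den ∣ b := by
  rw [Rat.natCast_div_eq_divInt]
  exact_mod_cast Rat.den_dvd a b

theorem cardFactors_eq_factorization_add {p b : ℕ} (hp : p.Prime) (hb : b ≠ 0) :
    Ω b = b.factorization p + Ω (ordCompl[p] b) := by
  conv_lhs => rw [← Nat.ordProj_mul_ordCompl_eq_self b p]
  rw [cardFactors_mul (Nat.ordProj_pos b p).ne' (Nat.ordCompl_pos p hb).ne',
    cardFactors_apply_prime_pow hp]

theorem injOn_ordCompl (p e : ℕ) :
    Set.InjOn (fun b => ordCompl[p] b) {b | b.factorization p = e} := by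
  intro b hb c hc (hbc : ordCompl[p] b = ordCompl[p] c)
  rw [← Nat.ordProj_mul_ordCompl_eq_self b p, ← Nat.ordProj_mul_ordCompl_eq_self c p, hbc,
    hb.trans hc.symm]

theorem map_div_ordCompl (hf : f.IsMultiplicative) {p b : ℕ} (hp : p.Prime) (hb : b ≠ 0)
    (hfb : (f b : ℚ) / b ≠ 0) :
    (f (ordCompl[p] b) : ℚ) / (ordCompl[p] b : ℕ) =
      f b / b / (f (ordProj[p] b) / (ordProj[p] b : ℕ)) := by
  have hmul := map_mul_div_of_coprime hf ((Nat.coprime_ordCompl hp hb).pow_left (b.factorization p))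
  rw [Nat.ordProj_mul_ordCompl_eq_self] at hmul
  rw [hmul, mul_div_cancel_left₀]
  exact left_ne_zero_of_mul (hmul ▸ hfb)

theorem card_le_two_pow_of_map_div_eq (hf : f.IsMultiplicative) (N : ℕ) (β : ℚ) (F : Finset ℕ)
    (hΩ : ∀ b ∈ F, Ω b ≤ N) (hβ : ∀ b ∈ F, (f b : ℚ) / b = β)
    (hdvd : ∀ b ∈ F, ∀ d, d ∣ b → d ∣ f d → d = 1) : #F ≤ 2 ^ N := by
  induction N using Nat.strong_induction_on generalizing β F with | _ N ih
  have hne (b) (hb : b ∈ F) : b ≠ 0 := by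
    rintro rfl
    exact zero_ne_one (hdvd 0 hb 0 dvd_rfl (by simp))
  by_cases hden : β.den = 1
  · have hone (b) (hb : b ∈ F) : b = 1 := hdvd b hb b dvd_rfl <|
      (Rat.den_div_natCast_eq_one_iff _ _ (hne b hb)).mp (hβ b hb ▸ hden)
    exact (card_le_one.mpr fun a ha b hb => (hone a ha).trans (hone b hb).symm).trans
      Nat.one_le_two_pow
  have hβ0 : β ≠ 0 := by
    rintro rfl
    exact hden rfl
  set p := β.den.minFac
  have hp : p.Prime := Nat.minFac_prime hden
  have hpb (b) (hb : b ∈ F) : p ∣ b :=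
    (Nat.minFac_dvd _).trans (hβ b hb ▸ natDiv_den_dvd (f b) b)
  have hexp (b) (hb : b ∈ F) : b.factorization p ∈ Icc 1 N := by
    have hΩb := hΩ b hb
    rw [cardFactors_eq_factorization_add hp (hne b hb)] at hΩb
    exact mem_Icc.mpr
      ⟨(hp.dvd_iff_one_le_factorization (hne b hb)).mp (hpb b hb), by omega⟩
  have hfiber (e) (he : e ∈ Icc 1 N) : #{b ∈ F | b.factorization p = e} ≤ 2 ^ (N - e) := by
    have hinj : Set.InjOn (fun b => ordCompl[p] b) ({b ∈ F | b.factorization p = e} : Finset ℕ) :=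
      (injOn_ordCompl p e).mono fun b hb => (mem_filter.mp hb).2
    rw [← card_image_of_injOn hinj]
    have he1 := (mem_Icc.mp he).1
    have heN := (mem_Icc.mp he).2
    refine ih (N - e) (by omega) (β / (f (p ^ e) / (p ^ e : ℕ))) _ ?_ ?_ ?_ <;>
      simp only [forall_mem_image, mem_filter, and_imp] <;> rintro b hb rfl
    · have hΩb := hΩ b hb
      rw [cardFactors_eq_factorization_add hp (hne b hb)] at hΩb
      omega
    · rw [map_div_ordCompl hf hp (hne b hb) (hβ b hb ▸ hβ0), hβ b hb]
    · exact fun d hd => hdvd b hb d (hd.trans (Nat.ordCompl_dvd b p))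
  calc #F = ∑ e ∈ Icc 1 N, #{b ∈ F | b.factorization p = e} := card_eq_sum_card_fiberwise hexp
    _ ≤ ∑ e ∈ Icc 1 N, 2 ^ (N - e) := sum_le_sum hfiber
    _ ≤ 2 ^ N := sum_Icc_two_pow_sub_le N

end Multiplicative

section Deficient

open scoped ArithmeticFunction.sigma Nat

theorem sigma_one_mul_totient_le (n : ℕ) : σ 1 n * φ n ≤ n ^ 2 := by
  induction n using Nat.recOnPosPrimePosCoprime with
  | zero => simp
  | one => simp
  | prime_pow p k hp hk =>
    have hgeom : (∑ i ∈ range (k + 1), p ^ i) * (p - 1) = p ^ (k + 1) - 1 := by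
      zify [hp.one_le, Nat.one_le_pow (k + 1) p hp.pos]
      exact geom_sum_mul (p : ℤ) (k + 1)
    rw [ArithmeticFunction.sigma_one_apply_prime_pow hp, Nat.totient_prime_pow hp hk]
    calc (∑ i ∈ range (k + 1), p ^ i) * (p ^ (k - 1) * (p - 1))
        = (p ^ (k + 1) - 1) * p ^ (k - 1) := by rw [← hgeom]; ring
      _ ≤ p ^ (k + 1) * p ^ (k - 1) := by gcongr; omega
      _ = (p ^ k) ^ 2 := by rw [← pow_add, ← pow_mul]; congr 1; omega
  | coprime a b _ _ hab iha ihb =>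
    rw [ArithmeticFunction.isMultiplicative_sigma.map_mul_of_coprime hab, Nat.totient_mul hab,
      mul_mul_mul_comm, mul_pow]
    exact Nat.mul_le_mul iha ihb

theorem lt_two_mul_totient {n y : ℕ} (hn : n ≠ 0) (hy : ∀ p ∈ n.primeFactors, y ≤ p)
    (hcard : 2 * #n.primeFactors < y) : n < 2 * φ n := by
  have hy0 : (0 : ℚ) < y := by exact_mod_cast (Nat.zero_le _).trans_lt hcard
  have hy1 : (y : ℚ)⁻¹ ≤ 1 := inv_le_one_of_one_le₀ (by exact_mod_cast hy0)
  have hprod : 1 - #n.primeFactors * (y : ℚ)⁻¹ ≤ ∏ p ∈ n.primeFactors, (1 - (p : ℚ)⁻¹) := by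
    calc 1 - #n.primeFactors * (y : ℚ)⁻¹
        ≤ (1 - (y : ℚ)⁻¹) ^ #n.primeFactors := by
          simpa [sub_eq_add_neg] using
            one_add_mul_le_pow (a := -(y : ℚ)⁻¹) (by linarith) #n.primeFactors
      _ ≤ ∏ p ∈ n.primeFactors, (1 - (p : ℚ)⁻¹) := by
          rw [← prod_const]
          gcongr with p hp
          exact_mod_cast hy p hp
  have hhalf : #n.primeFactors * (y : ℚ)⁻¹ < 1 / 2 := by
    rw [← div_eq_mul_inv, div_lt_div_iff₀ hy0 two_pos]
    exact_mod_cast (by omega : #n.primeFactors * 2 < 1 * y)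
  have hn0 : (0 : ℚ) < n := by exact_mod_cast hn.bot_lt
  have : (n : ℚ) < 2 * φ n := by
    rw [Nat.totient_eq_mul_prod_factors]
    nlinarith
  exact_mod_cast this

theorem deficient_of_forall_le_primeFactors {n y : ℕ} (hn : n ≠ 0)
    (hy : ∀ p ∈ n.primeFactors, y ≤ p) (hcard : 2 * #n.primeFactors < y) : n.Deficient := by
  have hφ := lt_two_mul_totient hn hy hcard
  have hσ := sigma_one_mul_totient_le n
  have hlt : σ 1 n < 2 * n := by
    by_contra! hle
    nlinarith [Nat.mul_le_mul_right (φ n) hle, hn.bot_lt]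
  rw [ArithmeticFunction.sigma_one_apply, Nat.sum_divisors_eq_sum_properDivisors_add_self] at hlt
  rw [Nat.Deficient]
  omega

theorem eq_one_of_deficient_of_dvd_sigma_one {n : ℕ} (hn : n.Deficient) (hdvd : n ∣ σ 1 n) :
    n = 1 := by
  rw [ArithmeticFunction.sigma_one_apply, Nat.sum_divisors_eq_sum_properDivisors_add_self,
    Nat.dvd_add_self_right] at hdvd
  have hsum := Nat.eq_zero_of_dvd_of_lt hdvd hn
  by_contra hne
  have hmem : 1 ∈ n.properDivisors :=
    Nat.one_mem_properDivisors_iff_one_lt.mpr (by have := hn; unfold Nat.Deficient at this; omega)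
  simpa using sum_eq_zero_iff.mp hsum 1 hmem

end Deficient

section Parts

/-- The `y`-smooth part of `n`: the product, with multiplicity, of its prime factors below `y`. -/
def smoothPart (y n : ℕ) : ℕ := (n.primeFactorsList.filter (· < y)).prod

/-- The `y`-rough part of `n`: the product, with multiplicity, of its prime factors that are at
least `y`. -/
def roughPart (y n : ℕ) : ℕ := (n.primeFactorsList.filter (¬ · < y)).prod

variable {y n : ℕ}

theorem smoothPart_mem_smoothNumbers (y n : ℕ) : smoothPart y n ∈ y.smoothNumbers :=
  Nat.prod_mem_smoothNumbers n y

theorem roughPart_ne_zero (y n : ℕ) : roughPart y n ≠ 0 :=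
  List.prod_ne_zero fun h =>
    (Nat.prime_of_mem_primeFactorsList (List.mem_of_mem_filter h)).ne_zero rfl

theorem smoothPart_mul_roughPart (y : ℕ) (hn : n ≠ 0) : smoothPart y n * roughPart y n = n := by
  rw [smoothPart, roughPart, ← List.prod_append]
  conv_rhs => rw [← Nat.prod_primeFactorsList hn]
  simpa only [decide_not] using (List.filter_append_perm (· < y) n.primeFactorsList).prod_eq

theorem le_of_mem_primeFactors_roughPart {p : ℕ} (hp : p ∈ (roughPart y n).primeFactors) :
    y ≤ p := by
  have hperm := Nat.primeFactorsList_unique (n := roughPart y n) rfl fun q hq =>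
    Nat.prime_of_mem_primeFactorsList (List.mem_of_mem_filter hq)
  simpa using List.of_mem_filter <| hperm.mem_iff.mpr <|
    Nat.mem_primeFactors_iff_mem_primeFactorsList.mp hp

theorem coprime_smoothPart_roughPart (y n : ℕ) : (smoothPart y n).Coprime (roughPart y n) := by
  refine Nat.coprime_of_dvd fun p hp hsmooth hrough => ?_
  have hlt : p < y := Nat.mem_smoothNumbers'.mp (smoothPart_mem_smoothNumbers y n) p hp hsmooth
  have hle : y ≤ p := le_of_mem_primeFactors_roughPart <|
    hp.mem_primeFactors hrough (roughPart_ne_zero y n)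
  omega

end Parts

section Fibers

open ArithmeticFunction
open scoped ArithmeticFunction.sigma ArithmeticFunction.Omega

theorem pow_cardFactors_le {n y : ℕ} (hn : n ≠ 0) (hy : ∀ p ∈ n.primeFactors, y ≤ p) :
    y ^ Ω n ≤ n := by
  conv_rhs => rw [← Nat.prod_primeFactorsList hn]
  rw [cardFactors_apply]
  exact List.pow_card_le_prod _ _ fun p hp =>
    hy p (Nat.mem_primeFactors_iff_mem_primeFactorsList.mpr hp)

theorem card_primeFactors_le_cardFactors (n : ℕ) : #n.primeFactors ≤ Ω n := by
  rw [cardFactors_apply]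
  exact List.toFinset_card_le _

theorem card_le_two_pow_of_sigma_one_div_eq {N y : ℕ} (hN : 2 * N < y) (β : ℚ) (F : Finset ℕ)
    (h0 : ∀ b ∈ F, b ≠ 0) (hy : ∀ b ∈ F, ∀ p ∈ b.primeFactors, y ≤ p) (hΩ : ∀ b ∈ F, Ω b ≤ N)
    (hβ : ∀ b ∈ F, (σ 1 b : ℚ) / b = β) : #F ≤ 2 ^ N := by
  refine card_le_two_pow_of_map_div_eq isMultiplicative_sigma N β F hΩ hβ fun b hb d hd hdσ => ?_
  have hsub : d.primeFactors ⊆ b.primeFactors := Nat.primeFactors_mono hd (h0 b hb)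
  have hcard : #d.primeFactors ≤ N :=
    (card_le_card hsub).trans <| (card_primeFactors_le_cardFactors b).trans (hΩ b hb)
  refine eq_one_of_deficient_of_dvd_sigma_one ?_ hdσ
  exact deficient_of_forall_le_primeFactors (ne_zero_of_dvd_ne_zero (h0 b hb) hd)
    (fun p hp => hy b hb p (hsub hp)) (by omega)

theorem cardFactors_roughPart_le_log {X y n : ℕ} (hy : 1 < y) (hn : n ≠ 0) (hnX : n ≤ X) :
    Ω (roughPart y n) ≤ Nat.log y X := by
  have hpow : y ^ Ω (roughPart y n) ≤ roughPart y n :=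
    pow_cardFactors_le (roughPart_ne_zero y n) fun _ => le_of_mem_primeFactors_roughPart
  have hdvd : roughPart y n ∣ n := ⟨_, (mul_comm _ _).trans (smoothPart_mul_roughPart y hn) |>.symm⟩
  exact Nat.le_log_of_pow_le hy <| hpow.trans <| (Nat.le_of_dvd hn.bot_lt hdvd).trans hnX

theorem sigma_one_roughPart_div (y : ℕ) {n : ℕ} (hn : n ≠ 0) :
    (σ 1 (roughPart y n) : ℚ) / roughPart y n =
      σ 1 n / n / (σ 1 (smoothPart y n) / smoothPart y n) := by
  have hmul := map_mul_div_of_coprime (isMultiplicative_sigma (k := 1))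
    (coprime_smoothPart_roughPart y n)
  have hs0 : smoothPart y n ≠ 0 := (smoothPart_mem_smoothNumbers y n).1
  have hσ : σ 1 (smoothPart y n) ≠ 0 := (sigma_pos 1 _ hs0).ne'
  rw [smoothPart_mul_roughPart y hn] at hmul
  rw [hmul, mul_div_cancel_left₀]
  positivity

theorem card_filter_sigma_one_div_eq_rat_le {X y : ℕ} (hy : 1 < y) (hlog : 2 * Nat.log y X < y)
    (q : ℚ) : #{m ∈ Icc 1 X | (σ 1 m : ℚ) / m = q} ≤
      2 ^ Nat.log y X * #(X.smoothNumbersUpTo y) := by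
  set S := {m ∈ Icc 1 X | (σ 1 m : ℚ) / m = q}
  have hS (m) (hm : m ∈ S) : m ≠ 0 ∧ m ≤ X ∧ (σ 1 m : ℚ) / m = q := by
    simp only [S, mem_filter, mem_Icc] at hm
    exact ⟨by omega, hm.1.2, hm.2⟩
  refine card_le_mul_card_image_of_maps_to (f := smoothPart y) (fun m hm => ?_) _ fun a _ => ?_
  · obtain ⟨hm0, hmX, -⟩ := hS m hm
    have hdvd : smoothPart y m ∣ m := ⟨_, (smoothPart_mul_roughPart y hm0).symm⟩
    exact Nat.mem_smoothNumbersUpTo.mpr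
      ⟨(Nat.le_of_dvd hm0.bot_lt hdvd).trans hmX, smoothPart_mem_smoothNumbers y m⟩
  have hinj : Set.InjOn (roughPart y) ({m ∈ S | smoothPart y m = a} : Finset ℕ) := by
    intro m hm n hn hmn
    obtain ⟨hmS, hma⟩ := mem_filter.mp hm
    obtain ⟨hnS, hna⟩ := mem_filter.mp hn
    rw [← smoothPart_mul_roughPart y (hS m hmS).1, ← smoothPart_mul_roughPart y (hS n hnS).1, hma,
      hna, hmn]
  rw [← card_image_of_injOn hinj]
  refine card_le_two_pow_of_sigma_one_div_eq hlog (q / (σ 1 a / a)) _ ?_ ?_ ?_ ?_ <;>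
    simp only [forall_mem_image, mem_filter, and_imp] <;> rintro m hm rfl <;>
    obtain ⟨hm0, hmX, hq⟩ := hS m hm
  · exact roughPart_ne_zero y m
  · exact fun p => le_of_mem_primeFactors_roughPart
  · exact cardFactors_roughPart_le_log hy hm0 hmX
  · rw [sigma_one_roughPart_div y hm0, hq]

theorem card_filter_sigma_one_div_eq_le {K : Type*} [Field K] [CharZero K] [DecidableEq K]
    {X y : ℕ} (hy : 1 < y) (hlog : 2 * Nat.log y X < y) (α : K) :
    #{m ∈ Icc 1 X | (σ 1 m : K) / m = α} ≤ 2 ^ Nat.log y X * #(X.smoothNumbersUpTo y) := by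
  rcases em (∃ q : ℚ, (q : K) = α) with ⟨q, rfl⟩ | hα
  · convert card_filter_sigma_one_div_eq_rat_le hy hlog q using 4 with m
    simpa using Rat.cast_inj (α := K) (p := (σ 1 m : ℚ) / m) (q := q)
  · rw [filter_false_of_mem fun m _ hm => hα ⟨(σ 1 m : ℚ) / m, by simpa using hm⟩]
    exact Nat.zero_le _

end Fibers

section Smooth

theorem card_smoothNumbersUpTo_le_rpow_mul_prod (y : ℕ) {x s : ℝ} (hx : 0 ≤ x) (hs : 0 < s) :
    (#(⌊x⌋₊.smoothNumbersUpTo y) : ℝ) ≤ x ^ s * ∏ p ∈ y.primesBelow, (1 - (p : ℝ) ^ (-s))⁻¹ := by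
  let f : ℕ →* ℝ :=
    { toFun n := (n : ℝ) ^ (-s)
      map_one' := by simp
      map_mul' a b := by push_cast; exact Real.mul_rpow a.cast_nonneg b.cast_nonneg }
  have hf_nonneg (n : ℕ) : 0 ≤ f n := Real.rpow_nonneg n.cast_nonneg _
  have hf_lt {p : ℕ} (hp : p.Prime) : ‖f p‖ < 1 := by
    rw [Real.norm_of_nonneg (hf_nonneg p)]
    exact Real.rpow_lt_one_of_one_lt_of_neg (by exact_mod_cast hp.one_lt) (neg_lt_zero.mpr hs)
  set T := ⌊x⌋₊.smoothNumbersUpTo y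
  have hsum : ∑ m ∈ T, f m ≤ ∏ p ∈ y.primesBelow, (1 - f p)⁻¹ := by
    have hEuler :=
      (EulerProduct.summable_and_hasSum_smoothNumbers_prod_primesBelow_geometric hf_lt y).2
    rw [← sum_subtype_of_mem (fun m => f m) fun m hm => (Nat.mem_smoothNumbersUpTo.mp hm).2]
    exact sum_le_hasSum _ (fun m _ => hf_nonneg m) hEuler
  have hterm (m) (hm : m ∈ T) : 1 ≤ x ^ s * f m := by
    obtain ⟨hmx, hm0, -⟩ := Nat.mem_smoothNumbersUpTo.mp hm
    have hm_pos : (0 : ℝ) < m := by exact_mod_cast hm0.bot_lt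
    change 1 ≤ x ^ s * (m : ℝ) ^ (-s)
    rw [Real.rpow_neg hm_pos.le, ← div_eq_mul_inv, one_le_div (by positivity)]
    exact Real.rpow_le_rpow hm_pos.le ((Nat.le_floor_iff hx).mp hmx) hs.le
  calc (#T : ℝ) = ∑ m ∈ T, 1 := by simp
    _ ≤ ∑ m ∈ T, x ^ s * f m := sum_le_sum hterm
    _ = x ^ s * ∑ m ∈ T, f m := (mul_sum _ _ _).symm
    _ ≤ x ^ s * ∏ p ∈ y.primesBelow, (1 - f p)⁻¹ := by gcongr

theorem inv_one_sub_exp_neg_le {t : ℝ} (ht : 0 < t) :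
    (1 - Real.exp (-t))⁻¹ ≤ Real.exp (1 / t) := by
  have hexp : Real.exp (-t) ≤ (1 + t)⁻¹ := by
    rw [Real.exp_neg]
    exact inv_anti₀ (by positivity) (by linarith [Real.add_one_le_exp t])
  have hsub : t / (1 + t) ≤ 1 - Real.exp (-t) := by
    have : t / (1 + t) = 1 - (1 + t)⁻¹ := by field_simp; ring
    linarith
  calc (1 - Real.exp (-t))⁻¹ ≤ (t / (1 + t))⁻¹ := inv_anti₀ (by positivity) hsub
    _ = 1 / t + 1 := by field_simp
    _ ≤ Real.exp (1 / t) := Real.add_one_le_exp _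

theorem prod_primesBelow_inv_one_sub_rpow_le (y : ℕ) {s : ℝ} (hs : 0 < s) :
    ∏ p ∈ y.primesBelow, (1 - (p : ℝ) ^ (-s))⁻¹ ≤
      Real.exp ((∑ p ∈ y.primesBelow, 1 / Real.log p) / s) := by
  rw [sum_div, Real.exp_sum]
  refine prod_le_prod (fun p hp => ?_) fun p hp => ?_
  all_goals have hp1 : (1 : ℝ) < p := by exact_mod_cast (Nat.prime_of_mem_primesBelow hp).one_lt
  · exact inv_nonneg.mpr <| sub_nonneg.mpr <|
      Real.rpow_le_one_of_one_le_of_nonpos hp1.le (neg_nonpos.mpr hs.le)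
  · have hlog := Real.log_pos hp1
    have h := inv_one_sub_exp_neg_le (mul_pos hlog hs)
    rwa [← mul_neg, ← Real.rpow_def_of_pos (by linarith), ← div_div] at h

theorem sum_primesBelow_one_div_log_le (y : ℕ) {z : ℝ} (hz : 1 < z) :
    ∑ p ∈ y.primesBelow, 1 / Real.log p ≤ 2 * z + y / Real.log z := by
  have hlogz := Real.log_pos hz
  have hterm (p) (hp : p ∈ y.primesBelow) :
      1 / Real.log p ≤ (if (p : ℝ) < z then 2 else 0) + 1 / Real.log z := by
    have hp2 : (2 : ℝ) ≤ p := by exact_mod_cast (Nat.prime_of_mem_primesBelow hp).two_le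
    split_ifs with hpz
    · have hlogp : 1 / 2 ≤ Real.log p := by
        linarith [Real.log_two_gt_d9, Real.log_le_log two_pos hp2]
      have : 1 / Real.log p ≤ 2 := by
        simpa using one_div_le_one_div_of_le (by norm_num) hlogp
      linarith [one_div_pos.mpr hlogz]
    · rw [zero_add]
      gcongr
      exact not_lt.mp hpz
  have hsmall : (#{p ∈ y.primesBelow | ((p : ℕ) : ℝ) < z} : ℝ) ≤ z := by
    have hsub : {p ∈ y.primesBelow | ((p : ℕ) : ℝ) < z} ⊆ Icc 1 ⌊z⌋₊ := fun p hp => by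
      obtain ⟨hp, hpz⟩ := mem_filter.mp hp
      exact mem_Icc.mpr ⟨(Nat.prime_of_mem_primesBelow hp).one_le, Nat.le_floor hpz.le⟩
    have hcard := card_le_card hsub
    rw [Nat.card_Icc, Nat.add_sub_cancel] at hcard
    exact (Nat.cast_le.mpr hcard).trans (Nat.floor_le (by linarith))
  have hall : (#y.primesBelow : ℝ) ≤ y := by
    exact_mod_cast (card_filter_le _ _).trans (card_range y).le
  calc ∑ p ∈ y.primesBelow, 1 / Real.log p
      ≤ ∑ p ∈ y.primesBelow, ((if (p : ℝ) < z then 2 else 0) + 1 / Real.log z) := sum_le_sum hterm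
    _ = #{p ∈ y.primesBelow | ((p : ℕ) : ℝ) < z} * 2 + #y.primesBelow * (1 / Real.log z) := by
        rw [sum_add_distrib, ← sum_filter, sum_const, sum_const, nsmul_eq_mul, nsmul_eq_mul]
    _ ≤ z * 2 + y * (1 / Real.log z) := by gcongr
    _ = 2 * z + y / Real.log z := by ring

theorem card_smoothNumbersUpTo_le_rpow_mul_exp (y : ℕ) {x s z : ℝ} (hx : 0 ≤ x) (hs : 0 < s)
    (hz : 1 < z) : (#(⌊x⌋₊.smoothNumbersUpTo y) : ℝ) ≤
      x ^ s * Real.exp ((2 * z + y / Real.log z) / s) := by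
  refine (card_smoothNumbersUpTo_le_rpow_mul_prod y hx hs).trans ?_
  grw [prod_primesBelow_inv_one_sub_rpow_le y hs, sum_primesBelow_one_div_log_le y hz]

end Smooth

section Parameters

theorem log_sq_le_eight_mul_sqrt {t : ℝ} (ht : 1 ≤ t) : Real.log t ^ 2 ≤ 8 * √t := by
  have hquad := Real.quadratic_le_exp_of_nonneg (x := Real.log √t)
    (Real.log_nonneg (Real.one_le_sqrt.mpr ht))
  rw [Real.exp_log (by positivity), Real.log_sqrt (by linarith)] at hquad
  nlinarith [Real.log_nonneg ht]

theorem sqrt_mul_log_le {t : ℝ} (ht : 0 ≤ t) : √t * Real.log t ≤ 2 * t := by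
  have hlog : Real.log t ≤ 2 * √t := by
    have := Real.log_le_self (Real.sqrt_nonneg t)
    rw [Real.log_sqrt ht] at this
    linarith
  calc √t * Real.log t ≤ √t * (2 * √t) := by gcongr
    _ = 2 * t := by rw [mul_left_comm, Real.mul_self_sqrt ht]

variable {x : ℝ}

theorem one_lt_log_of_exp_one_lt (hx : Real.exp 1 < x) : 1 < Real.log x :=
  (Real.lt_log_iff_exp_lt ((Real.exp_pos 1).trans hx)).mpr hx

theorem natLog_floor_le {y : ℕ} (hx : Real.exp 1 < x) (hy : √(Real.log x) ≤ y) :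
    (Nat.log y ⌊x⌋₊ : ℝ) ≤ 2 * (Real.log x / Real.log (Real.log x)) := by
  have hL := one_lt_log_of_exp_one_lt hx
  have hx0 : 0 < x := (Real.exp_pos 1).trans hx
  have hx1 : 1 ≤ x := (Real.one_le_exp zero_le_one).trans hx.le
  have hfloor : 0 < ⌊x⌋₊ := Nat.floor_pos.mpr hx1
  have hlogX : Real.log ⌊x⌋₊ ≤ Real.log x :=
    Real.log_le_log (by exact_mod_cast hfloor) (Nat.floor_le hx0.le)
  have hlogy : Real.log (Real.log x) / 2 ≤ Real.log y := by
    rw [← Real.log_sqrt (by linarith)]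
    exact Real.log_le_log (by positivity) hy
  have hu : 0 < Real.log (Real.log x) := Real.log_pos hL
  calc (Nat.log y ⌊x⌋₊ : ℝ) ≤ Real.log ⌊x⌋₊ / Real.log y := Real.natLog_le_logb _ _
    _ ≤ Real.log x / (Real.log (Real.log x) / 2) := by gcongr
    _ = 2 * (Real.log x / Real.log (Real.log x)) := by ring

theorem card_smoothNumbersUpTo_le_exp (hx : Real.exp 1 < x) (y : ℕ) :
    (#(⌊x⌋₊.smoothNumbersUpTo y) : ℝ) ≤
      Real.exp (17 * (Real.log x / Real.log (Real.log x)) + 2 * y) := by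
  have hx0 : 0 < x := (Real.exp_pos 1).trans hx
  have hL := one_lt_log_of_exp_one_lt hx
  set L := Real.log x
  have hu : 0 < Real.log L := Real.log_pos hL
  have hsqrt : √L * Real.log L ≤ 8 * (L / Real.log L) := by
    rw [← mul_div_assoc, le_div_iff₀ hu]
    calc √L * Real.log L * Real.log L = √L * Real.log L ^ 2 := by ring
      _ ≤ √L * (8 * √L) := by grw [log_sq_le_eight_mul_sqrt hL.le]
      _ = 8 * L := by rw [mul_left_comm, Real.mul_self_sqrt (by linarith)]
  calc (#(⌊x⌋₊.smoothNumbersUpTo y) : ℝ)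
      ≤ x ^ (1 / Real.log L) * Real.exp ((2 * √L + y / Real.log √L) / (1 / Real.log L)) :=
        card_smoothNumbersUpTo_le_rpow_mul_exp y hx0.le (one_div_pos.mpr hu)
          (Real.lt_sqrt_of_sq_lt (by linarith))
    _ = Real.exp (L / Real.log L + (2 * (√L * Real.log L) + 2 * y)) := by
        rw [Real.rpow_def_of_pos hx0, Real.log_sqrt (by linarith), ← Real.exp_add, mul_one_div]
        congr 2
        field_simp
    _ ≤ Real.exp (17 * (L / Real.log L) + 2 * y) := Real.exp_le_exp.mpr (by linarith)

theorem two_pow_le_exp (n : ℕ) : (2 : ℝ) ^ n ≤ Real.exp n := by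
  rw [← Real.exp_one_pow]
  exact pow_le_pow_left₀ zero_le_two Real.exp_one_gt_two.le n

end Parameters

theorem wirsing_popularity_bound_general {K : Type*} [Field K] [CharZero K] [DecidableEq K] {x : ℝ}
    (hx : Real.exp 1 < x) (α : K) :
    (#{m ∈ Icc 1 ⌊x⌋₊ | (sigma1 m : K) / m = α} : ℝ) ≤
      Real.exp (31 * (Real.log x / Real.log (Real.log x))) := by
  have hL := one_lt_log_of_exp_one_lt hx
  set U := Real.log x / Real.log (Real.log x) with hU
  have hU1 : 1 ≤ U := (one_le_div (Real.log_pos hL)).mpr (Real.log_le_self (by linarith))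
  obtain ⟨y, hy_ge, hy_le⟩ : ∃ y : ℕ, 5 * U ≤ y ∧ y ≤ 6 * U :=
    ⟨⌈5 * U⌉₊, Nat.le_ceil _, by linarith [Nat.ceil_lt_add_one (show 0 ≤ 5 * U by linarith)]⟩
  have hsqrt : √(Real.log x) ≤ 2 * U := by
    rw [hU, ← mul_div_assoc, le_div_iff₀ (Real.log_pos hL)]
    exact sqrt_mul_log_le (by linarith)
  have hN : (Nat.log y ⌊x⌋₊ : ℝ) ≤ 2 * U := natLog_floor_le hx (by linarith)
  have hNy : 2 * Nat.log y ⌊x⌋₊ < y := by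
    exact_mod_cast (by linarith : 2 * (Nat.log y ⌊x⌋₊ : ℝ) < y)
  have hy : 1 < y := by exact_mod_cast (by linarith : (1 : ℝ) < y)
  calc (#{m ∈ Icc 1 ⌊x⌋₊ | (sigma1 m : K) / m = α} : ℝ)
      ≤ (2 : ℝ) ^ Nat.log y ⌊x⌋₊ * #(⌊x⌋₊.smoothNumbersUpTo y) := by
        exact_mod_cast card_filter_sigma_one_div_eq_le hy hNy α
    _ ≤ Real.exp (2 * U) * Real.exp (17 * U + 2 * y) := by
        grw [two_pow_le_exp, hN, card_smoothNumbersUpTo_le_exp hx y]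
    _ ≤ Real.exp (31 * U) := by
        rw [← Real.exp_add]
        exact Real.exp_le_exp.mpr (by linarith)

theorem wirsing_popularity_bound :
    ∃ lam₀ : ℝ, 0 < lam₀ ∧ ∀ x : ℝ, 3 ≤ x → ∀ α : ℝ,
      (((Finset.Icc 1 ⌊x⌋₊).filter (fun m => (sigma1 m : ℝ) / (m : ℝ) = α)).card : ℝ)
        ≤ Real.exp (lam₀ * Real.log x / Real.log (Real.log x)) := by
  refine ⟨31, by norm_num, fun x hx α => ?_⟩
  rw [mul_div_assoc]
  exact wirsing_popularity_bound_general (Real.exp_one_lt_three.trans_le hx) α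
end

section
/- There exist a constant C > 0, a real number x₀, and for each real x ≥ x₀ a set E(x) of positive integers at most x, such that #E(x) = o(x) as x → ∞, and for every real x ≥ x₀ and every positive integer d ≤ x^{1/(2 log log log x)}, the number of integers n with 1 ≤ n ≤ x, n ∉ E(x), and d ∣ s(n) is at most C·x/d^{0.9}. -/
open scoped Classical
open Filter Finset

open scoped Topology

/-! If a prime `p` divides `n = p * m` exactly once, then `s(n) = p * s(m) + σ(m)`, so `d ∣ s(n)` is
a linear congruence on `p`; it can hold only if `gcd(d, s(m)) ∣ m`, so summing over `m` costs just
a factor `τ(d)`. By Turán's variance bound almost every `n` has an exact prime divisor in a long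
enough doubly exponential window `(2 ^ 2 ^ a, 2 ^ 2 ^ b]`, and such a window has at most `2 ^ b`
dyadic blocks of primes to sum over. Taking `d ≤ 2 ^ 2 ^ a` and `2 ^ b` at most a small power of
`d` makes the total `O(x / d ^ θ)`. Bounded `d` are handled by the primes `p ≡ -1 mod d`: almost
every `n` has one as an exact divisor, so that `d ∣ σ(n)` and `d ∣ s(n)` amounts to `d ∣ n`.
-/

/-! ### Turán's variance bound and exact prime divisors -/

lemma s_add_self (n : ℕ) : s n + n = sigma1 n := by
  obtain rfl | hn := n.eq_zero_or_pos
  · simp [s, sigma1]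
  refine Nat.sub_add_cancel ?_
  rw [sigma1, ArithmeticFunction.sigma_one_apply]
  exact single_le_sum_of_canonicallyOrdered (f := id) (Nat.mem_divisors_self n hn.ne')

lemma sigma1_prime_mul {p m : ℕ} (hp : p.Prime) (hpm : ¬p ∣ m) :
    sigma1 (p * m) = (p + 1) * sigma1 m := by
  rw [sigma1, ArithmeticFunction.isMultiplicative_sigma.map_mul_of_coprime
    ((hp.coprime_iff_not_dvd).2 hpm), ArithmeticFunction.sigma_one_apply, hp.sum_divisors,
    add_comm p, sigma1]

lemma s_prime_mul {p m : ℕ} (hp : p.Prime) (hpm : ¬p ∣ m) :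
    s (p * m) = p * s m + sigma1 m := by
  have h₁ := s_add_self (p * m)
  rw [sigma1_prime_mul hp hpm] at h₁
  have h₂ := s_add_self m
  nlinarith

lemma card_Icc_filter_dvd (N p : ℕ) : #{n ∈ Icc 1 N | p ∣ n} = N / p := by
  convert Nat.Ioc_filter_dvd_card_eq_div N p
  exact Icc_add_one_left_eq_Ioc 0 N

lemma card_filter_dvd_le_div (N p : ℕ) : (#{n ∈ Icc 1 N | p ∣ n} : ℝ) ≤ (N : ℝ) / p :=
  card_Icc_filter_dvd N p ▸ Nat.cast_div_le

lemma div_sub_one_le_card_filter_dvd (N p : ℕ) :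
    (N : ℝ) / p - 1 ≤ #{n ∈ Icc 1 N | p ∣ n} := by
  rw [card_Icc_filter_dvd, ← Nat.floor_div_eq_div (K := ℝ)]
  exact (Nat.sub_one_lt_floor _).le

lemma mul_sum_inv_sub_card_le_sum_card_filter_dvd (S : Finset ℕ) (N : ℕ) :
    N * ∑ p ∈ S, (p : ℝ)⁻¹ - #S ≤ ∑ n ∈ Icc 1 N, (#{p ∈ S | p ∣ n} : ℝ) := by
  calc N * ∑ p ∈ S, (p : ℝ)⁻¹ - #S = ∑ p ∈ S, ((N : ℝ) / p - 1) := by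
        simp [sum_sub_distrib, mul_sum, div_eq_mul_inv]
    _ ≤ ∑ p ∈ S, (#{n ∈ Icc 1 N | p ∣ n} : ℝ) :=
        sum_le_sum fun p _ ↦ div_sub_one_le_card_filter_dvd N p
    _ = ∑ n ∈ Icc 1 N, (#{p ∈ S | p ∣ n} : ℝ) := by
        exact_mod_cast (sum_card_bipartiteAbove_eq_sum_card_bipartiteBelow fun n p ↦ p ∣ n).symm

lemma sum_sq_card_filter_dvd_le {S : Finset ℕ} (hS : (S : Set ℕ).Pairwise Nat.Coprime) (N : ℕ) :
    ∑ n ∈ Icc 1 N, (#{p ∈ S | p ∣ n} : ℝ) ^ 2 ≤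
      N * (∑ p ∈ S, (p : ℝ)⁻¹) ^ 2 + N * ∑ p ∈ S, (p : ℝ)⁻¹ := by
  have pair_count (p) (hp : p ∈ S) (q) (hq : q ∈ S) : (#{n ∈ Icc 1 N | p ∣ n ∧ q ∣ n} : ℝ) ≤
      N * ((p : ℝ)⁻¹ * (q : ℝ)⁻¹) + if p = q then N * (p : ℝ)⁻¹ else 0 := by
    have h := card_filter_dvd_le_div N (p.lcm q)
    simp only [Nat.lcm_dvd_iff] at h
    split_ifs with hpq
    · subst hpq
      rw [Nat.lcm_self, div_eq_mul_inv] at h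
      exact h.trans (le_add_of_nonneg_left (by positivity))
    · rw [(hS hp hq hpq).lcm_eq_mul, Nat.cast_mul, div_eq_mul_inv, mul_inv] at h
      rwa [add_zero]
  calc ∑ n ∈ Icc 1 N, (#{p ∈ S | p ∣ n} : ℝ) ^ 2
      = ∑ p ∈ S, ∑ q ∈ S, (#{n ∈ Icc 1 N | p ∣ n ∧ q ∣ n} : ℝ) := by
        rw [← sum_product' (f := fun p q ↦ (#{n ∈ Icc 1 N | p ∣ n ∧ q ∣ n} : ℝ))]
        simp_rw [sq, ← Nat.cast_mul, ← card_product, ← filter_product]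
        exact_mod_cast sum_card_bipartiteAbove_eq_sum_card_bipartiteBelow
          fun n (z : ℕ × ℕ) ↦ z.1 ∣ n ∧ z.2 ∣ n
    _ ≤ ∑ p ∈ S, ∑ q ∈ S,
          (N * ((p : ℝ)⁻¹ * (q : ℝ)⁻¹) + if p = q then N * (p : ℝ)⁻¹ else 0) :=
        sum_le_sum fun p hp ↦ sum_le_sum fun q hq ↦ pair_count p hp q hq
    _ = N * (∑ p ∈ S, (p : ℝ)⁻¹) ^ 2 + N * ∑ p ∈ S, (p : ℝ)⁻¹ := by
        simp_rw [sum_add_distrib, sq, sum_mul_sum, mul_sum]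
        simp

lemma sum_sq_card_filter_dvd_sub_le {S : Finset ℕ} (hS : (S : Set ℕ).Pairwise Nat.Coprime)
    (N : ℕ) :
    ∑ n ∈ Icc 1 N, ((#{p ∈ S | p ∣ n} : ℝ) - ∑ p ∈ S, (p : ℝ)⁻¹) ^ 2 ≤
      (∑ p ∈ S, (p : ℝ)⁻¹) * (N + 2 * #S) := by
  have first_moment := mul_sum_inv_sub_card_le_sum_card_filter_dvd S N
  have second_moment := sum_sq_card_filter_dvd_le hS N
  set Λ := ∑ p ∈ S, (p : ℝ)⁻¹
  have : 0 ≤ Λ := by positivity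
  calc ∑ n ∈ Icc 1 N, ((#{p ∈ S | p ∣ n} : ℝ) - Λ) ^ 2
      = ∑ n ∈ Icc 1 N, (#{p ∈ S | p ∣ n} : ℝ) ^ 2
          - 2 * Λ * ∑ n ∈ Icc 1 N, (#{p ∈ S | p ∣ n} : ℝ) + N * Λ ^ 2 := by
        simp_rw [sub_sq, mul_right_comm 2 _ Λ, sum_add_distrib, sum_sub_distrib, ← mul_sum]
        simp
    _ ≤ (N * Λ ^ 2 + N * Λ) - 2 * Λ * (N * Λ - #S) + N * Λ ^ 2 := by gcongr
    _ = Λ * (N + 2 * #S) := by ring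

lemma sum_inv_mul_card_filter_forall_not_dvd_le {S : Finset ℕ}
    (hS : (S : Set ℕ).Pairwise Nat.Coprime) (N : ℕ) :
    (∑ p ∈ S, (p : ℝ)⁻¹) * #{n ∈ Icc 1 N | ∀ p ∈ S, ¬p ∣ n} ≤ N + 2 * #S := by
  have variance := sum_sq_card_filter_dvd_sub_le hS N
  set Λ := ∑ p ∈ S, (p : ℝ)⁻¹
  have hΛ : 0 ≤ Λ := by positivity
  have h : Λ * (Λ * #{n ∈ Icc 1 N | ∀ p ∈ S, ¬p ∣ n}) ≤ Λ * (N + 2 * #S) := calc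
    _ = ∑ n ∈ Icc 1 N with ∀ p ∈ S, ¬p ∣ n, ((#{p ∈ S | p ∣ n} : ℝ) - Λ) ^ 2 := by
        rw [sum_congr rfl (g := fun _ ↦ Λ ^ 2), sum_const, nsmul_eq_mul]
        · ring
        · intro n hn
          rw [filter_false_of_mem (mem_filter.1 hn).2]
          simp
    _ ≤ ∑ n ∈ Icc 1 N, ((#{p ∈ S | p ∣ n} : ℝ) - Λ) ^ 2 :=
        sum_le_sum_of_subset_of_nonneg (filter_subset _ _) fun _ _ _ ↦ sq_nonneg _
    _ ≤ _ := variance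
  obtain hΛ | hΛ := hΛ.eq_or_lt
  · rw [← hΛ, zero_mul]
    positivity
  · exact le_of_mul_le_mul_left h hΛ

/-- The `n ≤ N` that have no exact prime divisor in `S`: no `p ∈ S` satisfies `p ∥ n`. These are
the integers that have to be discarded in order to write `n = p * m` with `p ∈ S`, `p ∤ m`. -/
noncomputable def lacksExactDivisor (S : Finset ℕ) (N : ℕ) : Finset ℕ :=
  {n ∈ Icc 1 N | ∀ p ∈ S, p ∣ n → p ^ 2 ∣ n}

lemma exists_eq_mul_of_notMem_lacksExactDivisor {S : Finset ℕ} {n N : ℕ} (hn : n ∈ Icc 1 N)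
    (h : n ∉ lacksExactDivisor S N) : ∃ p ∈ S, ∃ m, n = p * m ∧ ¬p ∣ m := by
  simp only [lacksExactDivisor, mem_filter, not_and, not_forall] at h
  obtain ⟨p, hp, ⟨m, rfl⟩, hpm⟩ := h hn
  exact ⟨p, hp, m, rfl, fun hdvd ↦ hpm (sq p ▸ mul_dvd_mul_left p hdvd)⟩

lemma sum_inv_sq_le_inv {S : Finset ℕ} {y : ℕ} (hy : y ≠ 0) (hS : ∀ p ∈ S, y < p) :
    ∑ p ∈ S, ((p : ℝ) ^ 2)⁻¹ ≤ (y : ℝ)⁻¹ := by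
  set z := max y (S.sup id)
  calc ∑ p ∈ S, ((p : ℝ) ^ 2)⁻¹ ≤ ∑ p ∈ Ioc y z, ((p : ℝ) ^ 2)⁻¹ := by
        refine sum_le_sum_of_subset_of_nonneg (fun p hp ↦ mem_Ioc.2 ⟨hS p hp, ?_⟩)
          fun _ _ _ ↦ by positivity
        exact (le_sup (f := id) hp).trans (le_max_right _ _)
    _ ≤ (y : ℝ)⁻¹ - (z : ℝ)⁻¹ := sum_Ioc_inv_sq_le_sub hy (le_max_left _ _)
    _ ≤ (y : ℝ)⁻¹ := sub_le_self _ (by positivity)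

lemma card_lacksExactDivisor_le {S : Finset ℕ} (hprime : ∀ p ∈ S, p.Prime) {y : ℕ} (hy : y ≠ 0)
    (hS : ∀ p ∈ S, y < p) {L : ℝ} (hL₀ : 0 < L) (hL : L ≤ ∑ p ∈ S, (p : ℝ)⁻¹) (N : ℕ) :
    (#(lacksExactDivisor S N) : ℝ) ≤ (N + 2 * #S) / L + N / y := by
  have hsub : lacksExactDivisor S N ⊆
      {n ∈ Icc 1 N | ∀ p ∈ S, ¬p ∣ n} ∪ S.biUnion fun p ↦ {n ∈ Icc 1 N | p ^ 2 ∣ n} := by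
    intro n hn
    simp only [lacksExactDivisor, mem_filter, mem_union, mem_biUnion] at hn ⊢
    by_contra! h
    obtain ⟨p, hp, hpn⟩ := h.1 hn.1
    exact h.2 p hp hn.1 (hn.2 p hp hpn)
  have hnone : (#{n ∈ Icc 1 N | ∀ p ∈ S, ¬p ∣ n} : ℝ) ≤ (N + 2 * #S) / L := by
    rw [le_div_iff₀' hL₀]
    refine le_trans (by gcongr) (sum_inv_mul_card_filter_forall_not_dvd_le ?_ N)
    exact fun p hp q hq ↦ (Nat.coprime_primes (hprime p hp) (hprime q hq)).2
  have hsq : (#(S.biUnion fun p ↦ {n ∈ Icc 1 N | p ^ 2 ∣ n}) : ℝ) ≤ N / y := calc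
    _ ≤ ∑ p ∈ S, (#{n ∈ Icc 1 N | p ^ 2 ∣ n} : ℝ) := mod_cast card_biUnion_le
    _ ≤ ∑ p ∈ S, N * ((p : ℝ) ^ 2)⁻¹ := by
        refine sum_le_sum fun p _ ↦ (card_filter_dvd_le_div N (p ^ 2)).trans_eq ?_
        rw [Nat.cast_pow, div_eq_mul_inv]
    _ ≤ N / y := by
        rw [← mul_sum, div_eq_mul_inv]
        gcongr
        exact sum_inv_sq_le_inv hy hS
  calc (#(lacksExactDivisor S N) : ℝ) ≤ _ := mod_cast (card_le_card hsub).trans (card_union_le _ _)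
    _ ≤ (N + 2 * #S) / L + N / y := add_le_add hnone hsq

/-! ### Cofactor congruences -/

lemma card_Ioc_filter_modEq_le {a b : ℕ} (hab : a ≤ b) {r : ℕ} (hr : 0 < r) (v : ℕ) :
    (#{x ∈ Ioc a b | x ≡ v [MOD r]} : ℝ) ≤ ((b : ℝ) - a) / r + 1 := by
  have hcard : (#{x ∈ Ioc a b | x ≡ v [MOD r]} : ℤ) =
      max (⌊((b : ℚ) - v) / r⌋ - ⌊((a : ℚ) - v) / r⌋) 0 := by
    convert Nat.Ioc_filter_modEq_card a b hr v
  have hupper := Int.floor_le (((b : ℚ) - v) / r)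
  have hlower := Int.lt_floor_add_one (((a : ℚ) - v) / r)
  have hlen : ((b : ℚ) - a) / r = (b - v) / r - (a - v) / r := by ring
  have hlen₀ : 0 ≤ ((b : ℚ) - a) / r :=
    div_nonneg (sub_nonneg.2 (mod_cast hab)) (Nat.cast_nonneg r)
  have h : (#{x ∈ Ioc a b | x ≡ v [MOD r]} : ℚ) ≤ ((b : ℚ) - a) / r + 1 := by
    rw [← Int.cast_natCast (R := ℚ), hcard, Int.cast_max]
    push_cast
    exact max_le (by linarith) (by linarith)
  simpa using (Rat.cast_le (K := ℝ)).2 h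

lemma card_Ioc_filter_dvd_mul_add_le {d X : ℕ} (hd : 0 < d) (hdX : d ≤ X) (a b : ℕ) :
    (#{p ∈ Ioc X (2 * X) | d ∣ p * a + b} : ℝ) ≤ 2 * X * d.gcd a / d := by
  obtain h | ⟨p₀, hp₀⟩ := {p ∈ Ioc X (2 * X) | d ∣ p * a + b}.eq_empty_or_nonempty
  · rw [h, card_empty, Nat.cast_zero]
    positivity
  have hg : 0 < d.gcd a := Nat.gcd_pos_of_pos_left a hd
  have hgd : d.gcd a ∣ d := Nat.gcd_dvd_left d a
  have hsub : {p ∈ Ioc X (2 * X) | d ∣ p * a + b} ⊆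
      {p ∈ Ioc X (2 * X) | p ≡ p₀ [MOD d / d.gcd a]} := by
    refine monotone_filter_right _ fun p _ hp ↦ Nat.ModEq.cancel_right_div_gcd hd ?_
    have hmod : p * a + b ≡ p₀ * a + b [MOD d] :=
      (Nat.modEq_zero_iff_dvd.2 hp).trans (Nat.modEq_zero_iff_dvd.2 (mem_filter.1 hp₀).2).symm
    exact hmod.add_right_cancel'
  calc (#{p ∈ Ioc X (2 * X) | d ∣ p * a + b} : ℝ)
      ≤ #{p ∈ Ioc X (2 * X) | p ≡ p₀ [MOD d / d.gcd a]} := mod_cast card_le_card hsub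
    _ ≤ ((2 * X : ℕ) - X : ℝ) / (d / d.gcd a : ℕ) + 1 :=
        card_Ioc_filter_modEq_le (by lia) (Nat.div_pos (Nat.le_of_dvd hd hgd) hg) p₀
    _ = (X * d.gcd a + d) / d := by
        rw [Nat.cast_div hgd (by positivity)]
        push_cast
        field_simp
        ring
    _ ≤ 2 * X * d.gcd a / d := by
        gcongr
        have : X ≤ X * d.gcd a := Nat.le_mul_of_pos_right X hg
        norm_cast
        lia

lemma card_Ioc_filter_dvd_mul_s_add_sigma1_le {d X : ℕ} (hd : 0 < d) (hdX : d ≤ X) (m : ℕ) :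
    (#{p ∈ Ioc X (2 * X) | d ∣ p * s m + sigma1 m} : ℝ) ≤
      ∑ g ∈ d.divisors with g ∣ m, (2 * X * g / d : ℝ) := by
  obtain h | ⟨p₀, hp₀⟩ := {p ∈ Ioc X (2 * X) | d ∣ p * s m + sigma1 m}.eq_empty_or_nonempty
  · rw [h, card_empty, Nat.cast_zero]
    positivity
  -- Divisibility forces `gcd(d, s(m)) ∣ σ(m)`, hence `gcd(d, s(m)) ∣ σ(m) - s(m) = m`.
  have hgs : d.gcd (s m) ∣ s m := Nat.gcd_dvd_right d (s m)
  have hgσ : d.gcd (s m) ∣ sigma1 m :=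
    (Nat.dvd_add_right (hgs.mul_left p₀)).1 ((Nat.gcd_dvd_left d _).trans (mem_filter.1 hp₀).2)
  have hgm : d.gcd (s m) ∣ m := (Nat.dvd_add_right hgs).1 (s_add_self m ▸ hgσ)
  refine (card_Ioc_filter_dvd_mul_add_le hd hdX _ _).trans ?_
  refine single_le_sum (f := fun g : ℕ ↦ (2 * X * g / d : ℝ)) (fun _ _ ↦ by positivity) ?_
  exact mem_filter.2 ⟨Nat.mem_divisors.2 ⟨Nat.gcd_dvd_left d _, hd.ne'⟩, hgm⟩

lemma sum_Ioc_card_filter_dvd_mul_s_add_sigma1_le {d X : ℕ} (hd : 0 < d) (hdX : d ≤ X) (N : ℕ) :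
    ∑ p ∈ Ioc X (2 * X), (#{m ∈ Icc 1 (N / p) | d ∣ p * s m + sigma1 m} : ℝ) ≤
      2 * N * #d.divisors / d := by
  have hX : 0 < X := hd.trans_le hdX
  calc ∑ p ∈ Ioc X (2 * X), (#{m ∈ Icc 1 (N / p) | d ∣ p * s m + sigma1 m} : ℝ)
      ≤ ∑ p ∈ Ioc X (2 * X), (#{m ∈ Icc 1 (N / X) | d ∣ p * s m + sigma1 m} : ℝ) := by
        refine sum_le_sum fun p hp ↦ ?_
        have := Nat.div_le_div_left (a := N) (mem_Ioc.1 hp).1.le hX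
        gcongr
    _ = ∑ m ∈ Icc 1 (N / X), (#{p ∈ Ioc X (2 * X) | d ∣ p * s m + sigma1 m} : ℝ) := by
        exact_mod_cast sum_card_bipartiteAbove_eq_sum_card_bipartiteBelow
          fun p m ↦ d ∣ p * s m + sigma1 m
    _ ≤ ∑ m ∈ Icc 1 (N / X), ∑ g ∈ d.divisors with g ∣ m, (2 * X * g / d : ℝ) :=
        sum_le_sum fun m _ ↦ card_Ioc_filter_dvd_mul_s_add_sigma1_le hd hdX m
    _ = ∑ g ∈ d.divisors, #{m ∈ Icc 1 (N / X) | g ∣ m} * (2 * X * g / d : ℝ) := by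
        simp_rw [sum_filter]
        rw [sum_comm]
        simp_rw [← sum_filter, sum_const, nsmul_eq_mul]
    _ ≤ ∑ g ∈ d.divisors, (2 * N / d : ℝ) := by
        refine sum_le_sum fun g hg ↦ ?_
        have hg₀ : 0 < g := Nat.pos_of_mem_divisors hg
        calc #{m ∈ Icc 1 (N / X) | g ∣ m} * (2 * X * g / d : ℝ)
            ≤ (N / X : ℕ) / g * (2 * X * g / d) := by
              gcongr
              exact card_filter_dvd_le_div _ _
          _ ≤ N / X / g * (2 * X * g / d) := by
              gcongr
              exact Nat.cast_div_le
          _ = 2 * N / d := by field_simp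
    _ = 2 * N * #d.divisors / d := by
        rw [sum_const, nsmul_eq_mul]
        ring

lemma sum_Ioc_eq_sum_Ico_sum_Ioc {u : ℕ → ℕ} (hu : Monotone u) {M : Type*} [AddCommMonoid M]
    (f : ℕ → M) (A B : ℕ) :
    ∑ p ∈ Ioc (u A) (u B), f p = ∑ k ∈ Ico A B, ∑ p ∈ Ioc (u k) (u (k + 1)), f p := by
  obtain hBA | hAB := le_total B A
  · rw [Ioc_eq_empty_of_le (hu hBA), Ico_eq_empty_of_le hBA, sum_empty, sum_empty]
  induction B, hAB using Nat.le_induction with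
  | base => simp
  | succ B hAB ih =>
    rw [sum_Ico_succ_top hAB, ← ih, sum_Ioc_consecutive _ (hu hAB) (hu B.le_succ)]

lemma card_filter_notMem_lacksExactDivisor_le {S : Finset ℕ} (hprime : ∀ p ∈ S, p.Prime)
    (d N : ℕ) :
    #{n ∈ Icc 1 N | n ∉ lacksExactDivisor S N ∧ d ∣ s n} ≤
      ∑ p ∈ S, #{m ∈ Icc 1 (N / p) | d ∣ p * s m + sigma1 m} := by
  have hsub : {n ∈ Icc 1 N | n ∉ lacksExactDivisor S N ∧ d ∣ s n} ⊆
      S.biUnion fun p ↦ {m ∈ Icc 1 (N / p) | d ∣ p * s m + sigma1 m}.image (p * ·) := by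
    intro n hn
    obtain ⟨hnN, hexact, hdn⟩ := mem_filter.1 hn
    obtain ⟨p, hp, m, rfl, hpm⟩ := exists_eq_mul_of_notMem_lacksExactDivisor hnN hexact
    have hp₀ := (hprime p hp).pos
    rw [s_prime_mul (hprime p hp) hpm] at hdn
    refine mem_biUnion.2 ⟨p, hp, mem_image_of_mem _ (mem_filter.2 ⟨mem_Icc.2 ⟨?_, ?_⟩, hdn⟩)⟩
    · exact Nat.pos_of_mul_pos_left (mem_Icc.1 hnN).1
    · exact (Nat.le_div_iff_mul_le hp₀).2 (mul_comm p m ▸ (mem_Icc.1 hnN).2)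
  exact (card_le_card hsub).trans (card_biUnion_le.trans (sum_le_sum fun p _ ↦ card_image_le))

lemma card_filter_notMem_lacksExactDivisor_le_of_subset_Ioc {S : Finset ℕ}
    (hprime : ∀ p ∈ S, p.Prime) {A B : ℕ} (hS : S ⊆ Ioc (2 ^ A) (2 ^ B)) {d : ℕ} (hd : 0 < d)
    (hdA : d ≤ 2 ^ A) (N : ℕ) :
    (#{n ∈ Icc 1 N | n ∉ lacksExactDivisor S N ∧ d ∣ s n} : ℝ) ≤
      B * (2 * N * #d.divisors / d) := by
  calc (#{n ∈ Icc 1 N | n ∉ lacksExactDivisor S N ∧ d ∣ s n} : ℝ)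
      ≤ ∑ p ∈ S, (#{m ∈ Icc 1 (N / p) | d ∣ p * s m + sigma1 m} : ℝ) :=
        mod_cast card_filter_notMem_lacksExactDivisor_le hprime d N
    _ ≤ ∑ p ∈ Ioc (2 ^ A) (2 ^ B), (#{m ∈ Icc 1 (N / p) | d ∣ p * s m + sigma1 m} : ℝ) :=
        sum_le_sum_of_subset_of_nonneg hS fun _ _ _ ↦ by positivity
    _ = ∑ k ∈ Ico A B, ∑ p ∈ Ioc (2 ^ k) (2 ^ (k + 1)),
          (#{m ∈ Icc 1 (N / p) | d ∣ p * s m + sigma1 m} : ℝ) :=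
        sum_Ioc_eq_sum_Ico_sum_Ioc (pow_right_mono₀ one_le_two) _ A B
    _ ≤ ∑ k ∈ Ico A B, (2 * N * #d.divisors / d : ℝ) := by
        refine sum_le_sum fun k hk ↦ ?_
        have hdk : d ≤ 2 ^ k := hdA.trans (Nat.pow_le_pow_right two_pos (mem_Ico.1 hk).1)
        rw [pow_succ']
        exact sum_Ioc_card_filter_dvd_mul_s_add_sigma1_le hd hdk N
    _ ≤ B * (2 * N * #d.divisors / d) := by
        rw [sum_const, nsmul_eq_mul, Nat.card_Ico]
        gcongr
        lia

/-! ### The divisor bound -/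

lemma natCast_rpow_eq_prod_primeFactors {n : ℕ} (hn : n ≠ 0) (ε : ℝ) :
    (n : ℝ) ^ ε = ∏ p ∈ n.primeFactors, ((p : ℝ) ^ ε) ^ n.factorization p := by
  conv_lhs => rw [← Nat.prod_factorization_pow_eq_self hn]
  rw [Nat.prod_factorization_eq_prod_primeFactors, Nat.cast_prod,
    ← Real.finsetProd_rpow _ _ fun _ _ ↦ Nat.cast_nonneg _]
  refine prod_congr rfl fun p _ ↦ ?_
  rw [Nat.cast_pow, ← Real.rpow_natCast_mul (Nat.cast_nonneg p), mul_comm,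
    Real.rpow_mul_natCast (Nat.cast_nonneg p)]

lemma add_one_le_mul_rpow_pow {ε : ℝ} (hε : 0 < ε) {p : ℕ} (hp : 2 ≤ p) (e : ℕ) :
    (e + 1 : ℝ) ≤ (1 + (2 ^ ε - 1)⁻¹) * ((p : ℝ) ^ ε) ^ e := by
  have hb : 0 < (2 : ℝ) ^ ε - 1 := sub_pos.2 (Real.one_lt_rpow one_lt_two hε)
  set b := (2 : ℝ) ^ ε - 1 with hbdef
  calc (e + 1 : ℝ) ≤ e + 1 + (b⁻¹ + e * b) := le_add_of_nonneg_right (by positivity)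
    _ = (1 + b⁻¹) * (1 + e * b) := by field_simp; ring
    _ ≤ (1 + b⁻¹) * (1 + b) ^ e := by
        gcongr
        exact one_add_mul_le_pow (by linarith) e
    _ ≤ (1 + b⁻¹) * ((p : ℝ) ^ ε) ^ e := by
        rw [hbdef, add_sub_cancel]
        gcongr
        exact_mod_cast hp

lemma exists_card_divisors_le_rpow {ε : ℝ} (hε : 0 < ε) :
    ∃ C : ℝ, 0 < C ∧ ∀ n : ℕ, (#n.divisors : ℝ) ≤ C * (n : ℝ) ^ ε := by
  have hb : 0 < (2 : ℝ) ^ ε - 1 := sub_pos.2 (Real.one_lt_rpow one_lt_two hε)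
  set K := 1 + ((2 : ℝ) ^ ε - 1)⁻¹
  have hK₁ : 1 ≤ K := le_add_of_nonneg_right (inv_pos.2 hb).le
  set M := ⌈(2 : ℝ) ^ ε⁻¹⌉₊
  -- Only the primes `p < M`, that is `p ^ ε < 2`, cost a constant factor.
  have local_bound (p : ℕ) (hp : p.Prime) (e : ℕ) :
      (e + 1 : ℝ) ≤ (if p < M then K else 1) * ((p : ℝ) ^ ε) ^ e := by
    split_ifs with hpM
    · exact add_one_le_mul_rpow_pow hε hp.two_le e
    · have h_two_le : (2 : ℝ) ≤ (p : ℝ) ^ ε :=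
        (Real.rpow_inv_le_iff_of_pos zero_le_two p.cast_nonneg hε).1
          ((Nat.le_ceil _).trans (mod_cast not_lt.1 hpM))
      calc (e + 1 : ℝ) ≤ 2 ^ e := mod_cast Nat.lt_two_pow_self
        _ ≤ 1 * ((p : ℝ) ^ ε) ^ e := by rw [one_mul]; gcongr
  refine ⟨K ^ M, by positivity, fun n ↦ ?_⟩
  obtain rfl | hn := eq_or_ne n 0
  · simp [hε.ne']
  calc (#n.divisors : ℝ) = ∏ p ∈ n.primeFactors, (n.factorization p + 1 : ℝ) := by
        rw [Nat.card_divisors hn]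
        push_cast
        rfl
    _ ≤ ∏ p ∈ n.primeFactors, (if p < M then K else 1) * ((p : ℝ) ^ ε) ^ n.factorization p :=
        prod_le_prod (fun _ _ ↦ by positivity) fun p hp ↦
          local_bound p (Nat.prime_of_mem_primeFactors hp) _
    _ = K ^ #{p ∈ n.primeFactors | p < M} * (n : ℝ) ^ ε := by
        rw [prod_mul_distrib, ← natCast_rpow_eq_prod_primeFactors hn, ← prod_filter, prod_const]
    _ ≤ K ^ M * (n : ℝ) ^ ε := by
        gcongr
        calc #{p ∈ n.primeFactors | p < M} ≤ #(range M) :=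
              card_le_card fun p hp ↦ mem_range.2 (mem_filter.1 hp).2
          _ = M := card_range M

/-! ### Reciprocals of the primes congruent to `-1` modulo `d` -/

open ArithmeticFunction ArithmeticFunction.vonMangoldt in
lemma residueClass_div_rpow_mul_le {q : ℕ} (a : ZMod q) {δ : ℝ} (hδ₀ : 0 < δ) (hδ₁ : δ ≤ 1)
    (n : ℕ) :
    residueClass a n / (n : ℝ) ^ (1 + δ) * δ ≤
      (if n.Prime then 0 else residueClass a n) / n +
        if n.Prime ∧ (n : ZMod q) = a then (n : ℝ)⁻¹ else 0 := by
  obtain rfl | hn := n.eq_zero_or_pos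
  · simp
  have hΛ := residueClass_nonneg a n
  have hn' : (1 : ℝ) ≤ n := mod_cast hn
  rw [Real.rpow_add (by positivity), Real.rpow_one]
  by_cases hp : n.Prime
  · by_cases ha : (n : ZMod q) = a
    · have hlog : Real.log n * δ ≤ (n : ℝ) ^ δ :=
        (le_div_iff₀ hδ₀).1 (Real.log_le_rpow_div n.cast_nonneg hδ₀)
      have hΛ_eq : residueClass a n = Real.log n :=
        (Set.indicator_of_mem (by exact ha) _).trans (vonMangoldt_apply_prime hp)
      simp only [hp, ha, and_self, if_true, zero_div, zero_add, hΛ_eq]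
      calc Real.log n / (n * (n : ℝ) ^ δ) * δ = Real.log n * δ / (n : ℝ) ^ δ * (n : ℝ)⁻¹ := by
            field_simp
        _ ≤ 1 * (n : ℝ)⁻¹ := by
            gcongr
            exact div_le_one_of_le₀ hlog (by positivity)
        _ = (n : ℝ)⁻¹ := one_mul _
    · simp [ha]
  · simp only [hp, false_and, if_false, add_zero]
    calc residueClass a n / (n * (n : ℝ) ^ δ) * δ ≤ residueClass a n / (n * 1) * 1 := by
          gcongr
          exact Real.one_le_rpow hn' hδ₀.le
      _ = residueClass a n / n := by rw [mul_one, mul_one]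

open ArithmeticFunction.vonMangoldt in
lemma exists_inv_totient_sub_mul_le_tsum_residueClass {q : ℕ} [NeZero q] {a : ZMod q}
    (ha : IsUnit a) :
    ∃ C : ℝ, ∀ δ : ℝ, 0 < δ → δ ≤ 1 →
      (q.totient : ℝ)⁻¹ - C * δ ≤ ∑' n : ℕ, residueClass a n / (n : ℝ) ^ (1 + δ) * δ := by
  obtain ⟨C, hC⟩ := LSeries_residueClass_lower_bound ha
  refine ⟨C, fun δ hδ₀ hδ₁ ↦ ?_⟩
  have h := hC (x := 1 + δ) ⟨by linarith, by linarith⟩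
  rw [tsum_mul_right]
  calc (q.totient : ℝ)⁻¹ - C * δ = ((q.totient : ℝ)⁻¹ / (1 + δ - 1) - C) * δ := by
        rw [add_sub_cancel_left, sub_mul, div_mul_cancel₀ _ hδ₀.ne']
    _ ≤ (∑' n : ℕ, residueClass a n / (n : ℝ) ^ (1 + δ)) * δ := by gcongr

open ArithmeticFunction.vonMangoldt in
lemma not_summable_inv_prime_and_eq_mod {q : ℕ} [NeZero q] {a : ZMod q} (ha : IsUnit a) :
    ¬Summable fun n : ℕ ↦ if n.Prime ∧ (n : ZMod q) = a then (n : ℝ)⁻¹ else 0 := by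
  intro hsum
  -- By dominated convergence `δ * ∑ Λ(n) / n ^ (1 + δ)`, summed over the residue class, tends to
  -- `0` as `δ → 0⁺`, whereas its limit should be `1 / φ(q)`.
  have hδ : Tendsto (fun δ : ℝ ↦ δ) (𝓝[>] 0) (𝓝 0) := tendsto_id.mono_left inf_le_left
  have hlim : Tendsto (fun δ : ℝ ↦ ∑' n : ℕ, residueClass a n / (n : ℝ) ^ (1 + δ) * δ)
      (𝓝[>] 0) (𝓝 (∑' _ : ℕ, 0)) := by
    refine tendsto_tsum_of_dominated_convergence
      ((summable_residueClass_non_primes_div a).add hsum) (fun n ↦ ?_) ?_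
    · obtain rfl | hn := eq_or_ne n 0
      · simp
      have hrpow : Tendsto (fun δ : ℝ ↦ (n : ℝ) ^ (1 + δ)) (𝓝[>] 0) (𝓝 ((n : ℝ) ^ (1 + 0 : ℝ))) :=
        tendsto_const_nhds.rpow (tendsto_const_nhds.add hδ) (.inl (Nat.cast_ne_zero.2 hn))
      simpa using (tendsto_const_nhds.div hrpow (by positivity)).mul hδ
    · filter_upwards [Ioc_mem_nhdsGT one_pos] with δ hδ n
      rw [Real.norm_of_nonneg (by have := residueClass_nonneg a n; have := hδ.1; positivity)]
      exact residueClass_div_rpow_mul_le a hδ.1 hδ.2 n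
  obtain ⟨C, hC⟩ := exists_inv_totient_sub_mul_le_tsum_residueClass ha
  have hlower : ∀ᶠ δ : ℝ in 𝓝[>] 0, (q.totient : ℝ)⁻¹ - C * δ ≤
      ∑' n : ℕ, residueClass a n / (n : ℝ) ^ (1 + δ) * δ :=
    eventually_of_mem (Ioc_mem_nhdsGT one_pos) fun δ hδ ↦ hC δ hδ.1 hδ.2
  have hlower_lim : Tendsto (fun δ : ℝ ↦ (q.totient : ℝ)⁻¹ - C * δ) (𝓝[>] 0)
      (𝓝 ((q.totient : ℝ)⁻¹ - C * 0)) := tendsto_const_nhds.sub (hδ.const_mul C)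
  have h := le_of_tendsto_of_tendsto hlower_lim hlim hlower
  rw [tsum_zero, mul_zero, sub_zero, inv_nonpos] at h
  exact absurd (q.totient_pos.2 (NeZero.pos q)) (by simpa using h)

lemma exists_primes_dvd_add_one_sum_inv_ge {d : ℕ} (hd : d ≠ 0) (y : ℕ) (M : ℝ) :
    ∃ S : Finset ℕ, (∀ p ∈ S, p.Prime ∧ d ∣ p + 1 ∧ y < p) ∧ M ≤ ∑ p ∈ S, (p : ℝ)⁻¹ := by
  have : NeZero d := ⟨hd⟩
  set f : ℕ → ℝ := fun n ↦ if n.Prime ∧ (n : ZMod d) = -1 then (n : ℝ)⁻¹ else 0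
  have hf₀ (n) : 0 ≤ f n := by positivity
  have hf : ¬Summable f := not_summable_inv_prime_and_eq_mod isUnit_one.neg
  have hf_tail := mt (summable_nat_add_iff (y + 1)).1 hf
  rw [not_summable_iff_tendsto_nat_atTop_of_nonneg fun n ↦ hf₀ _] at hf_tail
  obtain ⟨N, hN⟩ := (hf_tail.eventually_ge_atTop M).exists
  refine ⟨{p ∈ Ico (y + 1) (y + 1 + N) | p.Prime ∧ (p : ZMod d) = -1}, fun p hp ↦ ?_, ?_⟩
  · obtain ⟨hpy, hprime, hmod⟩ := mem_filter.1 hp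
    refine ⟨hprime, (ZMod.natCast_eq_zero_iff _ _).1 ?_, (mem_Ico.1 hpy).1⟩
    rw [Nat.cast_add_one, hmod, neg_add_cancel]
  · rw [sum_filter, sum_Ico_eq_sum_range, add_tsub_cancel_left]
    simpa only [add_comm] using hN

/-! ### Bounded divisors -/

lemma eventually_card_filter_not_dvd_sigma1_le {d : ℕ} (hd : d ≠ 0) {ε : ℝ} (hε : 0 < ε) :
    ∀ᶠ N : ℕ in atTop, (#{n ∈ Icc 1 N | ¬d ∣ sigma1 n} : ℝ) ≤ ε * N := by
  obtain ⟨y, hy⟩ := exists_nat_gt (2 / ε)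
  have hy₀ : (0 : ℝ) < y := (by positivity : 0 < 2 / ε).trans hy
  obtain ⟨S, hS, hsum⟩ := exists_primes_dvd_add_one_sum_inv_ge hd y (6 / ε)
  filter_upwards [eventually_ge_atTop #S] with N hN
  have hsub : {n ∈ Icc 1 N | ¬d ∣ sigma1 n} ⊆ lacksExactDivisor S N := by
    intro n hn
    obtain ⟨hnN, hdn⟩ := mem_filter.1 hn
    contrapose! hdn
    obtain ⟨p, hp, m, rfl, hpm⟩ := exists_eq_mul_of_notMem_lacksExactDivisor hnN hdn
    rw [sigma1_prime_mul (hS p hp).1 hpm]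
    exact (hS p hp).2.1.mul_right _
  calc (#{n ∈ Icc 1 N | ¬d ∣ sigma1 n} : ℝ) ≤ #(lacksExactDivisor S N) := by gcongr
    _ ≤ (N + 2 * #S) / (6 / ε) + N / y :=
        card_lacksExactDivisor_le (fun p hp ↦ (hS p hp).1) (Nat.cast_ne_zero.1 hy₀.ne')
          (fun p hp ↦ (hS p hp).2.2) (by positivity) hsum N
    _ ≤ (N + 2 * N) / (6 / ε) + N / (2 / ε) := by gcongr
    _ = ε * N := by field_simp; ring

lemma eventually_card_filter_dvd_s_le {d : ℕ} (hd : d ≠ 0) :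
    ∀ᶠ N : ℕ in atTop, (#{n ∈ Icc 1 N | d ∣ s n} : ℝ) ≤ 2 * N / d := by
  filter_upwards [eventually_card_filter_not_dvd_sigma1_le hd (ε := (d : ℝ)⁻¹) (by positivity)]
    with N hN
  have hsub : {n ∈ Icc 1 N | d ∣ s n} ⊆
      {n ∈ Icc 1 N | d ∣ n} ∪ {n ∈ Icc 1 N | ¬d ∣ sigma1 n} := by
    intro n hn
    obtain ⟨hnN, hdn⟩ := mem_filter.1 hn
    simp only [mem_union, mem_filter, hnN, true_and, ← s_add_self, Nat.dvd_add_right hdn]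
    exact em _
  calc (#{n ∈ Icc 1 N | d ∣ s n} : ℝ)
      ≤ #{n ∈ Icc 1 N | d ∣ n} + #{n ∈ Icc 1 N | ¬d ∣ sigma1 n} :=
        mod_cast (card_le_card hsub).trans (card_union_le _ _)
    _ ≤ N / d + (d : ℝ)⁻¹ * N := add_le_add (card_filter_dvd_le_div N d) hN
    _ = 2 * N / d := by ring

/-! ### Reciprocals of the primes in a window -/

lemma eventually_mul_le_theta {c : ℝ} (hc : c < Real.log 2) :
    ∀ᶠ n : ℕ in atTop, c * n ≤ Chebyshev.theta n := by
  obtain ⟨C, hC⟩ := Chebyshev.psi_sub_theta_le_mul_sqrt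
  have hsqrt : Tendsto (fun n : ℕ ↦ (Real.log 2 - c) * √n) atTop atTop :=
    (Real.tendsto_sqrt_atTop.comp tendsto_natCast_atTop_atTop).const_mul_atTop (sub_pos.2 hc)
  filter_upwards [hsqrt.eventually_ge_atTop (2 + C)] with n hn
  have hlog : Real.log (n + 1) ≤ 2 * √n := by
    have h₁ : √(n + 1 : ℝ) ≤ √n + 1 := by
      rw [Real.sqrt_le_left (by positivity), add_sq, Real.sq_sqrt n.cast_nonneg]
      linarith [Real.sqrt_nonneg n]
    have h₂ := Real.log_le_sub_one_of_pos (Real.sqrt_pos.2 n.cast_add_one_pos)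
    rw [Real.log_sqrt (by positivity)] at h₂
    linarith
  have herr : (2 + C) * √n ≤ (Real.log 2 - c) * n := by
    calc (2 + C) * √n ≤ (Real.log 2 - c) * √n * √n := by gcongr
      _ = (Real.log 2 - c) * n := by rw [mul_assoc, Real.mul_self_sqrt n.cast_nonneg]
  linarith [Chebyshev.psi_ge n, hC n]

/-- The primes in the half-open interval `(u, v]`. -/
def primesIoc (u v : ℕ) : Finset ℕ := {p ∈ Ioc u v | p.Prime}

lemma theta_sub_theta_eq_sum_log {u v : ℕ} (huv : u ≤ v) :
    Chebyshev.theta v - Chebyshev.theta u = ∑ p ∈ primesIoc u v, Real.log p := by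
  simp only [Chebyshev.theta, Nat.floor_natCast, primesIoc, sum_filter]
  rw [← sum_Ioc_consecutive _ u.zero_le huv, add_sub_cancel_left]

lemma sum_primesIoc_eq_sum_Ico {u : ℕ → ℕ} (hu : Monotone u) {M : Type*} [AddCommMonoid M]
    (f : ℕ → M) (A B : ℕ) :
    ∑ p ∈ primesIoc (u A) (u B), f p = ∑ k ∈ Ico A B, ∑ p ∈ primesIoc (u k) (u (k + 1)), f p := by
  simp only [primesIoc, sum_filter, sum_Ioc_eq_sum_Ico_sum_Ioc hu _ A B]

lemma eventually_log_two_div_le_sum_inv_primes :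
    ∀ᶠ n : ℕ in atTop,
      Real.log 2 / (4 * Real.log (4 * n)) ≤ ∑ p ∈ primesIoc n (4 * n), (p : ℝ)⁻¹ := by
  have hlog₂ : 0 < Real.log 2 := Real.log_pos one_lt_two
  have hlog₄ : Real.log 4 = 2 * Real.log 2 := by
    rw [show (4 : ℝ) = 2 ^ 2 by norm_num, Real.log_pow, Nat.cast_ofNat]
  have hθ := eventually_mul_le_theta (show 3 / 4 * Real.log 2 < Real.log 2 by linarith)
  have h4n : Tendsto (fun n : ℕ ↦ 4 * n) atTop atTop := tendsto_id.const_mul_atTop' (by simp)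
  filter_upwards [h4n.eventually hθ, eventually_ge_atTop 1] with n hn hn₁
  have hn₁' : (1 : ℝ) ≤ n := mod_cast hn₁
  have hlog : 0 < Real.log (4 * n) := Real.log_pos (by linarith)
  have hθ_diff : Real.log 2 * n ≤ ∑ p ∈ primesIoc n (4 * n), Real.log p := by
    rw [← theta_sub_theta_eq_sum_log (by lia)]
    have := Chebyshev.theta_le_log4_mul_x n.cast_nonneg
    push_cast at hn ⊢
    rw [hlog₄] at this
    linarith
  have hterm : ∑ p ∈ primesIoc n (4 * n), Real.log p ≤
      (4 * n * Real.log (4 * n)) * ∑ p ∈ primesIoc n (4 * n), (p : ℝ)⁻¹ := by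
    rw [mul_sum]
    refine sum_le_sum fun p hp ↦ ?_
    obtain ⟨hp, hprime⟩ := mem_filter.1 hp
    have hp₀ : (0 : ℝ) < p := mod_cast hprime.pos
    have hpn : (p : ℝ) ≤ 4 * n := mod_cast (mem_Ioc.1 hp).2
    rw [← div_eq_mul_inv, le_div_iff₀ hp₀, mul_comm]
    gcongr
  rw [div_le_iff₀ (by positivity)]
  refine le_of_mul_le_mul_right ((hθ_diff.trans hterm).trans_eq ?_) (by linarith : (0 : ℝ) < n)
  ring

lemma eventually_inv_le_sum_inv_primes_two_pow :
    ∀ᶠ k : ℕ in atTop,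
      (1 / (8 * (k + 1)) : ℝ) ≤ ∑ p ∈ primesIoc (2 ^ (2 * k)) (2 ^ (2 * (k + 1))), (p : ℝ)⁻¹ := by
  have hpow : Tendsto (fun k : ℕ ↦ 2 ^ (2 * k)) atTop atTop :=
    (tendsto_pow_atTop_atTop_of_one_lt one_lt_two).comp (tendsto_id.const_mul_atTop' two_pos)
  filter_upwards [hpow.eventually eventually_log_two_div_le_sum_inv_primes] with k hk
  have hlog : Real.log (4 * (2 ^ (2 * k) : ℕ)) = 2 * (k + 1) * Real.log 2 := by
    rw [show (4 * (2 ^ (2 * k) : ℕ) : ℝ) = 2 ^ (2 * (k + 1)) by push_cast; ring, Real.log_pow]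
    push_cast
    ring
  rw [hlog, show 4 * 2 ^ (2 * k) = 2 ^ (2 * (k + 1)) by ring] at hk
  refine le_trans (le_of_eq ?_) hk
  have : 0 < Real.log 2 := Real.log_pos one_lt_two
  field_simp
  norm_num

lemma eventually_le_sum_inv_primes_two_pow_two_mul :
    ∀ᶠ m : ℕ in atTop, 1 / 16 ≤ ∑ p ∈ primesIoc (2 ^ (2 * m)) (2 ^ (4 * m)), (p : ℝ)⁻¹ := by
  filter_upwards [eventually_forall_ge_atTop.2 eventually_inv_le_sum_inv_primes_two_pow,
    eventually_ge_atTop 1] with m hm hm₁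
  have hu : Monotone fun k : ℕ ↦ 2 ^ (2 * k) := fun i j hij ↦
    Nat.pow_le_pow_right two_pos (by lia)
  have : (1 : ℝ) ≤ m := mod_cast hm₁
  calc (1 / 16 : ℝ) = ∑ k ∈ Ico m (2 * m), (1 / (8 * (2 * m)) : ℝ) := by
        rw [sum_const, Nat.card_Ico, nsmul_eq_mul, Nat.cast_sub (by lia)]
        push_cast
        field_simp
        ring
    _ ≤ ∑ k ∈ Ico m (2 * m), (1 / (8 * (k + 1)) : ℝ) := by
        refine sum_le_sum fun k hk ↦ ?_
        have hkm : (k + 1 : ℝ) ≤ 2 * m := mod_cast (mem_Ico.1 hk).2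
        gcongr
    _ ≤ ∑ k ∈ Ico m (2 * m),
          ∑ p ∈ primesIoc (2 ^ (2 * k)) (2 ^ (2 * (k + 1))), (p : ℝ)⁻¹ :=
        sum_le_sum fun k hk ↦ hm k (mem_Ico.1 hk).1
    _ = _ := by
        rw [← sum_primesIoc_eq_sum_Ico hu, show 2 * (2 * m) = 4 * m by ring]

lemma exists_forall_sub_div_le_sum_inv_primes_two_pow_two_pow :
    ∃ a₀ : ℕ, ∀ a b : ℕ, a₀ ≤ a → a ≤ b →
      ((b : ℝ) - a) / 16 ≤ ∑ p ∈ primesIoc (2 ^ 2 ^ a) (2 ^ 2 ^ b), (p : ℝ)⁻¹ := by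
  have hpow : Tendsto (fun a : ℕ ↦ 2 ^ a) atTop atTop :=
    tendsto_pow_atTop_atTop_of_one_lt one_lt_two
  obtain ⟨a₀, ha₀⟩ :=
    eventually_atTop.1 (hpow.eventually eventually_le_sum_inv_primes_two_pow_two_mul)
  refine ⟨a₀ + 1, fun a b ha hab ↦ ?_⟩
  have hu : Monotone fun k : ℕ ↦ 2 ^ 2 ^ k :=
    (pow_right_mono₀ one_le_two).comp (pow_right_mono₀ one_le_two)
  calc ((b : ℝ) - a) / 16 = ∑ k ∈ Ico a b, (1 / 16 : ℝ) := by
        rw [sum_const, Nat.card_Ico, nsmul_eq_mul, Nat.cast_sub hab]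
        ring
    _ ≤ ∑ k ∈ Ico a b, ∑ p ∈ primesIoc (2 ^ 2 ^ k) (2 ^ 2 ^ (k + 1)), (p : ℝ)⁻¹ := by
        refine sum_le_sum fun k hk ↦ ?_
        have hk : a₀ + 1 ≤ k := ha.trans (mem_Ico.1 hk).1
        obtain ⟨j, rfl⟩ := Nat.exists_eq_add_of_le' (Nat.le_of_add_left_le hk)
        have h := ha₀ j (by lia)
        rwa [show 2 * 2 ^ j = 2 ^ (j + 1) by ring, show 4 * 2 ^ j = 2 ^ (j + 1 + 1) by ring] at h
    _ = _ := (sum_primesIoc_eq_sum_Ico hu _ a b).symm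

/-! ### Exceptional sets -/

/-- The exceptional set attached to a doubly exponential window of primes: the `n ≤ N` that no
prime in `(2 ^ 2 ^ a, 2 ^ 2 ^ b]` divides exactly once. -/
noncomputable def windowExceptions (a b N : ℕ) : Finset ℕ :=
  lacksExactDivisor (primesIoc (2 ^ 2 ^ a) (2 ^ 2 ^ b)) N

lemma prime_of_mem_primesIoc {u v p : ℕ} (hp : p ∈ primesIoc u v) : p.Prime :=
  (mem_filter.1 hp).2

lemma exists_forall_card_windowExceptions_le :
    ∃ a₀ : ℕ, ∀ a b N : ℕ, a₀ ≤ a → a < b → 2 ^ 2 ^ b ≤ N →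
      (#(windowExceptions a b N) : ℝ) ≤ 48 * N / (b - a) + N / 2 ^ a := by
  obtain ⟨a₀, ha₀⟩ := exists_forall_sub_div_le_sum_inv_primes_two_pow_two_pow
  refine ⟨a₀, fun a b N ha hab hN ↦ ?_⟩
  have hab' : (0 : ℝ) < b - a := sub_pos.2 (mod_cast hab)
  have hcard : #(primesIoc (2 ^ 2 ^ a) (2 ^ 2 ^ b)) ≤ N :=
    calc #(primesIoc (2 ^ 2 ^ a) (2 ^ 2 ^ b)) ≤ 2 ^ 2 ^ b - 2 ^ 2 ^ a :=
          (card_filter_le _ _).trans_eq (Nat.card_Ioc _ _)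
      _ ≤ N := (Nat.sub_le _ _).trans hN
  calc (#(windowExceptions a b N) : ℝ)
      ≤ (N + 2 * #(primesIoc (2 ^ 2 ^ a) (2 ^ 2 ^ b))) / ((b - a) / 16) + N / (2 ^ 2 ^ a : ℕ) :=
        card_lacksExactDivisor_le (fun p ↦ prime_of_mem_primesIoc) (by positivity)
          (fun p hp ↦ (mem_Ioc.1 (mem_filter.1 hp).1).1) (by positivity) (ha₀ a b ha hab.le) N
    _ ≤ (N + 2 * N) / ((b - a) / 16) + N / 2 ^ a := by
        gcongr
        exact_mod_cast Nat.pow_le_pow_right two_pos Nat.lt_two_pow_self.le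
    _ = 48 * N / (b - a) + N / 2 ^ a := by field_simp; ring

lemma exists_card_filter_notMem_windowExceptions_le {θ : ℝ} (hθ : θ < 1) :
    ∃ C : ℝ, 0 < C ∧ ∀ a b d : ℕ, 0 < d → d ≤ 2 ^ 2 ^ a → (2 : ℝ) ^ b ≤ (d : ℝ) ^ ((1 - θ) / 2) →
      ∀ N : ℕ, (#{n ∈ Icc 1 N | n ∉ windowExceptions a b N ∧ d ∣ s n} : ℝ) ≤ C * N / d ^ θ := by
  obtain ⟨C, hC, hτ⟩ := exists_card_divisors_le_rpow (ε := (1 - θ) / 2) (by linarith)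
  refine ⟨2 * C, by positivity, fun a b d hd hda hdb N ↦ ?_⟩
  have hd' : (0 : ℝ) < d := mod_cast hd
  calc (#{n ∈ Icc 1 N | n ∉ windowExceptions a b N ∧ d ∣ s n} : ℝ)
      ≤ (2 ^ b : ℕ) * (2 * N * #d.divisors / d) :=
        card_filter_notMem_lacksExactDivisor_le_of_subset_Ioc (fun p ↦ prime_of_mem_primesIoc)
          (filter_subset _ _) hd hda N
    _ ≤ (d : ℝ) ^ ((1 - θ) / 2) * (2 * N * (C * (d : ℝ) ^ ((1 - θ) / 2)) / d) := by
        gcongr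
        · exact_mod_cast hdb
        · exact hτ d
    _ = 2 * C * N * ((d : ℝ) ^ ((1 - θ) / 2) * (d : ℝ) ^ ((1 - θ) / 2) / d) := by ring
    _ = 2 * C * N / (d : ℝ) ^ θ := by
        rw [← Real.rpow_add hd', add_halves, Real.rpow_sub hd', Real.rpow_one]
        field_simp

/-- The union over `i ≥ I` of the exceptional sets of the windows meant for the divisors
`d ∈ (2 ^ 2 ^ (i + c), 2 ^ 2 ^ (i + c + 1)]`. The window has only `2 ^ i` dyadic blocks, which is
affordable against a small power of such a `d`, yet it is long enough for the union over `i` to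
be sparse. -/
noncomputable def towerExceptions (c I N : ℕ) : Finset ℕ :=
  {n ∈ Icc 1 N | ∃ i ≥ I, 2 ^ 2 ^ 2 ^ i ≤ N ∧ n ∈ windowExceptions (i + c + 1) (2 ^ i) N}

lemma eventually_card_windowExceptions_le (c : ℕ) :
    ∀ᶠ i in atTop, ∀ N : ℕ, 2 ^ 2 ^ 2 ^ i ≤ N →
      (#(windowExceptions (i + c + 1) (2 ^ i) N) : ℝ) ≤ 97 * N * (1 / 2) ^ i := by
  obtain ⟨a₀, ha₀⟩ := exists_forall_card_windowExceptions_le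
  have four_mul_le_two_pow (i : ℕ) (hi : 4 ≤ i) : 4 * i ≤ 2 ^ i := by
    induction i, hi using Nat.le_induction with
    | base => norm_num
    | succ i _ ih => rw [pow_succ]; lia
  filter_upwards [eventually_ge_atTop (max a₀ (c + 4))] with i hi N hN
  have hic : 2 * (i + c + 1) < 2 ^ i :=
    (show 2 * (i + c + 1) < 4 * i by lia).trans_le (four_mul_le_two_pow i (by lia))
  have hic' : (2 * (i + c + 1) : ℝ) < 2 ^ i := mod_cast hic
  calc (#(windowExceptions (i + c + 1) (2 ^ i) N) : ℝ)
      ≤ 48 * N / ((2 ^ i : ℕ) - (i + c + 1 : ℕ)) + N / 2 ^ (i + c + 1) :=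
        ha₀ _ _ N (by lia) (by lia) hN
    _ ≤ 48 * N / (2 ^ i / 2) + N / 2 ^ i := by
        push_cast
        gcongr
        · linarith
        · exact one_le_two
        · lia
    _ = 97 * N * (1 / 2) ^ i := by rw [one_div, inv_pow]; field_simp; norm_num

lemma eventually_card_towerExceptions_le (c : ℕ) {ε : ℝ} (hε : 0 < ε) :
    ∀ᶠ I in atTop, ∀ N : ℕ, (#(towerExceptions c I N) : ℝ) ≤ ε * N := by
  have hgeom : Tendsto (fun I : ℕ ↦ (97 * ((1 / 2) ^ I / (1 - 1 / 2)) : ℝ)) atTop (𝓝 0) := by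
    simpa using ((tendsto_pow_atTop_nhds_zero_of_lt_one (by norm_num) one_half_lt_one).div_const
      (1 - 1 / 2 : ℝ)).const_mul 97
  filter_upwards [hgeom.eventually_le_const hε,
    eventually_forall_ge_atTop.2 (eventually_card_windowExceptions_le c)] with I hI hwindow N
  have hsub : towerExceptions c I N ⊆ {i ∈ Ico I N | 2 ^ 2 ^ 2 ^ i ≤ N}.biUnion
      fun i ↦ windowExceptions (i + c + 1) (2 ^ i) N := by
    intro n hn
    obtain ⟨-, i, hi, hiN, hn⟩ := mem_filter.1 hn
    have hlt (j : ℕ) : j < 2 ^ j := Nat.lt_two_pow_self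
    exact mem_biUnion.2 ⟨i, mem_filter.2 ⟨mem_Ico.2 ⟨hi, by
      linarith [hlt i, hlt (2 ^ i), hlt (2 ^ 2 ^ i)]⟩, hiN⟩, hn⟩
  calc (#(towerExceptions c I N) : ℝ)
      ≤ ∑ i ∈ Ico I N with 2 ^ 2 ^ 2 ^ i ≤ N, (#(windowExceptions (i + c + 1) (2 ^ i) N) : ℝ) :=
        mod_cast (card_le_card hsub).trans card_biUnion_le
    _ ≤ ∑ i ∈ Ico I N with 2 ^ 2 ^ 2 ^ i ≤ N, 97 * N * (1 / 2 : ℝ) ^ i :=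
        sum_le_sum fun i hi ↦
          hwindow i (mem_Ico.1 (mem_filter.1 hi).1).1 N (mem_filter.1 hi).2
    _ ≤ ∑ i ∈ Ico I N, 97 * N * (1 / 2 : ℝ) ^ i :=
        sum_le_sum_of_subset_of_nonneg (filter_subset _ _) fun _ _ _ ↦ by positivity
    _ ≤ 97 * N * ((1 / 2) ^ I / (1 - 1 / 2)) := by
        rw [← mul_sum]
        gcongr
        exact geom_sum_Ico_le_of_lt_one (by norm_num) one_half_lt_one
    _ = 97 * ((1 / 2) ^ I / (1 - 1 / 2)) * N := by ring
    _ ≤ ε * N := by gcongr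

lemma exists_eventually_card_windowExceptions_add_le {ε : ℝ} (hε : 0 < ε) :
    ∃ K : ℕ, ∀ᶠ a in atTop, ∀ N : ℕ, 2 ^ 2 ^ (a + K) ≤ N →
      (#(windowExceptions a (a + K) N) : ℝ) ≤ ε * N := by
  obtain ⟨a₀, ha₀⟩ := exists_forall_card_windowExceptions_le
  obtain ⟨K, hK⟩ := exists_nat_gt (48 / (ε / 2))
  have hK₀ : (0 : ℝ) < K := (by positivity : 0 < 48 / (ε / 2)).trans hK
  have hpow : Tendsto (fun a : ℕ ↦ (1 / 2 : ℝ) ^ a) atTop (𝓝 0) :=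
    tendsto_pow_atTop_nhds_zero_of_lt_one (by norm_num) one_half_lt_one
  refine ⟨K, ?_⟩
  filter_upwards [eventually_ge_atTop a₀, hpow.eventually_le_const (half_pos hε)] with a ha hεa N hN
  calc (#(windowExceptions a (a + K) N) : ℝ)
      ≤ 48 * N / ((a + K : ℕ) - a) + N / 2 ^ a :=
        ha₀ a (a + K) N ha (Nat.lt_add_of_pos_right (Nat.cast_pos.1 hK₀)) hN
    _ = 48 / K * N + (1 / 2) ^ a * N := by
        rw [Nat.cast_add, add_sub_cancel_left, one_div, inv_pow]
        ring
    _ ≤ ε / 2 * N + ε / 2 * N := by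
        have hεK : 48 / K ≤ ε / 2 := ((div_lt_comm₀ (half_pos hε) hK₀).1 hK).le
        gcongr
    _ = ε * N := by ring

/-! ### Uniformity in the divisor -/

lemma exists_two_pow_two_pow_le_and_lt {J n : ℕ} (hn : 2 ^ 2 ^ J ≤ n) :
    ∃ j, J ≤ j ∧ 2 ^ 2 ^ j ≤ n ∧ n < 2 ^ 2 ^ (j + 1) := by
  have hn₀ : n ≠ 0 := fun h ↦ by simp [h] at hn
  have hJ : 2 ^ J ≤ Nat.log 2 n := Nat.le_log_of_pow_le one_lt_two hn
  have hlog₀ : Nat.log 2 n ≠ 0 := (Nat.two_pow_pos J |>.trans_le hJ).ne'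
  exact ⟨Nat.log 2 (Nat.log 2 n), Nat.le_log_of_pow_le one_lt_two hJ,
    Nat.pow_le_of_le_log hn₀ (Nat.pow_log_le_self 2 hlog₀),
    Nat.lt_pow_of_log_lt one_lt_two (Nat.lt_pow_succ_log_self one_lt_two _)⟩

lemma two_pow_two_pow_le_rpow {ε : ℝ} {c i d : ℕ} (hε : 1 ≤ ε * 2 ^ c) (hd : 2 ^ 2 ^ (i + c) ≤ d) :
    (2 : ℝ) ^ 2 ^ i ≤ (d : ℝ) ^ ε := by
  have hε₀ : 0 ≤ ε := nonneg_of_mul_nonneg_left (zero_le_one.trans hε) (by positivity)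
  calc (2 : ℝ) ^ 2 ^ i = 2 ^ ((2 : ℝ) ^ i) := by exact_mod_cast (Real.rpow_natCast 2 (2 ^ i)).symm
    _ ≤ 2 ^ ((2 : ℝ) ^ (i + c) * ε) := by
        gcongr
        · exact one_le_two
        · calc (2 : ℝ) ^ i ≤ 2 ^ i * (ε * 2 ^ c) := le_mul_of_one_le_right (by positivity) hε
            _ = 2 ^ (i + c) * ε := by ring
    _ = ((2 : ℝ) ^ 2 ^ (i + c)) ^ ε := by
        rw [Real.rpow_mul zero_le_two]
        exact_mod_cast congrArg (· ^ ε) (Real.rpow_natCast 2 (2 ^ (i + c)))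
    _ ≤ (d : ℝ) ^ ε := by
        gcongr
        exact_mod_cast hd

lemma card_filter_notMem_le_card_filter_notMem {E F : Finset ℕ} {d N : ℕ} (h : F ⊆ E) :
    (#{n ∈ Icc 1 N | n ∉ E ∧ d ∣ s n} : ℝ) ≤ #{n ∈ Icc 1 N | n ∉ F ∧ d ∣ s n} := by
  gcongr

lemma exists_card_filter_notMem_towerExceptions_union_le {θ : ℝ} (hθ : θ < 1) :
    ∃ C : ℝ, 0 < C ∧ ∃ c : ℕ, ∀ I a t d N : ℕ, 2 ^ 2 ^ t ≤ N →
      2 ^ 2 ^ (I + c) ≤ d → d ≤ 2 ^ 2 ^ a →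
      (#{n ∈ Icc 1 N | n ∉ towerExceptions c I N ∪ windowExceptions a t N ∧ d ∣ s n} : ℝ) ≤
        C * N / (d : ℝ) ^ θ := by
  obtain ⟨C, hC, hcount⟩ := exists_card_filter_notMem_windowExceptions_le hθ
  obtain ⟨c, hc⟩ := pow_unbounded_of_one_lt ((1 - θ) / 2)⁻¹ (one_lt_two (α := ℝ))
  replace hc : 1 ≤ (1 - θ) / 2 * 2 ^ c := ((inv_lt_iff_one_lt_mul₀' (by linarith)).1 hc).le
  refine ⟨C, hC, c, fun I a t d N hNt hdI hda ↦ ?_⟩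
  have hd : 0 < d := (Nat.two_pow_pos _).trans_le hdI
  obtain ⟨j, hIj, hjd, hdj⟩ := exists_two_pow_two_pow_le_and_lt hdI
  obtain ⟨i, rfl⟩ := Nat.exists_eq_add_of_le' (Nat.le_of_add_left_le hIj)
  have hblocks : (2 : ℝ) ^ 2 ^ i ≤ (d : ℝ) ^ ((1 - θ) / 2) := two_pow_two_pow_le_rpow hc hjd
  obtain hiN | hNi := le_or_gt (2 ^ 2 ^ 2 ^ i) N
  · have hsub : windowExceptions (i + c + 1) (2 ^ i) N ⊆ towerExceptions c I N := fun n hn ↦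
      mem_filter.2 ⟨(mem_filter.1 hn).1, i, by lia, hiN, hn⟩
    exact (card_filter_notMem_le_card_filter_notMem (hsub.trans subset_union_left)).trans
      (hcount (i + c + 1) (2 ^ i) d hd hdj.le hblocks N)
  · have hti : 2 ^ 2 ^ t < 2 ^ 2 ^ 2 ^ i := hNt.trans_lt hNi
    rw [Nat.pow_lt_pow_iff_right one_lt_two, Nat.pow_lt_pow_iff_right one_lt_two] at hti
    have hblocks_t : (2 : ℝ) ^ t ≤ (d : ℝ) ^ ((1 - θ) / 2) :=
      (pow_le_pow_right₀ one_le_two hti.le).trans hblocks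
    exact (card_filter_notMem_le_card_filter_notMem subset_union_right).trans
      (hcount a t d hd hda hblocks_t N)

lemma eventually_forall_lt_card_filter_dvd_s_le {θ : ℝ} (hθ : θ ≤ 1) (D : ℕ) :
    ∀ᶠ N : ℕ in atTop, ∀ d < D, 0 < d →
      (#{n ∈ Icc 1 N | d ∣ s n} : ℝ) ≤ 2 * N / (d : ℝ) ^ θ := by
  refine (eventually_all_finite (Set.finite_lt_nat D)).2 fun d _ ↦ ?_
  obtain rfl | hd := d.eq_zero_or_pos
  · exact .of_forall fun N h ↦ absurd h (lt_irrefl 0)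
  have hd₁ : (1 : ℝ) ≤ d := mod_cast hd
  filter_upwards [eventually_card_filter_dvd_s_le hd.ne'] with N hN _
  calc (#{n ∈ Icc 1 N | d ∣ s n} : ℝ) ≤ 2 * N / (d : ℝ) ^ (1 : ℝ) := by rwa [Real.rpow_one]
    _ ≤ 2 * N / (d : ℝ) ^ θ := by gcongr

lemma eventually_exists_rpow_le_two_pow_two_pow {η : ℝ → ℝ} (hη : Tendsto η atTop (𝓝 0))
    (K a₀ : ℕ) :
    ∀ᶠ x in atTop, ∃ a, a₀ ≤ a ∧ 2 ^ 2 ^ (a + K) ≤ ⌊x⌋₊ ∧ x ^ η x ≤ 2 ^ 2 ^ a := by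
  filter_upwards [hη.eventually_le_const (u := ((2 : ℝ) ^ (K + 1))⁻¹) (by positivity),
    eventually_ge_atTop 1, eventually_ge_atTop ((2 ^ 2 ^ (a₀ + K) : ℕ) : ℝ)] with x hηx hx₁ hx
  obtain ⟨t, hKt, htx, hxt⟩ := exists_two_pow_two_pow_le_and_lt (Nat.le_floor hx)
  obtain ⟨a, rfl⟩ := Nat.exists_eq_add_of_le' (Nat.le_of_add_left_le hKt)
  refine ⟨a, by lia, htx, ?_⟩
  have hxt' : x ≤ (2 : ℝ) ^ 2 ^ (a + K + 1) := by
    exact_mod_cast ((Nat.floor_lt (by linarith)).1 hxt).le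
  calc x ^ η x ≤ x ^ ((2 : ℝ) ^ (K + 1))⁻¹ := by gcongr
    _ ≤ ((2 : ℝ) ^ 2 ^ (a + K + 1)) ^ ((2 : ℝ) ^ (K + 1))⁻¹ := by gcongr
    _ = (((2 : ℝ) ^ 2 ^ a) ^ 2 ^ (K + 1)) ^ ((2 ^ (K + 1) : ℕ) : ℝ)⁻¹ := by
        rw [← pow_mul, ← pow_add, add_assoc]
        push_cast
        rfl
    _ = 2 ^ 2 ^ a := Real.pow_rpow_inv_natCast (by positivity) (by positivity)

lemma exists_eventually_exists_exceptions {θ : ℝ} (hθ : θ < 1) :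
    ∃ C : ℝ, 0 < C ∧ ∀ η : ℝ → ℝ, Tendsto η atTop (𝓝 0) → ∀ ε > 0, ∀ᶠ x in atTop,
      ∃ E ⊆ Icc 1 ⌊x⌋₊, (#E : ℝ) ≤ ε * x ∧ ∀ d : ℕ, 0 < d → (d : ℝ) ≤ x ^ η x →
        (#{n ∈ Icc 1 ⌊x⌋₊ | n ∉ E ∧ d ∣ s n} : ℝ) ≤ C * x / (d : ℝ) ^ θ := by
  obtain ⟨C, hC, c, hlarge⟩ := exists_card_filter_notMem_towerExceptions_union_le hθ
  refine ⟨C + 2, by positivity, fun η hη ε hε ↦ ?_⟩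
  obtain ⟨I, hI⟩ := (eventually_card_towerExceptions_le c (half_pos hε)).exists
  obtain ⟨K, hK⟩ := exists_eventually_card_windowExceptions_add_le (half_pos hε)
  obtain ⟨a₀, ha₀⟩ := eventually_atTop.1 hK
  filter_upwards [eventually_exists_rpow_le_two_pow_two_pow hη K a₀,
    tendsto_nat_floor_atTop.eventually
      (eventually_forall_lt_card_filter_dvd_s_le hθ.le (2 ^ 2 ^ (I + c))),
    eventually_ge_atTop 0] with x ⟨a, ha, hax, hxa⟩ hsmall hx
  set N := ⌊x⌋₊
  have hNx : (N : ℝ) ≤ x := Nat.floor_le hx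
  refine ⟨towerExceptions c I N ∪ windowExceptions a (a + K) N,
    union_subset (filter_subset _ _) (filter_subset _ _), ?_, fun d hd hdx ↦ ?_⟩
  · calc (#(towerExceptions c I N ∪ windowExceptions a (a + K) N) : ℝ)
        ≤ #(towerExceptions c I N) + #(windowExceptions a (a + K) N) :=
          mod_cast card_union_le _ _
      _ ≤ ε / 2 * N + ε / 2 * N := add_le_add (hI N) (ha₀ a ha N hax)
      _ = ε * N := by ring
      _ ≤ ε * x := by gcongr
  obtain hdI | hId := lt_or_ge d (2 ^ 2 ^ (I + c))
  · calc (#{n ∈ Icc 1 N | n ∉ towerExceptions c I N ∪ windowExceptions a (a + K) N ∧ d ∣ s n} : ℝ)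
        ≤ #{n ∈ Icc 1 N | d ∣ s n} := by gcongr; exact And.right
      _ ≤ 2 * N / (d : ℝ) ^ θ := hsmall d hdI hd
      _ ≤ (C + 2) * x / (d : ℝ) ^ θ := by gcongr; linarith
  · have hda : d ≤ 2 ^ 2 ^ a := by exact_mod_cast hdx.trans hxa
    refine (hlarge I a (a + K) d N hax hId hda).trans ?_
    gcongr
    linarith

lemma exists_forall_and_isLittleO_card {ι α : Type*} {l : Filter ι} {g : ι → ℝ}
    {P : ι → Finset α → Prop} (hP : ∀ i, ∃ E, P i E)
    (hsmall : ∀ ε > 0, ∀ᶠ i in l, ∃ E, P i E ∧ (#E : ℝ) ≤ ε * g i) :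
    ∃ E : ι → Finset α, (∀ i, P i (E i)) ∧ (fun i ↦ (#(E i) : ℝ)) =o[l] g := by
  -- One choice serves every `ε` at once: a set of minimal cardinality among those satisfying `P i`.
  choose E hE using fun i ↦ exists_minimalFor_of_wellFoundedLT (P i) card (hP i)
  refine ⟨E, fun i ↦ (hE i).1, Asymptotics.isLittleO_iff.2 fun ε hε ↦ ?_⟩
  filter_upwards [hsmall ε hε] with i ⟨F, hF, hFg⟩
  have hEF : #(E i) ≤ #F := (le_total _ _).elim id fun h ↦ (hE i).2 hF h
  calc ‖(#(E i) : ℝ)‖ ≤ #F := by rw [Real.norm_natCast]; exact_mod_cast hEF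
    _ ≤ ε * g i := hFg
    _ ≤ ε * ‖g i‖ := by gcongr; exact le_abs_self _

lemma tendsto_one_div_two_mul_log_log_log :
    Tendsto (fun x : ℝ ↦ 1 / (2 * Real.log (Real.log (Real.log x)))) atTop (𝓝 0) := by
  have hlog : Tendsto (fun x : ℝ ↦ Real.log (Real.log (Real.log x))) atTop atTop :=
    Real.tendsto_log_atTop.comp (Real.tendsto_log_atTop.comp Real.tendsto_log_atTop)
  exact (hlog.const_mul_atTop two_pos).const_div_atTop 1

theorem div_s_count_bound_small_d_general {θ : ℝ} (hθ : θ < 1) :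
    ∃ C : ℝ, 0 < C ∧ ∀ η : ℝ → ℝ, Tendsto η atTop (𝓝 0) → ∃ E : ℝ → Finset ℕ,
      (∀ x, 0 ≤ x → ∀ n ∈ E x, 1 ≤ n ∧ (n : ℝ) ≤ x) ∧
      (fun x ↦ (#(E x) : ℝ)) =o[atTop] (fun x ↦ x) ∧
      ∀ x, 0 ≤ x → ∀ d : ℕ, 0 < d → (d : ℝ) ≤ x ^ η x →
        (#{n ∈ Icc 1 ⌊x⌋₊ | n ∉ E x ∧ d ∣ s n} : ℝ) ≤ C * x / (d : ℝ) ^ θ := by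
  obtain ⟨C, hC, h⟩ := exists_eventually_exists_exceptions hθ
  refine ⟨C, hC, fun η hη ↦ ?_⟩
  let IsExceptional (x : ℝ) (E : Finset ℕ) : Prop := E ⊆ Icc 1 ⌊x⌋₊ ∧
    (0 ≤ x → ∀ d : ℕ, 0 < d → (d : ℝ) ≤ x ^ η x →
      (#{n ∈ Icc 1 ⌊x⌋₊ | n ∉ E ∧ d ∣ s n} : ℝ) ≤ C * x / (d : ℝ) ^ θ)
  have hfull (x : ℝ) : ∃ E, IsExceptional x E := by
    refine ⟨Icc 1 ⌊x⌋₊, subset_rfl, fun hx d _ _ ↦ ?_⟩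
    rw [filter_false_of_mem fun n hn ↦ not_and.2 fun h ↦ absurd hn h, card_empty, Nat.cast_zero]
    positivity
  have hsmall (ε : ℝ) (hε : 0 < ε) :
      ∀ᶠ x in atTop, ∃ E, IsExceptional x E ∧ (#E : ℝ) ≤ ε * x := by
    filter_upwards [h η hη ε hε] with x ⟨E, hEx, hεx, hcount⟩
    exact ⟨E, ⟨hEx, fun _ ↦ hcount⟩, hεx⟩
  obtain ⟨E, hE, hcard⟩ := exists_forall_and_isLittleO_card hfull hsmall
  refine ⟨E, fun x hx n hn ↦ ?_, hcard, fun x ↦ (hE x).2⟩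
  obtain ⟨hn₁, hnx⟩ := mem_Icc.1 ((hE x).1 hn)
  exact ⟨hn₁, (Nat.le_floor_iff hx).1 hnx⟩

theorem div_s_count_bound_small_d :
    ∃ C : ℝ, 0 < C ∧ ∃ x₀ : ℝ, ∃ E : ℝ → Finset ℕ,
      (∀ x : ℝ, x₀ ≤ x → ∀ n ∈ E x, 1 ≤ n ∧ (n : ℝ) ≤ x) ∧
      (fun x : ℝ => ((E x).card : ℝ)) =o[atTop] (fun x : ℝ => x) ∧
      ∀ x : ℝ, x₀ ≤ x → ∀ d : ℕ, 0 < d →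
        (d : ℝ) ≤ x ^ (1 / (2 * Real.log (Real.log (Real.log x)))) →
        (((Finset.Icc 1 ⌊x⌋₊).filter (fun n => n ∉ E x ∧ d ∣ s n)).card : ℝ)
          ≤ C * x / (d : ℝ) ^ (0.9 : ℝ) := by
  obtain ⟨C, hC, h⟩ := div_s_count_bound_small_d_general (θ := 0.9) (by norm_num)
  exact ⟨C, hC, 0, h _ tendsto_one_div_two_mul_log_log_log⟩
end
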